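/- Let (u, π, v, θ) be a smooth solution of the stationary 3D tropical climate model. Suppose p ∈ (3/2, 3), q ∈ [1, 2), r ∈ [1, 6], and u ∈ L^p(ℝ³), v ∈ L^q(ℝ³), θ ∈ L^r(ℝ³). Then u = 0, v = 0 and θ = 0 identically on ℝ³. -/

import Mathlib

open MeasureTheory Filter Metric

noncomputable section

abbrev R3 : Type := EuclideanSpace ℝ (Fin 3)

/-- Partial derivative of `f` in the `j`-th coordinate direction. -/
def pd (f : R3 → ℝ) (j : Fin 3) (x : R3) : ℝ :=
  fderiv ℝ f x (EuclideanSpace.single j 1)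

/-- Laplacian of `f`. -/
def lap (f : R3 → ℝ) (x : R3) : ℝ := ∑ j, pd (pd f j) j x

/-- The stationary 3D tropical climate model:
`-Δu + (u·∇)u + ∇π + div(v⊗v) = 0`, `-Δv + (u·∇)v + ∇θ + (v·∇)u = 0`,
`-Δθ + u·∇θ + div v = 0`, `div u = 0`. -/
def TCM (u v : R3 → R3) (pr θ : R3 → ℝ) : Prop :=
  (∀ i x, -lap (fun y => u y i) x + (∑ j, u x j * pd (fun y => u y i) j x)
      + pd pr i x + (∑ j, pd (fun y => v y j * v y i) j x) = 0) ∧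
  (∀ i x, -lap (fun y => v y i) x + (∑ j, u x j * pd (fun y => v y i) j x)
      + pd θ i x + (∑ j, v x j * pd (fun y => u y i) j x) = 0) ∧
  (∀ x, -lap θ x + (∑ j, u x j * pd θ j x) + (∑ j, pd (fun y => v y j) j x) = 0) ∧
  (∀ x, (∑ j, pd (fun y => u y j) j x) = 0)

/-!
Convolution with truncated Biot–Savart kernels gives fields converging to `u` with smooth
antisymmetric vector potentials; suppose for simplicity that `u = div C` and `ΔC = ∇ × u`. Testing
the momentum equation with the divergence-free field `div (P C)`, where `P` is a cutoff, removes the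
pressure and bounds `∫ P (|∇u|² + |∇v|² + |∇θ|²)` by terms that contain derivatives of `P`, in some
of which `C` appears as a factor. Young's inequality for convolutions bounds `|C|` by a constant
plus a function in `L² ∩ L^{2p}`: the singular part of the kernel calls for `p > 3/2`, the decaying
part for `p < 3`.

For `P` a high power of a cutoff at scale `R`, half of the gradient energy `E(R)` is absorbed, and
the remainder lives on the annulus `R ≤ |x| ≤ 2R`. There the Gagliardo–Nirenberg–Sobolev inequality
and interpolation (applied to the part of each field above height `1`, which is integrable) bound it
by `δ(R) (1 + E(R))` with `δ(R) → 0`; the exponent `2p/(p-1)` that occurs is less than `6`, which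
leaves room for the powers of the cutoff. Hence `E(R) → 0`, the fields are constant, and a constant
in some `L^s` with `s < ∞` is zero.
-/

open scoped ContDiff ENNReal Topology

/-! ### Calculus with partial derivatives -/

section PartialDerivatives

variable {f g : R3 → ℝ}

@[fun_prop]
lemma contDiff_pd (hf : ContDiff ℝ ∞ f) (j : Fin 3) : ContDiff ℝ ∞ (pd f j) :=
  (hf.fderiv_right (m := ∞) (by simp)).clm_apply contDiff_const

@[fun_prop]
lemma contDiff_lap (hf : ContDiff ℝ ∞ f) : ContDiff ℝ ∞ (lap f) :=
  ContDiff.sum fun j _ => contDiff_pd (contDiff_pd hf j) j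

@[fun_prop]
lemma continuous_pd (hf : ContDiff ℝ ∞ f) (j : Fin 3) : Continuous (pd f j) :=
  (contDiff_pd hf j).continuous

lemma pd_add (hf : ContDiff ℝ ∞ f) (hg : ContDiff ℝ ∞ g) (j : Fin 3) (x : R3) :
    pd (fun y => f y + g y) j x = pd f j x + pd g j x := by
  simp only [pd, fderiv_fun_add (hf.differentiable (by simp) x) (hg.differentiable (by simp) x),
    add_apply]

lemma pd_sub (hf : ContDiff ℝ ∞ f) (hg : ContDiff ℝ ∞ g) (j : Fin 3) (x : R3) :
    pd (fun y => f y - g y) j x = pd f j x - pd g j x := by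
  simp only [pd, fderiv_fun_sub (hf.differentiable (by simp) x) (hg.differentiable (by simp) x),
    sub_apply]

lemma pd_mul (hf : ContDiff ℝ ∞ f) (hg : ContDiff ℝ ∞ g) (j : Fin 3) (x : R3) :
    pd (fun y => f y * g y) j x = f x * pd g j x + pd f j x * g x := by
  simp [pd, fderiv_fun_mul (hf.differentiable (by simp) x) (hg.differentiable (by simp) x),
    mul_comm]

lemma pd_comm (hf : ContDiff ℝ ∞ f) (i j : Fin 3) (x : R3) :
    pd (pd f i) j x = pd (pd f j) i x := by
  have hd : DifferentiableAt ℝ (fderiv ℝ f) x :=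
    (hf.fderiv_right (m := ∞) (by simp)).differentiable (by simp) x
  have second (a b : Fin 3) : pd (pd f a) b x =
      fderiv ℝ (fderiv ℝ f) x (EuclideanSpace.single b 1) (EuclideanSpace.single a 1) := by
    unfold pd
    rw [fderiv_clm_apply hd (differentiableAt_const _)]
    simp
  have hsymm : IsSymmSndFDerivAt ℝ f x :=
    (hf.contDiffAt.of_le (m := 2) (WithTop.coe_le_coe.2 le_top)).isSymmSndFDerivAt (by simp)
  rw [second, second, hsymm]

lemma lap_sub (hf : ContDiff ℝ ∞ f) (hg : ContDiff ℝ ∞ g) (x : R3) :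
    lap (fun y => f y - g y) x = lap f x - lap g x := by
  have hfg (k : Fin 3) : pd (fun y => f y - g y) k = fun y => pd f k y - pd g k y :=
    funext fun y => pd_sub hf hg k y
  simp (disch := fun_prop) only [lap, hfg, pd_sub, Finset.sum_sub_distrib]

lemma lap_mul (hf : ContDiff ℝ ∞ f) (hg : ContDiff ℝ ∞ g) (x : R3) :
    lap (fun y => f y * g y) x = f x * lap g x + 2 * ∑ k, pd f k x * pd g k x + lap f x * g x := by
  have hfg (k : Fin 3) : pd (fun y => f y * g y) k = fun y => f y * pd g k y + pd f k y * g y :=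
    funext fun y => pd_mul hf hg k y
  simp (disch := fun_prop) only [lap, hfg, pd_add, pd_mul, Fin.sum_univ_three]
  ring

lemma hasCompactSupport_pd (h : HasCompactSupport f) (j : Fin 3) :
    HasCompactSupport (pd f j) :=
  h.fderiv_apply ℝ _

lemma hasCompactSupport_sum {ι : Type*} [Fintype ι] {F : ι → R3 → ℝ}
    (hF : ∀ i, HasCompactSupport (F i)) : HasCompactSupport fun x => ∑ i, F i x := by
  rw [← Finset.sum_fn]
  exact Finset.sum_induction F HasCompactSupport (fun _ _ => .add) .zero fun i _ => hF i

end PartialDerivatives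

/-- `h` is integrable with vanishing integral: the relation in which integration by parts is
phrased. -/
def HasZeroIntegral (h : R3 → ℝ) : Prop := Integrable h ∧ ∫ x, h x = 0

namespace HasZeroIntegral

variable {f g : R3 → ℝ}

lemma pd (hg : ContDiff ℝ ∞ g) (h : HasCompactSupport g) (j : Fin 3) :
    HasZeroIntegral (pd g j) := by
  have hInt : Integrable (_root_.pd g j) :=
    (continuous_pd hg j).integrable_of_hasCompactSupport (hasCompactSupport_pd h j)
  refine ⟨hInt, ?_⟩
  have hbp := integral_mul_fderiv_eq_neg_fderiv_mul_of_integrable (μ := volume)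
    (f := fun _ : R3 => (1 : ℝ)) (g := g) (v := EuclideanSpace.single j 1) (by simp)
    (by simp only [one_mul]; exact hInt)
    (by simpa using hg.continuous.integrable_of_hasCompactSupport h) (fun _ _ => by fun_prop)
    (fun x _ => hg.differentiable (by simp) x)
  simpa [_root_.pd] using hbp

lemma add (hf : HasZeroIntegral f) (hg : HasZeroIntegral g) :
    HasZeroIntegral fun x => f x + g x :=
  ⟨hf.1.add hg.1, by rw [integral_add hf.1 hg.1, hf.2, hg.2, add_zero]⟩

lemma const_mul (c : ℝ) (hf : HasZeroIntegral f) : HasZeroIntegral fun x => c * f x :=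
  ⟨hf.1.const_mul c, by rw [integral_const_mul, hf.2, mul_zero]⟩

lemma sub (hf : HasZeroIntegral f) (hg : HasZeroIntegral g) :
    HasZeroIntegral fun x => f x - g x :=
  ⟨hf.1.sub hg.1, by rw [integral_sub hf.1 hg.1, hf.2, hg.2, sub_zero]⟩

lemma sum {ι : Type*} [Fintype ι] {f : ι → R3 → ℝ} (hf : ∀ i, HasZeroIntegral (f i)) :
    HasZeroIntegral fun x => ∑ i, f i x :=
  ⟨integrable_finsetSum _ fun i _ => (hf i).1, by
    rw [integral_finsetSum _ fun i _ => (hf i).1]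
    exact Finset.sum_eq_zero fun i _ => (hf i).2⟩

lemma congr (hf : HasZeroIntegral f) (h : ∀ x, g x = f x) : HasZeroIntegral g := by
  rwa [funext h]

lemma lap_mul_sub (hf : ContDiff ℝ ∞ f) (hg : ContDiff ℝ ∞ g) (h : HasCompactSupport f) :
    HasZeroIntegral fun x => lap f x * g x - f x * lap g x := by
  refine (sum fun k => (pd ((contDiff_pd hf k).mul hg) (hasCompactSupport_pd h k).mul_right k).sub
    (pd (hf.mul (contDiff_pd hg k)) h.mul_right k)).congr fun x => ?_
  simp (disch := fun_prop) only [pd_mul, lap, Fin.sum_univ_three]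
  ring

end HasZeroIntegral

/-! ### The energy identity and the pressure-free identity -/

/-- The transport derivative `(W · ∇) f`. -/
def advect (W : Fin 3 → R3 → ℝ) (f : R3 → ℝ) (x : R3) : ℝ := ∑ j, W j x * pd f j x

/-- The `i`-th component of `-Δu + (u·∇)u + div(v⊗v)`, which the momentum equation equates with
`-∇π`. -/
def force (U V : Fin 3 → R3 → ℝ) (i : Fin 3) (x : R3) : ℝ :=
  -lap (U i) x + advect U (U i) x + ∑ j, pd (fun y => V j y * V i y) j x

/-- The scalar components `u₁, u₂, u₃, v₁, v₂, v₃, θ` of the unknown, as a single family. -/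
def component (U V : Fin 3 → R3 → ℝ) (θ : R3 → ℝ) : Fin 3 ⊕ Fin 3 ⊕ Unit → R3 → ℝ :=
  Sum.elim U (Sum.elim V fun _ => θ)

/-- The gradient energy density `|∇u|² + |∇v|² + |∇θ|²`. -/
def dissipation (U V : Fin 3 → R3 → ℝ) (θ : R3 → ℝ) (x : R3) : ℝ :=
  ∑ a, ∑ k, pd (component U V θ a) k x ^ 2

/-- Smooth solutions of the tropical climate model, written in components. -/
structure IsSmoothSolution (U V : Fin 3 → R3 → ℝ) (π θ : R3 → ℝ) : Prop where
  contDiff_left : ∀ i, ContDiff ℝ ∞ (U i)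
  contDiff_right : ∀ i, ContDiff ℝ ∞ (V i)
  contDiff_pressure : ContDiff ℝ ∞ π
  contDiff_temperature : ContDiff ℝ ∞ θ
  momentum : ∀ i x, force U V i x + pd π i x = 0
  baroclinic : ∀ i x, -lap (V i) x + advect U (V i) x + pd θ i x + advect V (U i) x = 0
  thermal : ∀ x, -lap θ x + advect U θ x + ∑ j, pd (V j) j x = 0
  div_eq_zero : ∀ x, ∑ j, pd (U j) j x = 0

@[fun_prop]
lemma contDiff_advect {W : Fin 3 → R3 → ℝ} {f : R3 → ℝ} (hW : ∀ i, ContDiff ℝ ∞ (W i))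
    (hf : ContDiff ℝ ∞ f) : ContDiff ℝ ∞ (advect W f) := by
  unfold advect; fun_prop

@[fun_prop]
lemma contDiff_force {U V : Fin 3 → R3 → ℝ} (hU : ∀ i, ContDiff ℝ ∞ (U i))
    (hV : ∀ i, ContDiff ℝ ∞ (V i)) (i : Fin 3) : ContDiff ℝ ∞ (force U V i) := by
  unfold force; fun_prop

@[fun_prop]
lemma contDiff_component {U V : Fin 3 → R3 → ℝ} {θ : R3 → ℝ} (hU : ∀ i, ContDiff ℝ ∞ (U i))
    (hV : ∀ i, ContDiff ℝ ∞ (V i)) (hθ : ContDiff ℝ ∞ θ) (a : Fin 3 ⊕ Fin 3 ⊕ Unit) :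
    ContDiff ℝ ∞ (component U V θ a) := by
  rcases a with i | i | _
  exacts [hU i, hV i, hθ]

section Identities

variable {U V W : Fin 3 → R3 → ℝ} {π θ P f g : R3 → ℝ} {C : Fin 3 → Fin 3 → R3 → ℝ}

lemma hasZeroIntegral_transport_energy (hU : ∀ i, ContDiff ℝ ∞ (U i))
    (hdiv : ∀ x, ∑ j, pd (U j) j x = 0) (hf : ContDiff ℝ ∞ f) (hP : ContDiff ℝ ∞ P)
    (h : HasCompactSupport P) :
    HasZeroIntegral fun x => (-lap f x + advect U f x) * (P x * f x)
      - P x * (∑ k, pd f k x ^ 2) - ∑ k, f x * pd f k x * pd P k x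
      + 1 / 2 * f x ^ 2 * ∑ k, U k x * pd P k x := by
  have hdiff := HasZeroIntegral.sum fun k =>
    (HasZeroIntegral.pd ((contDiff_pd hf k).mul (hP.mul hf)) h.mul_right.mul_left k).const_mul (-1)
  have htrans := (HasZeroIntegral.sum fun k => HasZeroIntegral.pd ((hU k).mul ((hf.mul hf).mul hP))
    h.mul_left.mul_left k).const_mul (1 / 2)
  refine (hdiff.add htrans).congr fun x => ?_
  have hd := hdiv x
  simp (disch := fun_prop) only [pd_mul, lap, advect, Fin.sum_univ_three] at hd ⊢
  linear_combination -(1 / 2) * (f x ^ 2 * P x) * hd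

/-- `∑ j, (∂ⱼ (uᵢ ∂ⱼP) - ∂ⱼ (uⱼ ∂ᵢP))`: the part of the viscous term that survives when the
momentum equation is tested with `∑ j, ∂ⱼ (P Cⱼᵢ)` instead of `P ∑ j, ∂ⱼ Cⱼᵢ`. -/
def curlFlux (U : Fin 3 → R3 → ℝ) (P : R3 → ℝ) (i : Fin 3) (x : R3) : ℝ :=
  ∑ j, (pd (fun y => U i y * pd P j y) j x - pd (fun y => U j y * pd P i y) j x)

/-- The coefficient of the vector potential `Cⱼᵢ` in the tested momentum equation. -/
def potFlux (U V : Fin 3 → R3 → ℝ) (P : R3 → ℝ) (i j : Fin 3) (x : R3) : ℝ :=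
  U i x * lap (pd P j) x + 2 * (∑ k, pd (U i) k x * pd (pd P j) k x)
    + (advect U (U i) x + ∑ k, pd (fun y => V k y * V i y) k x) * pd P j x

/-- The terms of the energy balance in which all derivatives of the cutoff `P` are paired with the
unknowns themselves and not with the vector potential. -/
def localFlux (U V : Fin 3 → R3 → ℝ) (θ P : R3 → ℝ) (x : R3) : ℝ :=
  (∑ a, ∑ k, component U V θ a x * pd (component U V θ a) k x * pd P k x)
    - (∑ a, 1 / 2 * component U V θ a x ^ 2 * ∑ j, U j x * pd P j x)
    - (∑ i, ∑ j, V j x * V i x * U i x * pd P j x)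
    - θ x * (∑ j, V j x * pd P j x)
    + ∑ i, curlFlux U P i x * U i x

/-- The weight against which `u` is integrated in the tested momentum equation. -/
def testWeight (U V : Fin 3 → R3 → ℝ) (P : R3 → ℝ) (i : Fin 3) (x : R3) : ℝ :=
  P x * force U V i x + curlFlux U P i x

/-- `C` is a smooth antisymmetric vector potential of `W`: `W = div C` and `ΔC = ∇ × W`. -/
structure IsPotential (W : Fin 3 → R3 → ℝ) (C : Fin 3 → Fin 3 → R3 → ℝ) : Prop where
  contDiff : ∀ i j, ContDiff ℝ ∞ (C i j)
  antisymm : ∀ i j x, C i j x = -C j i x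
  div_eq : ∀ i x, ∑ j, pd (C j i) j x = W i x
  lap_eq : ∀ i j x, lap (C j i) x = pd (W i) j x - pd (W j) i x

lemma IsPotential.contDiff_field (hC : IsPotential W C) (i : Fin 3) : ContDiff ℝ ∞ (W i) := by
  rw [← funext (hC.div_eq i)]
  exact ContDiff.sum fun j _ => contDiff_pd (hC.contDiff j i) j

lemma hasZeroIntegral_energy (hS : IsSmoothSolution U V π θ) (hP : ContDiff ℝ ∞ P)
    (h : HasCompactSupport P) :
    HasZeroIntegral fun x =>
      (∑ i, testWeight U V P i x * U i x) - P x * dissipation U V θ x - localFlux U V θ P x := by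
  have hU := hS.contDiff_left
  have hV := hS.contDiff_right
  have hθ := hS.contDiff_temperature
  have henergy := HasZeroIntegral.sum fun a =>
    hasZeroIntegral_transport_energy hU hS.div_eq_zero (contDiff_component hU hV hθ a) hP h
  have hstress := HasZeroIntegral.sum fun i => HasZeroIntegral.sum fun j =>
    HasZeroIntegral.pd (((hV j).mul (hV i)).mul ((hU i).mul hP)) h.mul_left.mul_left j
  have hbuoyancy := HasZeroIntegral.sum fun j =>
    HasZeroIntegral.pd (hθ.mul ((hV j).mul hP)) h.mul_left.mul_left j
  refine ((henergy.add hstress).add hbuoyancy).congr fun x => ?_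
  have hv := fun i => hS.baroclinic i x
  have ht := hS.thermal x
  simp (disch := fun_prop) only [pd_mul, testWeight, force, dissipation, localFlux, advect,
    component, Fintype.sum_sum_type, Sum.elim_inl, Sum.elim_inr, Finset.univ_unique,
    Finset.sum_singleton, Fin.sum_univ_three] at hv ht ⊢
  linear_combination -P x * V 0 x * hv 0 - P x * V 1 x * hv 1 - P x * V 2 x * hv 2 - P x * θ x * ht

/-- The test field `∑ j, ∂ⱼ (P Cⱼᵢ)` is divergence free by antisymmetry, so it does not see the
gradient `∇π`. -/
lemma hasZeroIntegral_pressure (hC : IsPotential W C) (hπ : ContDiff ℝ ∞ π) (hP : ContDiff ℝ ∞ P)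
    (h : HasCompactSupport P) :
    HasZeroIntegral fun x =>
      (∑ i, P x * pd π i x * W i x) + ∑ i, ∑ j, pd π i x * pd P j x * C j i x := by
  have hCs := hC.contDiff
  refine (HasZeroIntegral.sum fun i => HasZeroIntegral.sum fun j => HasZeroIntegral.pd
    ((contDiff_pd hπ i).mul (hP.mul (hCs j i))) h.mul_right.mul_left j).congr fun x => ?_
  have hdiag (i : Fin 3) : C i i x = 0 := self_eq_neg.1 (hC.antisymm i i x)
  simp (disch := fun_prop) only [pd_mul, ← hC.div_eq, Fin.sum_univ_three, hdiag,
    hC.antisymm 1 0 x, hC.antisymm 2 0 x, hC.antisymm 2 1 x, pd_comm hπ 1 0, pd_comm hπ 2 0,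
    pd_comm hπ 2 1]
  ring

lemma hasZeroIntegral_viscous (hC : IsPotential W C) (hU : ∀ i, ContDiff ℝ ∞ (U i))
    (hP : ContDiff ℝ ∞ P) (h : HasCompactSupport P) :
    HasZeroIntegral fun x => (∑ i, curlFlux U P i x * W i x)
      + ∑ i, ∑ j, (lap (U i) x * pd P j x + U i x * lap (pd P j) x
        + 2 * ∑ k, pd (U i) k x * pd (pd P j) k x) * C j i x := by
  have hCs := hC.contDiff
  have hW := hC.contDiff_field
  have hUP (i j : Fin 3) : ContDiff ℝ ∞ fun y => U i y * pd P j y :=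
    (hU i).mul (contDiff_pd hP j)
  have hUPc (i j : Fin 3) : HasCompactSupport fun y => U i y * pd P j y :=
    (hasCompactSupport_pd h j).mul_left
  have hgreen := HasZeroIntegral.sum fun i => HasZeroIntegral.sum fun j =>
    HasZeroIntegral.lap_mul_sub (hUP i j) (hCs j i) (hUPc i j)
  have hdiv := HasZeroIntegral.sum fun i => HasZeroIntegral.sum fun j =>
    (HasZeroIntegral.pd ((hUP i j).mul (hW i)) (hUPc i j).mul_right j).sub
      (HasZeroIntegral.pd ((hUP i j).mul (hW j)) (hUPc i j).mul_right i)
  refine (hgreen.add hdiv).congr fun x => ?_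
  simp (disch := fun_prop) only [lap_mul, pd_mul, hC.lap_eq, curlFlux, Fin.sum_univ_three]
  ring

lemma hasZeroIntegral_test (hS : IsSmoothSolution U V π θ) (hC : IsPotential W C)
    (hP : ContDiff ℝ ∞ P) (h : HasCompactSupport P) :
    HasZeroIntegral fun x => (∑ i, testWeight U V P i x * W i x)
      + ∑ i, ∑ j, potFlux U V P i j x * C j i x := by
  refine ((hasZeroIntegral_viscous hC hS.contDiff_left hP h).sub
    (hasZeroIntegral_pressure hC hS.contDiff_pressure hP h)).congr fun x => ?_
  have hmom (i : Fin 3) : pd π i x = -force U V i x := eq_neg_of_add_eq_zero_right (hS.momentum i x)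
  simp only [hmom, testWeight, potFlux, force, Fin.sum_univ_three]
  ring

end Identities

section EnergyInequality

variable {U V W : Fin 3 → R3 → ℝ} {π θ P f g : R3 → ℝ} {C : Fin 3 → Fin 3 → R3 → ℝ}

/-- `U` is a locally bounded pointwise limit of fields which have vector potentials dominated by
the common function `a`. -/
def HasDominatedPotentials (U : Fin 3 → R3 → ℝ) (a : R3 → ℝ≥0∞) : Prop :=
  ∃ (W : ℕ → Fin 3 → R3 → ℝ) (C : ℕ → Fin 3 → Fin 3 → R3 → ℝ),
    (∀ n, IsPotential (W n) (C n)) ∧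
    (∀ i, ∀ M : ℝ, ∃ B : ℝ, ∀ n x, ‖x‖ ≤ M → |W n i x| ≤ B) ∧
    (∀ i x, Tendsto (fun n => W n i x) atTop (𝓝 (U i x))) ∧
    ∀ n i j x, ‖C n i j x‖ₑ ≤ a x

lemma tendsto_integral_mul_of_locally_bounded {w : ℕ → R3 → ℝ} (hg : Continuous g)
    (h : HasCompactSupport g) (hw : ∀ n, Continuous (w n))
    (hb : ∀ M : ℝ, ∃ B : ℝ, ∀ n x, ‖x‖ ≤ M → |w n x| ≤ B)
    (hl : ∀ x, Tendsto (fun n => w n x) atTop (𝓝 (f x))) :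
    Tendsto (fun n => ∫ x, g x * w n x) atTop (𝓝 (∫ x, g x * f x)) := by
  obtain ⟨M, hM⟩ := h.isBounded.exists_norm_le
  obtain ⟨B, hB⟩ := hb M
  refine tendsto_integral_of_dominated_convergence (fun x => |g x| * B)
    (fun n => (hg.mul (hw n)).aestronglyMeasurable)
    ((hg.integrable_of_hasCompactSupport h).abs.mul_const B)
    (fun n => Eventually.of_forall fun x => ?_)
    (Eventually.of_forall fun x => (hl x).const_mul _)
  by_cases hx : x ∈ tsupport g
  · rw [Real.norm_eq_abs, abs_mul]
    exact mul_le_mul_of_nonneg_left (hB n x (hM x hx)) (abs_nonneg _)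
  · simp [image_eq_zero_of_notMem_tsupport hx]

lemma contDiff_testWeight (hU : ∀ i, ContDiff ℝ ∞ (U i)) (hV : ∀ i, ContDiff ℝ ∞ (V i))
    (hP : ContDiff ℝ ∞ P) (i : Fin 3) : ContDiff ℝ ∞ (testWeight U V P i) := by
  unfold testWeight curlFlux; fun_prop

lemma hasCompactSupport_testWeight (h : HasCompactSupport P) (i : Fin 3) :
    HasCompactSupport (testWeight U V P i) := by
  have hflux (i j k : Fin 3) : HasCompactSupport (pd (fun y => U i y * pd P j y) k) :=
    hasCompactSupport_pd (hasCompactSupport_pd h j).mul_left k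
  have hcurl (j : Fin 3) := (hflux i j j).sub (hflux j i j)
  exact h.mul_right.add (hasCompactSupport_sum hcurl)

lemma contDiff_localFlux (hU : ∀ i, ContDiff ℝ ∞ (U i)) (hV : ∀ i, ContDiff ℝ ∞ (V i))
    (hθ : ContDiff ℝ ∞ θ) (hP : ContDiff ℝ ∞ P) : ContDiff ℝ ∞ (localFlux U V θ P) := by
  unfold localFlux curlFlux; fun_prop

lemma contDiff_dissipation (hU : ∀ i, ContDiff ℝ ∞ (U i)) (hV : ∀ i, ContDiff ℝ ∞ (V i))
    (hθ : ContDiff ℝ ∞ θ) : ContDiff ℝ ∞ (dissipation U V θ) := by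
  unfold dissipation; fun_prop

lemma integrable_testWeight_mul (hU : ∀ i, ContDiff ℝ ∞ (U i)) (hV : ∀ i, ContDiff ℝ ∞ (V i))
    (hP : ContDiff ℝ ∞ P) (h : HasCompactSupport P) (hf : Continuous f) (i : Fin 3) :
    Integrable fun x => testWeight U V P i x * f x :=
  ((contDiff_testWeight hU hV hP i).continuous.mul hf).integrable_of_hasCompactSupport
    (hasCompactSupport_testWeight h i).mul_right

lemma enorm_integral_testWeight_potential_le (hS : IsSmoothSolution U V π θ) (hC : IsPotential W C)
    (hP : ContDiff ℝ ∞ P) (h : HasCompactSupport P) {a : R3 → ℝ≥0∞}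
    (ha : ∀ i j x, ‖C i j x‖ₑ ≤ a x) :
    ‖∫ x, ∑ i, testWeight U V P i x * W i x‖ₑ
      ≤ ∫⁻ x, ∑ i, ∑ j, ‖potFlux U V P i j x‖ₑ * a x := by
  obtain ⟨hInt, hzero⟩ := hasZeroIntegral_test hS hC hP h
  have hW : Integrable fun x => ∑ i, testWeight U V P i x * W i x :=
    integrable_finsetSum _ fun i _ => integrable_testWeight_mul hS.contDiff_left hS.contDiff_right
      hP h (hC.contDiff_field i).continuous i
  have hpot : Integrable fun x => ∑ i, ∑ j, potFlux U V P i j x * C j i x :=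
    (hInt.sub hW).congr (Eventually.of_forall fun x => by simp)
  rw [integral_add hW hpot, add_eq_zero_iff_eq_neg] at hzero
  rw [hzero, enorm_neg]
  refine (enorm_integral_le_lintegral_enorm _).trans (lintegral_mono fun x => ?_)
  refine (enorm_sum_le _ _).trans (Finset.sum_le_sum fun i _ => (enorm_sum_le _ _).trans ?_)
  refine Finset.sum_le_sum fun j _ => ?_
  rw [enorm_mul]
  gcongr
  exact ha j i x

lemma enorm_integral_testWeight_le (hS : IsSmoothSolution U V π θ) {a : R3 → ℝ≥0∞}
    (hpot : HasDominatedPotentials U a) (hP : ContDiff ℝ ∞ P) (h : HasCompactSupport P) :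
    ‖∫ x, ∑ i, testWeight U V P i x * U i x‖ₑ
      ≤ ∫⁻ x, ∑ i, ∑ j, ‖potFlux U V P i j x‖ₑ * a x := by
  obtain ⟨W, C, hC, hbdd, hlim, hCa⟩ := hpot
  have hU := hS.contDiff_left
  have hV := hS.contDiff_right
  have hW (n : ℕ) (i : Fin 3) : Continuous (W n i) := ((hC n).contDiff_field i).continuous
  have hlimit : Tendsto (fun n => ∫ x, ∑ i, testWeight U V P i x * W n i x) atTop
      (𝓝 (∫ x, ∑ i, testWeight U V P i x * U i x)) := by
    simp only [integral_finsetSum _ fun i _ =>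
      integrable_testWeight_mul hU hV hP h (hU i).continuous i, integral_finsetSum _ fun i _ =>
      integrable_testWeight_mul hU hV hP h (hW _ i) i]
    exact tendsto_finsetSum _ fun i _ => tendsto_integral_mul_of_locally_bounded
      (contDiff_testWeight hU hV hP i).continuous (hasCompactSupport_testWeight h i)
      (fun n => hW n i) (hbdd i) (hlim i)
  exact le_of_tendsto hlimit.enorm (Eventually.of_forall fun n =>
    enorm_integral_testWeight_potential_le hS (hC n) hP h (hCa n))

theorem lintegral_dissipation_le (hS : IsSmoothSolution U V π θ) {a : R3 → ℝ≥0∞}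
    (hpot : HasDominatedPotentials U a) (hP : ContDiff ℝ ∞ P) (h : HasCompactSupport P)
    (hP0 : ∀ x, 0 ≤ P x) :
    ∫⁻ x, ENNReal.ofReal (P x * dissipation U V θ x) ≤
      ∫⁻ x, (‖localFlux U V θ P x‖ₑ + ∑ i, ∑ j, ‖potFlux U V P i j x‖ₑ * a x) := by
  have hU := hS.contDiff_left
  have hV := hS.contDiff_right
  have hθ := hS.contDiff_temperature
  have hweight : Integrable fun x => ∑ i, testWeight U V P i x * U i x :=
    integrable_finsetSum _ fun i _ => integrable_testWeight_mul hU hV hP h (hU i).continuous i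
  have hdiss : Integrable fun x => P x * dissipation U V θ x :=
    (hP.mul (contDiff_dissipation hU hV hθ)).continuous.integrable_of_hasCompactSupport h.mul_right
  have hdiss0 (x : R3) : 0 ≤ P x * dissipation U V θ x :=
    mul_nonneg (hP0 x) (by unfold dissipation; positivity)
  obtain ⟨hInt, hzero⟩ := hasZeroIntegral_energy hS hP h
  have hlocal : Integrable (localFlux U V θ P) :=
    ((hweight.sub hdiss).sub hInt).congr (Eventually.of_forall fun x => by simp)
  have henergy : ∫ x, P x * dissipation U V θ x =
      (∫ x, ∑ i, testWeight U V P i x * U i x) - ∫ x, localFlux U V θ P x := by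
    rw [integral_sub (f := fun x => _ - _) (hweight.sub hdiss) hlocal,
      integral_sub hweight hdiss] at hzero
    linarith
  rw [← ofReal_integral_eq_lintegral_ofReal hdiss (Eventually.of_forall hdiss0),
    lintegral_add_left (contDiff_localFlux hU hV hθ hP).continuous.enorm.measurable, henergy,
    add_comm]
  calc ENNReal.ofReal _ ≤ ‖_‖ₑ := Real.ofReal_le_enorm _
    _ ≤ _ := enorm_sub_le
    _ ≤ _ := add_le_add (enorm_integral_testWeight_le hS hpot hP h)
      (enorm_integral_le_lintegral_enorm _)

end EnergyInequality

/-! ### Vector potentials by convolution -/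

open scoped Convolution

section Convolution

variable {f f' g : R3 → ℝ} {K U : Fin 3 → R3 → ℝ}

lemma convolution_def_mul (f g : R3 → ℝ) (x : R3) : (f ⋆ g) x = ∫ t, f t * g (x - t) := rfl

lemma integrable_mul_comp_sub (hf : Continuous f) (h : HasCompactSupport f) (hg : Continuous g)
    (x : R3) : Integrable fun t => f t * g (x - t) :=
  (hf.mul (hg.comp (continuous_sub_left x))).integrable_of_hasCompactSupport h.mul_right

lemma contDiff_convolution (hf : ContDiff ℝ ∞ f) (h : HasCompactSupport f) (hg : Continuous g) :
    ContDiff ℝ ∞ (f ⋆ g) :=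
  h.contDiff_convolution_left _ hf hg.locallyIntegrable

lemma pd_convolution (hf : ContDiff ℝ ∞ f) (h : HasCompactSupport f) (hg : Continuous g)
    (j : Fin 3) : pd (f ⋆ g) j = (pd f j) ⋆ g := by
  funext x
  have hderiv := h.hasFDerivAt_convolution_left (ContinuousLinearMap.lsmul ℝ ℝ) (μ := volume)
    (hf.of_le (by exact_mod_cast le_top)) hg.locallyIntegrable x
  have hexists := (h.fderiv (𝕜 := ℝ)).convolutionExists_left
    ((ContinuousLinearMap.lsmul ℝ ℝ).precompL R3) (μ := volume)
    (hf.continuous_fderiv (by simp)) hg.locallyIntegrable x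
  simp only [pd, hderiv.fderiv, convolution]
  rw [ContinuousLinearMap.integral_apply hexists]
  rfl

lemma sub_convolution (hf : Continuous f) (h : HasCompactSupport f) (hf' : Continuous f')
    (h' : HasCompactSupport f') (hg : Continuous g) (x : R3) :
    ((fun y => f y - f' y) ⋆ g) x = (f ⋆ g) x - (f' ⋆ g) x := by
  simp only [convolution_def_mul, sub_mul]
  exact integral_sub (integrable_mul_comp_sub hf h hg x) (integrable_mul_comp_sub hf' h' hg x)

lemma sum_convolution {ι : Type*} [Fintype ι] {F : ι → R3 → ℝ} (hF : ∀ i, Continuous (F i))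
    (h : ∀ i, HasCompactSupport (F i)) (hg : Continuous g) (x : R3) :
    ((fun y => ∑ i, F i y) ⋆ g) x = ∑ i, (F i ⋆ g) x := by
  simp only [convolution_def_mul, Finset.sum_mul]
  exact integral_finsetSum _ fun i _ => integrable_mul_comp_sub (hF i) (h i) hg x

lemma pd_comp_sub_left (hf : ContDiff ℝ ∞ f) (x t : R3) (j : Fin 3) :
    pd (fun y => f (x - y)) j t = -pd f j (x - t) := by
  have h := (hf.differentiable (by simp) (x - t)).hasFDerivAt.comp t
    ((hasFDerivAt_id t).const_sub x)
  have hderiv : fderiv ℝ (fun y => f (x - y)) t = _ := h.fderiv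
  simp [pd, hderiv]

lemma sum_pd_convolution_eq_zero (hf : ContDiff ℝ ∞ f) (h : HasCompactSupport f)
    (hU : ∀ i, ContDiff ℝ ∞ (U i)) (hdiv : ∀ x, ∑ j, pd (U j) j x = 0) (x : R3) :
    ∑ j, (pd f j ⋆ U j) x = 0 := by
  have hUx (j : Fin 3) : ContDiff ℝ ∞ fun t => U j (x - t) :=
    (hU j).comp (contDiff_const.sub contDiff_id)
  have hzero := (HasZeroIntegral.sum fun j =>
    HasZeroIntegral.pd (hf.mul (hUx j)) h.mul_right j).2
  simp only [convolution_def_mul]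
  rw [← integral_finsetSum _ fun j _ => integrable_mul_comp_sub (by fun_prop)
    (hasCompactSupport_pd h j) (hU j).continuous x, ← hzero]
  refine integral_congr_ae (Eventually.of_forall fun t => ?_)
  simp only [pd_mul hf (hUx _), pd_comp_sub_left (hU _), Finset.sum_add_distrib, ← Finset.mul_sum,
    Finset.sum_neg_distrib, hdiv, neg_zero, mul_zero, zero_add]

lemma isPotential_convolution (hK : ∀ i, ContDiff ℝ ∞ (K i)) (hc : ∀ i, HasCompactSupport (K i))
    (hcurl : ∀ i j, pd (K i) j = pd (K j) i) (hU : ∀ i, ContDiff ℝ ∞ (U i))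
    (hdiv : ∀ x, ∑ j, pd (U j) j x = 0) :
    IsPotential (fun i => (fun x => ∑ j, pd (K j) j x) ⋆ U i)
      (fun i j x => (K i ⋆ U j) x - (K j ⋆ U i) x) := by
  have hKU (i j : Fin 3) : ContDiff ℝ ∞ (K i ⋆ U j) :=
    contDiff_convolution (hK i) (hc i) (hU j).continuous
  have hpd (i j k : Fin 3) : pd (K i ⋆ U j) k = (pd (K i) k) ⋆ U j :=
    pd_convolution (hK i) (hc i) (hU j).continuous k
  have hfield (i : Fin 3) (x : R3) :
      ((fun y => ∑ j, pd (K j) j y) ⋆ U i) x = ∑ j, pd (K j ⋆ U i) j x := by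
    simp only [hpd]
    exact sum_convolution (fun j => by fun_prop) (fun j => hasCompactSupport_pd (hc j) j)
      (hU i).continuous x
  have hlap (i j : Fin 3) (x : R3) :
      lap (K j ⋆ U i) x = pd ((fun y => ∑ k, pd (K k) k y) ⋆ U i) j x := by
    have hcomm (k : Fin 3) : pd (pd (K k ⋆ U i) k) j x = pd (pd (K j ⋆ U i) k) k x := by
      rw [pd_comm (hKU k i), hpd k i j, hcurl k j, ← hpd]
    rw [funext (hfield i)]
    simp (disch := fun_prop) only [Fin.sum_univ_three, pd_add, hcomm, lap]
  refine ⟨fun i j => (hKU i j).sub (hKU j i), fun i j x => (neg_sub _ _).symm, fun i x => ?_,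
    fun i j x => ?_⟩
  · simp only [pd_sub (hKU _ _) (hKU _ _), Finset.sum_sub_distrib, ← hfield]
    rw [sub_eq_self]
    simp only [hpd]
    exact sum_pd_convolution_eq_zero (hK i) (hc i) hU hdiv x
  · rw [← hlap, ← hlap, lap_sub (hKU j i) (hKU i j)]

end Convolution

/-! ### Truncated Biot–Savart kernels -/

section Kernel

/-- A smooth nondecreasing step, `0` up to `1/2` and `1` from `1` on. -/
def ramp (t : ℝ) : ℝ := Real.smoothTransition (2 * t - 1)

@[fun_prop]
lemma contDiff_ramp : ContDiff ℝ ∞ ramp :=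
  Real.smoothTransition.contDiff.comp ((contDiff_const.mul contDiff_id).sub contDiff_const)

lemma monotone_ramp : Monotone ramp :=
  fun _ _ h => Real.smoothTransition.monotone (by linarith)

lemma ramp_of_le {t : ℝ} (h : t ≤ 1 / 2) : ramp t = 0 :=
  Real.smoothTransition.zero_of_nonpos (by linarith)

lemma ramp_of_ge {t : ℝ} (h : 1 ≤ t) : ramp t = 1 :=
  Real.smoothTransition.one_of_one_le (by linarith)

lemma ramp_le_one (t : ℝ) : ramp t ≤ 1 := Real.smoothTransition.le_one _

/-- The radial profile of the kernel in the variable `t = ‖x‖²`: `‖x‖⁻³` with its singularity at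
the origin cut away. -/
def kernelProfile (t : ℝ) : ℝ := t ^ (-(3 / 2) : ℝ) * ramp t

lemma kernelProfile_of_le {t : ℝ} (h : t ≤ 1 / 2) : kernelProfile t = 0 := by
  simp [kernelProfile, ramp_of_le h]

lemma kernelProfile_nonneg (t : ℝ) : 0 ≤ kernelProfile t := by
  rcases le_or_gt t (1 / 2) with h | h
  · rw [kernelProfile_of_le h]
  · exact mul_nonneg (Real.rpow_nonneg (by linarith) _) (Real.smoothTransition.nonneg _)

@[fun_prop]
lemma contDiff_kernelProfile : ContDiff ℝ ∞ kernelProfile := by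
  rw [contDiff_iff_contDiffAt]
  intro t
  rcases lt_or_ge t (1 / 2) with h | h
  · refine (contDiffAt_const (c := (0 : ℝ))).congr_of_eventuallyEq ?_
    filter_upwards [Iio_mem_nhds h] with s hs using kernelProfile_of_le (le_of_lt hs)
  · exact (Real.contDiffAt_rpow_const_of_ne (by linarith)).mul contDiff_ramp.contDiffAt

lemma kernelProfile_div_eq {t : ℝ} (h : 0 < t) :
    3 * kernelProfile t + 2 * t * deriv kernelProfile t
      = 2 * t ^ (-(1 / 2) : ℝ) * deriv ramp t := by
  have hderiv : HasDerivAt kernelProfile _ t :=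
    (Real.hasDerivAt_rpow_const (p := -(3 / 2)) (Or.inl h.ne')).mul
      (contDiff_ramp.differentiable (by simp) t).hasDerivAt
  have hpow₁ : t ^ (-(3 / 2) : ℝ) = t ^ (-(1 / 2) : ℝ) * t⁻¹ := by
    rw [← Real.rpow_neg_one, ← Real.rpow_add h]; norm_num
  have hpow₂ : t ^ (-(3 / 2) - 1 : ℝ) = t ^ (-(1 / 2) : ℝ) * t⁻¹ * t⁻¹ := by
    rw [← Real.rpow_neg_one, ← Real.rpow_add h, ← Real.rpow_add h]; norm_num
  rw [hderiv.deriv, kernelProfile, hpow₁, hpow₂]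
  field_simp
  ring

lemma norm_sq_rpow (x : R3) : (‖x‖ ^ 2) ^ (-(3 / 2) : ℝ) = (‖x‖ ^ 3)⁻¹ := by
  rw [← Real.rpow_natCast, ← Real.rpow_mul (norm_nonneg _), ← Real.rpow_natCast,
    ← Real.rpow_neg (norm_nonneg _)]
  norm_num

/-- The field `x / ‖x‖³` smoothed near the origin; it is curl free and its divergence is a
nonnegative bump. -/
def unitKernel (j : Fin 3) (x : R3) : ℝ := x j * kernelProfile (‖x‖ ^ 2)

@[fun_prop]
lemma contDiff_kernelProfile_norm_sq : ContDiff ℝ ∞ fun x : R3 => kernelProfile (‖x‖ ^ 2) :=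
  contDiff_kernelProfile.comp (contDiff_norm_sq ℝ)

@[fun_prop]
lemma contDiff_unitKernel (j : Fin 3) : ContDiff ℝ ∞ (unitKernel j) := by
  unfold unitKernel; fun_prop

lemma abs_unitKernel_le (j : Fin 3) (x : R3) : |unitKernel j x| ≤ (‖x‖ ^ 2)⁻¹ := by
  have hprofile : kernelProfile (‖x‖ ^ 2) ≤ (‖x‖ ^ 3)⁻¹ := by
    rw [kernelProfile, norm_sq_rpow]
    exact mul_le_of_le_one_right (by positivity) (ramp_le_one _)
  rw [unitKernel, abs_mul, abs_of_nonneg (kernelProfile_nonneg _)]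
  calc |x j| * kernelProfile (‖x‖ ^ 2) ≤ ‖x‖ * (‖x‖ ^ 3)⁻¹ :=
        mul_le_mul (PiLp.norm_apply_le x j) hprofile (kernelProfile_nonneg _) (norm_nonneg _)
    _ = (‖x‖ ^ 2)⁻¹ := by
        rcases eq_or_ne ‖x‖ 0 with h | h
        · simp [h]
        · field_simp

lemma unitKernel_of_one_le (j : Fin 3) {x : R3} (hx : 1 ≤ ‖x‖) :
    unitKernel j x = x j * (‖x‖ ^ 3)⁻¹ := by
  rw [unitKernel, kernelProfile, norm_sq_rpow, ramp_of_ge (by nlinarith), mul_one]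

lemma pd_unitKernel (i j : Fin 3) (x : R3) :
    pd (unitKernel j) i x = x j * (2 * x i * deriv kernelProfile (‖x‖ ^ 2))
      + (if i = j then 1 else 0) * kernelProfile (‖x‖ ^ 2) := by
  have hcoord : pd (fun x : R3 => x j) i x = if i = j then 1 else 0 := by
    have hproj : (fun x : R3 => x j) = (EuclideanSpace.proj j : R3 →L[ℝ] ℝ) := rfl
    rw [pd, hproj, ContinuousLinearMap.fderiv]
    simp [eq_comm]
  have hprofile : pd (fun x : R3 => kernelProfile (‖x‖ ^ 2)) i x
      = 2 * x i * deriv kernelProfile (‖x‖ ^ 2) := by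
    have hderiv := (contDiff_kernelProfile.differentiable (by simp)
      (‖x‖ ^ 2)).hasDerivAt.comp_hasFDerivAt x (hasStrictFDerivAt_norm_sq x).hasFDerivAt
    change fderiv ℝ (kernelProfile ∘ fun x : R3 => ‖x‖ ^ 2) x _ = _
    rw [hderiv.fderiv]
    simp [EuclideanSpace.inner_single_right]
    ring
  unfold unitKernel
  rw [pd_mul (by fun_prop) (by fun_prop), hprofile, hcoord]

lemma pd_unitKernel_comm (i j : Fin 3) : pd (unitKernel i) j = pd (unitKernel j) i := by
  funext x
  simp only [pd_unitKernel, eq_comm (a := i)]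
  ring

/-- The divergence of the unit kernel. -/
def unitBump (x : R3) : ℝ := ∑ j, pd (unitKernel j) j x

@[fun_prop]
lemma contDiff_unitBump : ContDiff ℝ ∞ unitBump := by
  unfold unitBump; fun_prop

lemma unitBump_zero : unitBump 0 = 0 := by
  simp [unitBump, pd_unitKernel, kernelProfile_of_le]

lemma unitBump_of_ne_zero {x : R3} (hx : x ≠ 0) :
    unitBump x = 2 * (‖x‖ ^ 2) ^ (-(1 / 2) : ℝ) * deriv ramp (‖x‖ ^ 2) := by
  have hnorm : ‖x‖ ^ 2 = ∑ j, x j ^ 2 := by simp [EuclideanSpace.norm_sq_eq]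
  rw [← kernelProfile_div_eq (by positivity), unitBump]
  simp only [pd_unitKernel, if_true]
  generalize deriv kernelProfile (‖x‖ ^ 2) = d
  generalize kernelProfile (‖x‖ ^ 2) = g
  rw [hnorm, Fin.sum_univ_three, Fin.sum_univ_three]
  ring

lemma unitBump_nonneg (x : R3) : 0 ≤ unitBump x := by
  rcases eq_or_ne x 0 with rfl | hx
  · rw [unitBump_zero]
  · rw [unitBump_of_ne_zero hx]
    have := monotone_ramp.deriv_nonneg (x := ‖x‖ ^ 2)
    positivity

lemma unitBump_of_one_le {x : R3} (hx : 1 ≤ ‖x‖) : unitBump x = 0 := by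
  have hramp : deriv ramp (‖x‖ ^ 2) = 0 :=
    IsLocalMax.deriv_eq_zero (Eventually.of_forall fun t => by
      rw [ramp_of_ge (t := ‖x‖ ^ 2) (by nlinarith)]
      exact ramp_le_one t)
  rw [unitBump_of_ne_zero (norm_pos_iff.1 (by linarith)), hramp, mul_zero]

lemma hasCompactSupport_of_one_le_norm {f : R3 → ℝ} {b : ℝ} (hb : 0 < b)
    (hf : ∀ x, 1 ≤ b * ‖x‖ → f x = 0) : HasCompactSupport f := by
  refine HasCompactSupport.intro (isCompact_closedBall 0 b⁻¹) fun x hx => hf x ?_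
  rw [mem_closedBall_zero_iff, not_le, inv_lt_iff_one_lt_mul₀ hb, mul_comm] at hx
  exact hx.le

lemma integral_unitBump_pos : 0 < ∫ x, unitBump x := by
  obtain ⟨t, ht, hslope⟩ := exists_deriv_eq_slope ramp (a := 1 / 2) (b := 1) (by norm_num)
    contDiff_ramp.continuous.continuousOn (contDiff_ramp.differentiable (by simp)).differentiableOn
  rw [ramp_of_ge le_rfl, ramp_of_le le_rfl] at hslope
  have ht0 : 0 < t := by linarith [ht.1]
  let x : R3 := EuclideanSpace.single 0 (√t)
  have hx : ‖x‖ ^ 2 = t := by simp [x, Real.sq_sqrt ht0.le]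
  have hx0 : x ≠ 0 := fun h => ht0.ne (by rw [← hx, h]; simp)
  refine contDiff_unitBump.continuous.integral_pos_of_hasCompactSupport_nonneg_nonzero
    (hasCompactSupport_of_one_le_norm one_pos fun x hx => unitBump_of_one_le (by simpa using hx))
    unitBump_nonneg (x := x) ?_
  rw [unitBump_of_ne_zero hx0, hx, hslope]
  have := Real.rpow_pos_of_pos ht0 (-(1 / 2))
  positivity

end Kernel

section Scaling

variable {f : R3 → ℝ} {b : ℝ}

/-- The rescaling `x ↦ c f (b x)`. -/
def dilate (b c : ℝ) (f : R3 → ℝ) (x : R3) : ℝ := c * f (b • x)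

@[fun_prop]
lemma contDiff_dilate (b c : ℝ) (hf : ContDiff ℝ ∞ f) : ContDiff ℝ ∞ (dilate b c f) :=
  contDiff_const.mul (hf.comp (contDiff_const_smul b))

lemma pd_dilate (b c : ℝ) (hf : ContDiff ℝ ∞ f) (i : Fin 3) :
    pd (dilate b c f) i = dilate b (c * b) (pd f i) := by
  funext x
  have hderiv : fderiv ℝ (dilate b c f) x = _ :=
    (((hf.differentiable (by simp) (b • x)).hasFDerivAt.comp x
      ((hasFDerivAt_id x).const_smul b)).const_mul c).fderiv
  simp [pd, hderiv, dilate, mul_assoc]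

/-- The unit kernel smoothed at scale `b⁻¹`. -/
def scaledKernel (b : ℝ) (j : Fin 3) : R3 → ℝ := dilate b (b ^ 2) (unitKernel j)

/-- The divergence of the kernel smoothed at scale `b⁻¹`. -/
def scaledBump (b : ℝ) : R3 → ℝ := dilate b (b ^ 3) unitBump

@[fun_prop]
lemma contDiff_scaledKernel (b : ℝ) (j : Fin 3) : ContDiff ℝ ∞ (scaledKernel b j) :=
  contDiff_dilate b _ (contDiff_unitKernel j)

@[fun_prop]
lemma contDiff_scaledBump (b : ℝ) : ContDiff ℝ ∞ (scaledBump b) :=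
  contDiff_dilate b _ contDiff_unitBump

lemma pd_scaledKernel_comm (b : ℝ) (i j : Fin 3) :
    pd (scaledKernel b i) j = pd (scaledKernel b j) i := by
  rw [scaledKernel, scaledKernel, pd_dilate _ _ (contDiff_unitKernel i),
    pd_dilate _ _ (contDiff_unitKernel j), pd_unitKernel_comm]

lemma sum_pd_scaledKernel (b : ℝ) (x : R3) : ∑ j, pd (scaledKernel b j) j x = scaledBump b x := by
  simp only [scaledKernel, pd_dilate _ _ (contDiff_unitKernel _), scaledBump, dilate, unitBump,
    Finset.mul_sum]
  rfl

lemma abs_scaledKernel_le (hb : 0 < b) (j : Fin 3) (x : R3) :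
    |scaledKernel b j x| ≤ (‖x‖ ^ 2)⁻¹ := by
  rw [scaledKernel, dilate, abs_mul, abs_of_pos (by positivity)]
  refine (mul_le_mul_of_nonneg_left (abs_unitKernel_le j _) (by positivity)).trans_eq ?_
  rw [norm_smul, Real.norm_of_nonneg hb.le]
  field_simp

lemma scaledKernel_of_one_le (hb : 0 < b) (j : Fin 3) {x : R3} (hx : 1 ≤ b * ‖x‖) :
    scaledKernel b j x = x j * (‖x‖ ^ 3)⁻¹ := by
  have hnorm : ‖b • x‖ = b * ‖x‖ := by rw [norm_smul, Real.norm_of_nonneg hb.le]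
  rw [scaledKernel, dilate, unitKernel_of_one_le j (hnorm ▸ hx), hnorm, PiLp.smul_apply,
    smul_eq_mul]
  field_simp

lemma scaledBump_nonneg (hb : 0 < b) (x : R3) : 0 ≤ scaledBump b x :=
  mul_nonneg (by positivity) (unitBump_nonneg _)

lemma scaledBump_of_one_le (hb : 0 < b) {x : R3} (hx : 1 ≤ b * ‖x‖) : scaledBump b x = 0 := by
  have hnorm : ‖b • x‖ = b * ‖x‖ := by rw [norm_smul, Real.norm_of_nonneg hb.le]
  rw [scaledBump, dilate, unitBump_of_one_le (hnorm ▸ hx), mul_zero]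

lemma integral_scaledBump (hb : 0 < b) : ∫ x, scaledBump b x = ∫ x, unitBump x := by
  simp only [scaledBump, dilate]
  rw [integral_const_mul, Measure.integral_comp_smul]
  simp [abs_of_pos hb]
  field_simp

end Scaling

/-! ### Young's convolution inequality -/

section Young

variable {G : Type*} [AddCommGroup G] [MeasurableSpace G] [MeasurableAdd₂ G] [MeasurableNeg G]
  {μ : Measure G} [μ.IsAddLeftInvariant] {f g : G → ℝ≥0∞} {p q r : ℝ}

lemma lintegral_lconvolution [SFinite μ] (hf : AEMeasurable f μ) (hg : AEMeasurable g μ) :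
    ∫⁻ x, (f ⋆ₗ[μ] g) x ∂μ = (∫⁻ x, f x ∂μ) * ∫⁻ x, g x ∂μ := by
  simp only [lconvolution_def]
  rw [lintegral_lintegral_swap (by fun_prop), ← lintegral_mul_const'' _ hf]
  refine lintegral_congr fun y => ?_
  have hgy : AEMeasurable (fun x => g (-y + x)) μ := hg.comp_quasiMeasurePreserving
    (measurePreserving_add_left μ (-y)).quasiMeasurePreserving
  rw [lintegral_const_mul'' _ hgy, lintegral_add_left_eq_self g]

lemma lconvolution_le_of_young [μ.IsNegInvariant] (hf : Measurable f) (hg : Measurable g)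
    (hp : 0 < p) (hq : 0 < q) (hr : 0 < r) (hpr : p ≤ r) (hqr : q ≤ r)
    (h : p⁻¹ + q⁻¹ = 1 + r⁻¹) (x : G) :
    (f ⋆ₗ[μ] g) x ≤ ((fun y => f y ^ p) ⋆ₗ[μ] fun y => g y ^ q) x ^ r⁻¹
      * (∫⁻ y, f y ^ p ∂μ) ^ (p⁻¹ - r⁻¹) * (∫⁻ y, g y ^ q ∂μ) ^ (q⁻¹ - r⁻¹) := by
  have hp0 : 0 ≤ p⁻¹ - r⁻¹ := sub_nonneg.2 (inv_anti₀ hp hpr)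
  have hq0 : 0 ≤ q⁻¹ - r⁻¹ := sub_nonneg.2 (inv_anti₀ hq hqr)
  have hr0 : 0 ≤ r⁻¹ := by positivity
  have hreflect : ∫⁻ y, g (-y + x) ^ q ∂μ = ∫⁻ y, g y ^ q ∂μ := by
    simpa only [neg_add_eq_sub] using lintegral_sub_left_eq_self (fun y => g y ^ q) x
  have hholder := ENNReal.lintegral_prod_norm_pow_le (μ := μ) Finset.univ
    (f := ![fun y => f y ^ p * g (-y + x) ^ q, fun y => f y ^ p, fun y => g (-y + x) ^ q])
    (p := ![r⁻¹, p⁻¹ - r⁻¹, q⁻¹ - r⁻¹])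
    (by simp only [Finset.mem_univ, Fin.forall_fin_succ, Matrix.cons_val_zero,
          Matrix.cons_val_succ, IsEmpty.forall_iff, forall_const, and_true]
        refine ⟨?_, ?_, ?_⟩ <;> fun_prop)
    (by simp only [Fin.sum_univ_three, Matrix.cons_val]; linarith)
    (by simp [Fin.forall_fin_succ, hr0, hp0, hq0])
  simp only [Fin.prod_univ_three, Matrix.cons_val, hreflect] at hholder
  refine (lintegral_congr fun y => ?_).trans_le hholder
  have hpow (a : ℝ≥0∞) {s : ℝ} (hs : 0 < s) (hs0 : 0 ≤ s⁻¹ - r⁻¹) :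
      (a ^ s) ^ r⁻¹ * (a ^ s) ^ (s⁻¹ - r⁻¹) = a := by
    rw [← ENNReal.rpow_add_of_nonneg _ _ hr0 hs0, ← ENNReal.rpow_mul, add_sub_cancel,
      mul_inv_cancel₀ hs.ne', ENNReal.rpow_one]
  calc f y * g (-y + x)
      = (f y ^ p) ^ r⁻¹ * (f y ^ p) ^ (p⁻¹ - r⁻¹)
        * ((g (-y + x) ^ q) ^ r⁻¹ * (g (-y + x) ^ q) ^ (q⁻¹ - r⁻¹)) := by
        rw [hpow _ hp hp0, hpow _ hq hq0]
    _ = _ := by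
        rw [ENNReal.mul_rpow_of_nonneg _ _ hr0]
        ring

lemma lintegral_lconvolution_rpow_le [SFinite μ] [μ.IsNegInvariant] (hf : Measurable f)
    (hg : Measurable g)
    (hp : 0 < p) (hq : 0 < q) (hr : 0 < r) (hpr : p ≤ r) (hqr : q ≤ r) (h : p⁻¹ + q⁻¹ = 1 + r⁻¹) :
    ∫⁻ x, (f ⋆ₗ[μ] g) x ^ r ∂μ
      ≤ (∫⁻ x, f x ^ p ∂μ) ^ (r / p) * (∫⁻ x, g x ^ q ∂μ) ^ (r / q) := by
  set F := ∫⁻ x, f x ^ p ∂μ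
  set G' := ∫⁻ x, g x ^ q ∂μ
  have hexp {s : ℝ} (hs : 0 < s) (hsr : s ≤ r) (A : ℝ≥0∞) :
      A * (A ^ (s⁻¹ - r⁻¹)) ^ r = A ^ (r / s) := by
    have h0 : 0 ≤ (s⁻¹ - r⁻¹) * r := mul_nonneg (sub_nonneg.2 (inv_anti₀ hs hsr)) hr.le
    rw [← ENNReal.rpow_mul]
    nth_rewrite 1 [← ENNReal.rpow_one A]
    rw [← ENNReal.rpow_add_of_nonneg _ _ zero_le_one h0]
    congr 1
    field_simp
    ring
  calc ∫⁻ x, (f ⋆ₗ[μ] g) x ^ r ∂μ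
      ≤ ∫⁻ x, ((fun y => f y ^ p) ⋆ₗ[μ] fun y => g y ^ q) x
          * (F ^ (p⁻¹ - r⁻¹)) ^ r * (G' ^ (q⁻¹ - r⁻¹)) ^ r ∂μ := by
        refine lintegral_mono fun x => ?_
        refine (ENNReal.rpow_le_rpow
          (lconvolution_le_of_young hf hg hp hq hr hpr hqr h x) hr.le).trans_eq ?_
        rw [ENNReal.mul_rpow_of_nonneg _ _ hr.le, ENNReal.mul_rpow_of_nonneg _ _ hr.le,
          ← ENNReal.rpow_mul _ r⁻¹, inv_mul_cancel₀ hr.ne', ENNReal.rpow_one]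
    _ = F * G' * (F ^ (p⁻¹ - r⁻¹)) ^ r * (G' ^ (q⁻¹ - r⁻¹)) ^ r := by
        have hmeas := measurable_lconvolution μ (hf.pow_const p) (hg.pow_const q)
        rw [lintegral_mul_const _ (by fun_prop), lintegral_mul_const _ hmeas,
          lintegral_lconvolution (by fun_prop) (by fun_prop)]
    _ = F ^ (r / p) * G' ^ (r / q) := by
        rw [← hexp hp hpr, ← hexp hq hqr]
        ring

end Young

section BigSmall

variable {α : Type*} {w : α → ℝ≥0∞}

/-- The part of `w` above height `1`. -/
def big (w : α → ℝ≥0∞) : α → ℝ≥0∞ := {x | 1 < w x}.indicator w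

/-- The part of `w` up to height `1`. -/
def small (w : α → ℝ≥0∞) : α → ℝ≥0∞ := {x | 1 < w x}ᶜ.indicator w

lemma small_add_big (w : α → ℝ≥0∞) (x : α) : small w x + big w x = w x :=
  congrFun (Set.indicator_compl_add_self _ w) x

lemma small_le_one (w : α → ℝ≥0∞) (x : α) : small w x ≤ 1 :=
  Set.indicator_apply_le' (fun h => not_lt.1 h) fun _ => zero_le_one

lemma sq_eq_small_sq_add_big_sq (w : α → ℝ≥0∞) (x : α) : w x ^ 2 = small w x ^ 2 + big w x ^ 2 := by
  by_cases h : 1 < w x <;> simp [small, big, h]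

lemma small_rpow_le (w : α → ℝ≥0∞) {s t : ℝ} (hs : 0 < s) (hst : s ≤ t) (x : α) :
    small w x ^ t ≤ w x ^ s :=
  (ENNReal.rpow_le_rpow_of_exponent_ge (small_le_one w x) hst).trans
    (ENNReal.rpow_le_rpow (Set.indicator_le_self _ _ _) hs.le)

lemma big_le (w : α → ℝ≥0∞) (x : α) : big w x ≤ w x := Set.indicator_le_self _ _ _

lemma big_rpow_le (w : α → ℝ≥0∞) {s t : ℝ} (hs : 0 < s) (hst : s ≤ t) (x : α) :
    big w x ^ s ≤ w x ^ t := by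
  rcases lt_or_ge 1 (w x) with h | h
  · rw [big, Set.indicator_of_mem (by exact h)]
    exact ENNReal.rpow_le_rpow_of_exponent_le h.le hst
  · rw [big, Set.indicator_of_notMem (by simpa using h), ENNReal.zero_rpow_of_pos hs]
    exact zero_le

@[fun_prop]
lemma measurable_big [MeasurableSpace α] (hw : Measurable w) : Measurable (big w) :=
  hw.indicator (measurableSet_lt measurable_const hw)

@[fun_prop]
lemma measurable_small [MeasurableSpace α] (hw : Measurable w) : Measurable (small w) :=
  hw.indicator (measurableSet_lt measurable_const hw).compl

end BigSmall

/-! ### Potentials of a divergence-free field in `L^p` -/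

section Mollifier

variable {b p q : ℝ} {g : R3 → ℝ}

/-- The mollifier at scale `b⁻¹`, of integral `1`. -/
def mollifier (b : ℝ) (x : R3) : ℝ := (∫ y, unitBump y)⁻¹ * scaledBump b x

@[fun_prop]
lemma contDiff_mollifier (b : ℝ) : ContDiff ℝ ∞ (mollifier b) := by
  unfold mollifier; fun_prop

lemma mollifier_nonneg (hb : 0 < b) (x : R3) : 0 ≤ mollifier b x :=
  mul_nonneg (inv_nonneg.2 integral_unitBump_pos.le) (scaledBump_nonneg hb x)

lemma mollifier_of_one_le (hb : 0 < b) {x : R3} (hx : 1 ≤ b * ‖x‖) : mollifier b x = 0 := by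
  rw [mollifier, scaledBump_of_one_le hb hx, mul_zero]

lemma hasCompactSupport_mollifier (hb : 0 < b) : HasCompactSupport (mollifier b) :=
  hasCompactSupport_of_one_le_norm hb fun _ => mollifier_of_one_le hb

lemma support_mollifier_subset (hb : 0 < b) : Function.support (mollifier b) ⊆ ball 0 b⁻¹ := by
  intro x hx
  rw [mem_ball_zero_iff, ← mul_lt_mul_iff_right₀ hb, mul_inv_cancel₀ hb.ne']
  exact lt_of_not_ge fun h => hx (mollifier_of_one_le hb h)

lemma integral_mollifier (hb : 0 < b) : ∫ x, mollifier b x = 1 := by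
  simp only [mollifier]
  rw [integral_const_mul, integral_scaledBump hb, inv_mul_cancel₀ integral_unitBump_pos.ne']

lemma tendsto_mollifier_convolution (hg : Continuous g) (x : R3) :
    Tendsto (fun b => (mollifier b ⋆ g) x) atTop (𝓝 (g x)) := by
  refine convolution_tendsto_right (g := fun _ : ℝ => g) (k := fun _ => x)
    (eventually_gt_atTop 0 |>.mono fun b hb => mollifier_nonneg hb)
    (eventually_gt_atTop 0 |>.mono fun b hb => integral_mollifier hb)
    (tendsto_smallSets_iff.2 fun s hs => ?_)
    (Eventually.of_forall fun _ => hg.aestronglyMeasurable)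
    ((hg.tendsto x).comp tendsto_snd) tendsto_const_nhds
  obtain ⟨ε, hε, hball⟩ := Metric.mem_nhds_iff.1 hs
  filter_upwards [eventually_gt_atTop 0, tendsto_inv_atTop_zero.eventually_le_const hε]
    with b hb hbε
  exact (support_mollifier_subset hb).trans ((ball_subset_ball hbε).trans hball)

lemma abs_convolution_le {f : R3 → ℝ} (hpq : p.HolderConjugate q)
    (hf : MemLp f (ENNReal.ofReal p)) (hg : MemLp g (ENNReal.ofReal q)) (x : R3) :
    |(f ⋆ g) x| ≤ (∫ y, |f y| ^ p) ^ (1 / p) * (∫ y, |g y| ^ q) ^ (1 / q) := by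
  have hgx : MemLp (fun t => g (x - t)) (ENNReal.ofReal q) :=
    hg.comp_measurePreserving (Measure.measurePreserving_sub_left volume x)
  calc |(f ⋆ g) x| ≤ ∫ t, ‖f t‖ * ‖g (x - t)‖ := by
        simp only [convolution_def_mul, ← norm_mul]
        exact norm_integral_le_integral_norm fun t => f t * g (x - t)
    _ ≤ (∫ t, ‖f t‖ ^ p) ^ (1 / p) * (∫ t, ‖g (x - t)‖ ^ q) ^ (1 / q) :=
        integral_mul_norm_le_Lp_mul_Lq hpq hf hgx
    _ = _ := by
        rw [integral_sub_left_eq_self (fun t => ‖g t‖ ^ q) volume x]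
        rfl

lemma exists_abs_mollifier_convolution_le (hq : 1 < q) (hg : MemLp g (ENNReal.ofReal q)) :
    ∃ B, 0 ≤ B ∧ ∀ b, 0 < b → ∀ x, |(mollifier b ⋆ g) x| ≤ b ^ (3 / q) * B := by
  obtain ⟨p, hpq⟩ : ∃ p : ℝ, p.HolderConjugate q := ⟨_, (Real.HolderConjugate.conjExponent hq).symm⟩
  refine ⟨(∫ y, |mollifier 1 y| ^ p) ^ (1 / p) * (∫ y, |g y| ^ q) ^ (1 / q), by positivity,
    fun b hb x => ?_⟩
  have hscale (y : R3) : |mollifier b y| ^ p = b ^ (3 * p) * |mollifier 1 (b • y)| ^ p := by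
    rw [Real.rpow_mul hb.le, ← Real.mul_rpow (by positivity) (abs_nonneg _)]
    congr 1
    simp only [mollifier, scaledBump, dilate, abs_mul, abs_of_pos hb, abs_pow, one_smul, abs_one]
    norm_cast
    ring
  have hInt : (∫ y, |mollifier b y| ^ p) ^ (1 / p)
      = b ^ (3 / q) * (∫ y, |mollifier 1 y| ^ p) ^ (1 / p) := by
    have hexp : b ^ (3 * p) * (b ^ 3)⁻¹ = (b ^ (3 / q)) ^ p := by
      rw [← Real.rpow_natCast, ← Real.rpow_neg hb.le, ← Real.rpow_add hb, ← Real.rpow_mul hb.le]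
      congr 1
      have := hpq.div_conj_eq_sub_one
      push_cast
      linear_combination (-3) * this
    simp only [hscale]
    rw [integral_const_mul, Measure.integral_comp_smul volume (fun y => |mollifier 1 y| ^ p),
      finrank_euclideanSpace, Fintype.card_fin, smul_eq_mul, abs_of_pos (by positivity),
      ← mul_assoc, hexp, Real.mul_rpow (by positivity) (by positivity), one_div,
      Real.rpow_rpow_inv (by positivity) hpq.ne_zero]
  rw [← mul_assoc, ← hInt]
  exact abs_convolution_le hpq ((contDiff_mollifier b).continuous.memLp_of_hasCompactSupport
    (hasCompactSupport_mollifier hb)) hg x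

end Mollifier

section CutKernel

variable {b q : ℝ} {g : R3 → ℝ}

/-- The kernel `x / (4π‖x‖³)`, cut off below the scale `b⁻¹` and above the scale `b`. -/
def cutKernel (b : ℝ) (j : Fin 3) (x : R3) : ℝ :=
  (∫ y, unitBump y)⁻¹ * (scaledKernel b j x - scaledKernel b⁻¹ j x)

@[fun_prop]
lemma contDiff_cutKernel (b : ℝ) (j : Fin 3) : ContDiff ℝ ∞ (cutKernel b j) := by
  unfold cutKernel; fun_prop

lemma hasCompactSupport_cutKernel (hb : 1 ≤ b) (j : Fin 3) : HasCompactSupport (cutKernel b j) := by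
  have hb0 : 0 < b := by linarith
  refine hasCompactSupport_of_one_le_norm (inv_pos.2 hb0) fun x hx => ?_
  have hbx : 1 ≤ b * ‖x‖ :=
    hx.trans (mul_le_mul_of_nonneg_right ((inv_le_one_of_one_le₀ hb).trans hb) (norm_nonneg x))
  rw [cutKernel, scaledKernel_of_one_le hb0 j hbx, scaledKernel_of_one_le (inv_pos.2 hb0) j hx,
    sub_self, mul_zero]

lemma pd_cutKernel (b : ℝ) (i j : Fin 3) (x : R3) :
    pd (cutKernel b j) i x
      = (∫ y, unitBump y)⁻¹ * (pd (scaledKernel b j) i x - pd (scaledKernel b⁻¹ j) i x) := by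
  have hconst : pd (fun _ : R3 => (∫ y, unitBump y)⁻¹) i x = 0 := by simp [pd]
  unfold cutKernel
  simp (disch := fun_prop) only [pd_mul, pd_sub, hconst]
  ring

lemma pd_cutKernel_comm (b : ℝ) (i j : Fin 3) : pd (cutKernel b i) j = pd (cutKernel b j) i := by
  funext x
  rw [pd_cutKernel, pd_cutKernel, pd_scaledKernel_comm b, pd_scaledKernel_comm b⁻¹]

lemma sum_pd_cutKernel (b : ℝ) :
    (fun x => ∑ j, pd (cutKernel b j) j x) = fun x => mollifier b x - mollifier b⁻¹ x := by
  funext x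
  simp only [pd_cutKernel, ← Finset.mul_sum, Finset.sum_sub_distrib, sum_pd_scaledKernel, mollifier]
  ring

lemma abs_cutKernel_le (hb : 0 < b) (j : Fin 3) (x : R3) :
    |cutKernel b j x| ≤ 2 * (∫ y, unitBump y)⁻¹ * (‖x‖ ^ 2)⁻¹ := by
  have hc : 0 < (∫ y, unitBump y)⁻¹ := inv_pos.2 integral_unitBump_pos
  rw [cutKernel, abs_mul, abs_of_pos hc, mul_comm 2, mul_assoc, two_mul]
  gcongr
  exact (abs_sub _ _).trans
    (add_le_add (abs_scaledKernel_le hb j x) (abs_scaledKernel_le (inv_pos.2 hb) j x))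

/-- The approximation of `g` whose potential is given by convolution with `cutKernel b`. -/
def cutApprox (b : ℝ) (g : R3 → ℝ) : R3 → ℝ := (fun x => ∑ j, pd (cutKernel b j) j x) ⋆ g

lemma cutApprox_eq (hb : 0 < b) (hg : Continuous g) (x : R3) :
    cutApprox b g x = (mollifier b ⋆ g) x - (mollifier b⁻¹ ⋆ g) x := by
  rw [cutApprox, sum_pd_cutKernel]
  exact sub_convolution (contDiff_mollifier b).continuous (hasCompactSupport_mollifier hb)
    (contDiff_mollifier _).continuous (hasCompactSupport_mollifier (inv_pos.2 hb)) hg x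

lemma tendsto_cutApprox (hg : Continuous g) (hq : 1 < q) (hgq : MemLp g (ENNReal.ofReal q))
    (x : R3) : Tendsto (fun b => cutApprox b g x) atTop (𝓝 (g x)) := by
  obtain ⟨B, -, hB⟩ := exists_abs_mollifier_convolution_le hq hgq
  have hfar : Tendsto (fun b : ℝ => (mollifier b⁻¹ ⋆ g) x) atTop (𝓝 0) := by
    have hpow : Tendsto (fun b : ℝ => b⁻¹ ^ (3 / q) * B) atTop (𝓝 0) := by
      have hq0 : 0 < 3 / q := by positivity
      simpa [hq0.ne'] using
        (tendsto_inv_atTop_zero.rpow_const (p := 3 / q) (Or.inr hq0.le)).mul_const B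
    refine squeeze_zero_norm' ?_ hpow
    filter_upwards [eventually_gt_atTop 0] with b hb using hB _ (inv_pos.2 hb) x
  have hlim := (tendsto_mollifier_convolution hg x).sub hfar
  rw [sub_zero] at hlim
  refine hlim.congr' ?_
  filter_upwards [eventually_gt_atTop 0] with b hb using (cutApprox_eq hb hg x).symm

lemma exists_abs_cutApprox_le (hg : Continuous g) (hq : 1 < q)
    (hgq : MemLp g (ENNReal.ofReal q)) (M : ℝ) :
    ∃ B : ℝ, ∀ b, 1 ≤ b → ∀ x, ‖x‖ ≤ M → |cutApprox b g x| ≤ B := by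
  obtain ⟨B, hB0, hB⟩ := exists_abs_mollifier_convolution_le hq hgq
  obtain ⟨S, hS⟩ := (isCompact_closedBall (0 : R3) (M + 1)).exists_bound_of_continuousOn
    hg.continuousOn
  refine ⟨|S| + B, fun b hb x hx => ?_⟩
  have hb0 : 0 < b := by linarith
  have hnear : |(mollifier b ⋆ g) x| ≤ |S| := by
    have hdist := dist_convolution_le (μ := volume) (g := g) (x₀ := x) (z₀ := 0) (abs_nonneg S)
      (support_mollifier_subset hb0) (mollifier_nonneg hb0) (integral_mollifier hb0)
      hg.aestronglyMeasurable fun y hy => by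
        rw [dist_zero_right]
        refine (hS y ?_).trans (le_abs_self S)
        have hyx : dist y x ≤ 1 := (mem_ball.1 hy).le.trans (inv_le_one_of_one_le₀ hb)
        rw [mem_closedBall_zero_iff]
        linarith [norm_le_norm_add_norm_sub' y x, dist_eq_norm y x]
    rwa [dist_zero_right] at hdist
  have hfar : |(mollifier b⁻¹ ⋆ g) x| ≤ B := by
    refine (hB _ (inv_pos.2 hb0) x).trans (mul_le_of_le_one_left hB0 ?_)
    exact Real.rpow_le_one (by positivity) (inv_le_one_of_one_le₀ hb) (by positivity)
  rw [cutApprox_eq hb0 hg]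
  exact (abs_sub _ _).trans (add_le_add hnear hfar)

end CutKernel

section Domination

lemma mul_le_rpow_add_rpow {p q : ℝ} (hpq : p.HolderConjugate q) (a b : ℝ≥0∞) :
    a * b ≤ a ^ p + b ^ q := by
  have hdiv {s : ℝ} (hs : 1 ≤ s) (c : ℝ≥0∞) : c / ENNReal.ofReal s ≤ c :=
    ENNReal.div_le_of_le_mul (le_mul_of_one_le_right' (ENNReal.one_le_ofReal.2 hs))
  exact (ENNReal.young_inequality a b hpq).trans
    (add_le_add (hdiv hpq.lt.le _) (hdiv hpq.symm.lt.le _))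

lemma lintegral_indicator_rpow {α : Type*} [MeasurableSpace α] {μ : Measure α} {S : Set α}
    (hS : MeasurableSet S) (f : α → ℝ≥0∞) {s : ℝ} (hs : 0 < s) :
    ∫⁻ x, S.indicator f x ^ s ∂μ = ∫⁻ x in S, f x ^ s ∂μ := by
  rw [← lintegral_indicator hS]
  refine lintegral_congr fun x => ?_
  by_cases hx : x ∈ S <;> simp [hx, hs]

/-- Only the product of the local part of the kernel with the large part of `w` is not bounded. -/
lemma lconvolution_le_add_indicator_lconvolution_big {G : Type*} [AddCommGroup G]
    [MeasurableSpace G] [MeasurableAdd G] [MeasurableNeg G] {μ : Measure G}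
    [μ.IsAddLeftInvariant] [μ.IsNegInvariant] {k w : G → ℝ≥0∞} (hk : Measurable k)
    (hw : Measurable w) {S : Set G} (hS : MeasurableSet S) {p q : ℝ} (hpq : p.HolderConjugate q)
    (x : G) :
    (k ⋆ₗ[μ] w) x ≤ (∫⁻ y in S, k y ∂μ + ∫⁻ y in Sᶜ, k y ^ p ∂μ + ∫⁻ y, w y ^ q ∂μ)
      + (S.indicator k ⋆ₗ[μ] big w) x := by
  have hreflect : ∫⁻ y, w (-y + x) ^ q ∂μ = ∫⁻ y, w y ^ q ∂μ := by
    simpa only [neg_add_eq_sub] using lintegral_sub_left_eq_self (fun y => w y ^ q) x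
  have hnear : Measurable (S.indicator k) := hk.indicator hS
  have hfar : Measurable (Sᶜ.indicator fun y => k y ^ p) := (hk.pow_const p).indicator hS.compl
  have hpointwise (y : G) : k y * w (-y + x) ≤ S.indicator k y + Sᶜ.indicator (fun y => k y ^ p) y
      + w (-y + x) ^ q + S.indicator k y * big w (-y + x) := by
    by_cases hy : y ∈ S
    · rw [← small_add_big w (-y + x), mul_add, Set.indicator_of_mem hy]
      gcongr
      exact (mul_le_of_le_one_right' (small_le_one _ _)).trans
        (le_self_add.trans le_self_add)
    · rw [Set.indicator_of_notMem hy, Set.indicator_of_mem (Set.mem_compl hy), zero_mul, zero_add,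
        add_zero]
      exact mul_le_rpow_add_rpow hpq _ _
  refine (lintegral_mono hpointwise).trans_eq ?_
  rw [lintegral_add_left (by fun_prop), lintegral_add_left (by fun_prop),
    lintegral_add_left hnear, hreflect, lintegral_indicator hS, lintegral_indicator hS.compl]
  rfl

/-- The inverse square kernel, which dominates all kernels `cutKernel b`. -/
def inverseSquare (x : R3) : ℝ≥0∞ := ENNReal.ofReal (‖x‖ ^ 2)⁻¹

@[fun_prop]
lemma measurable_inverseSquare : Measurable inverseSquare := by
  unfold inverseSquare; fun_prop

lemma inverseSquare_rpow (x : R3) {s : ℝ} (hs : 0 ≤ s) :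
    inverseSquare x ^ s = ENNReal.ofReal (‖x‖ ^ (-(2 * s))) := by
  rw [inverseSquare, ENNReal.ofReal_rpow_of_nonneg (by positivity) hs,
    Real.inv_rpow (by positivity), Real.rpow_neg (norm_nonneg _), Real.rpow_mul (norm_nonneg _)]
  norm_num

lemma lintegral_ball_inverseSquare_rpow_lt_top {s : ℝ} (h0 : 0 ≤ s) (hs : s < 3 / 2) :
    ∫⁻ x in ball 0 1, inverseSquare x ^ s < ⊤ := by
  have hfinrank : Module.finrank ℝ R3 = 3 := finrank_euclideanSpace_fin
  have hInt : IntegrableOn (fun x : R3 => ‖x‖ ^ (-(2 * s))) (ball 0 1) := by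
    refine integrableOn_ball_of_norm_le_rpow (C := 1) (α := 2 * s) (by norm_num [hfinrank])
      (by rw [hfinrank]; push_cast; linarith) (Eventually.of_forall fun x => ?_)
      (by fun_prop : Measurable _).aestronglyMeasurable
    rw [one_mul, Real.norm_of_nonneg (by positivity)]
  simpa only [inverseSquare_rpow _ h0] using hInt.lintegral_lt_top

lemma lintegral_compl_ball_inverseSquare_rpow_lt_top {s : ℝ} (hs : 3 / 2 < s) :
    ∫⁻ x in (ball 0 1)ᶜ, inverseSquare x ^ s < ⊤ := by
  have hInt : Integrable fun x : R3 => 2 ^ (2 * s) * (1 + ‖x‖) ^ (-(2 * s)) :=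
    (integrable_one_add_norm (by
      rw [finrank_euclideanSpace_fin]; push_cast; linarith)).const_mul _
  refine (setLIntegral_mono' measurableSet_ball.compl fun x hx => ?_).trans_lt
    ((setLIntegral_le_lintegral _ _).trans_lt hInt.lintegral_lt_top)
  have hx1 : 1 ≤ ‖x‖ := by simpa using hx
  rw [inverseSquare_rpow x (by linarith)]
  refine ENNReal.ofReal_le_ofReal ?_
  calc ‖x‖ ^ (-(2 * s)) ≤ ((1 + ‖x‖) / 2) ^ (-(2 * s)) :=
        Real.rpow_le_rpow_of_nonpos (by positivity) (by linarith) (by linarith)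
    _ = 2 ^ (2 * s) * (1 + ‖x‖) ^ (-(2 * s)) := by
        rw [Real.div_rpow (by positivity) zero_le_two, Real.rpow_neg zero_le_two, div_inv_eq_mul,
          mul_comm]

lemma lintegral_indicator_inverseSquare_lconvolution_rpow_lt_top {w : R3 → ℝ≥0∞}
    (hw : Measurable w) {p q r : ℝ} (hp : 0 < p) (hp' : p < 3 / 2) (hq : 0 < q)
    (hpr : p ≤ r) (hqr : q ≤ r) (h : p⁻¹ + q⁻¹ = 1 + r⁻¹) (hwq : ∫⁻ x, w x ^ q < ⊤) :
    ∫⁻ x, ((ball 0 1).indicator inverseSquare ⋆ₗ w) x ^ r < ⊤ := by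
  refine (lintegral_lconvolution_rpow_le (measurable_inverseSquare.indicator measurableSet_ball)
    hw hp hq (hp.trans_le hpr) hpr hqr h).trans_lt (ENNReal.mul_lt_top ?_ ?_)
  · rw [lintegral_indicator_rpow measurableSet_ball _ hp]
    have hr : 0 ≤ r / p := div_nonneg (hp.le.trans hpr) hp.le
    exact ENNReal.rpow_lt_top_of_nonneg hr
      (lintegral_ball_inverseSquare_rpow_lt_top hp.le hp').ne
  · exact ENNReal.rpow_lt_top_of_nonneg (div_nonneg (hp.le.trans hpr) hq.le) hwq.ne

lemma enorm_cutKernel_convolution_le {b : ℝ} (hb : 0 < b) (i : Fin 3) {g : R3 → ℝ}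
    {w : R3 → ℝ≥0∞} (hgw : ∀ x, ‖g x‖ₑ ≤ w x) (x : R3) :
    ‖(cutKernel b i ⋆ g) x‖ₑ
      ≤ ENNReal.ofReal (2 * (∫ y, unitBump y)⁻¹) * (inverseSquare ⋆ₗ w) x := by
  have hc : 0 ≤ 2 * (∫ y, unitBump y)⁻¹ :=
    mul_nonneg zero_le_two (inv_nonneg.2 integral_unitBump_pos.le)
  calc ‖(cutKernel b i ⋆ g) x‖ₑ
      ≤ ∫⁻ t, ‖cutKernel b i t * g (x - t)‖ₑ := enorm_integral_le_lintegral_enorm _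
    _ ≤ ∫⁻ t, ENNReal.ofReal (2 * (∫ y, unitBump y)⁻¹) * (inverseSquare t * w (-t + x)) := by
        refine lintegral_mono fun t => ?_
        rw [enorm_mul, ← mul_assoc, neg_add_eq_sub, inverseSquare, ← ENNReal.ofReal_mul hc,
          Real.enorm_eq_ofReal_abs]
        gcongr
        · exact abs_cutKernel_le hb i t
        · exact hgw _
    _ = _ := lintegral_const_mul' _ _ ENNReal.ofReal_ne_top

lemma hasDominatedPotentials_of_memLp {U : Fin 3 → R3 → ℝ} (hU : ∀ i, ContDiff ℝ ∞ (U i))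
    (hdiv : ∀ x, ∑ j, pd (U j) j x = 0) {p : ℝ} (hp : 1 < p)
    (hUp : ∀ i, MemLp (U i) (ENNReal.ofReal p)) {a : R3 → ℝ≥0∞}
    (ha : ∀ i j x, ∀ b, 1 ≤ b → ‖(cutKernel b i ⋆ U j) x‖ₑ ≤ a x) :
    HasDominatedPotentials U fun x => 2 * a x := by
  have hscale (n : ℕ) : (1 : ℝ) ≤ n + 1 := by simp
  have htop : Tendsto (fun n : ℕ => (n : ℝ) + 1) atTop atTop :=
    tendsto_atTop_add_const_right _ _ tendsto_natCast_atTop_atTop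
  refine ⟨fun n i => cutApprox (n + 1) (U i),
    fun n i j x => (cutKernel (n + 1) i ⋆ U j) x - (cutKernel (n + 1) j ⋆ U i) x,
    fun n => isPotential_convolution (contDiff_cutKernel _)
      (hasCompactSupport_cutKernel (hscale n)) (pd_cutKernel_comm _) hU hdiv,
    fun i M => ?_, fun i x => ?_, fun n i j x => ?_⟩
  · obtain ⟨B, hB⟩ := exists_abs_cutApprox_le (hU i).continuous hp (hUp i) M
    exact ⟨B, fun n x hx => hB _ (hscale n) x hx⟩
  · exact (tendsto_cutApprox (hU i).continuous hp (hUp i) x).comp htop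
  · exact (enorm_sub_le.trans (add_le_add (ha i j x _ (hscale n)) (ha j i x _ (hscale n)))).trans_eq
      (two_mul _).symm

lemma lintegral_indicator_inverseSquare_lconvolution_big_rpow_lt_top {w : R3 → ℝ≥0∞}
    (hw : Measurable w) {p : ℝ} (hp : 3 / 2 < p) (hwp : ∫⁻ x, w x ^ p < ⊤) :
    ∫⁻ x, ((ball 0 1).indicator inverseSquare ⋆ₗ big w) x ^ (2 : ℝ) < ⊤ ∧
      ∫⁻ x, ((ball 0 1).indicator inverseSquare ⋆ₗ big w) x ^ (2 * p) < ⊤ := by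
  have hbig (s : ℝ) (h0 : 0 < s) (hs : s ≤ p) : ∫⁻ x, big w x ^ s < ⊤ :=
    (lintegral_mono fun x => big_rpow_le w h0 hs x).trans_lt hwp
  have hden : 0 < 2 * p - 1 := by linarith
  constructor
  · exact lintegral_indicator_inverseSquare_lconvolution_rpow_lt_top (measurable_big hw)
      (p := 4 / 3) (q := 4 / 3) (by norm_num) (by norm_num) (by norm_num) (by norm_num)
      (by norm_num) (by norm_num) (hbig _ (by norm_num) (by linarith))
  · refine lintegral_indicator_inverseSquare_lconvolution_rpow_lt_top (measurable_big hw)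
      (p := 2 * p / (2 * p - 1)) (q := p) (by positivity) ?_ (by linarith) ?_ (by linarith) ?_
      (hbig p (by linarith) le_rfl)
    · rw [div_lt_iff₀ hden]; linarith
    · rw [div_le_iff₀ hden]; nlinarith
    · have hp0 : p ≠ 0 := by linarith
      field_simp
      ring

lemma lintegral_const_mul_rpow_lt_top {α : Type*} [MeasurableSpace α] {μ : Measure α}
    {f : α → ℝ≥0∞} {c : ℝ≥0∞} (hc : c ≠ ⊤) {s : ℝ} (hs : 0 ≤ s) (hf : ∫⁻ x, f x ^ s ∂μ < ⊤) :
    ∫⁻ x, (c * f x) ^ s ∂μ < ⊤ := by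
  have hcs : c ^ s < ⊤ := ENNReal.rpow_lt_top_of_nonneg hs hc
  simp only [ENNReal.mul_rpow_of_nonneg _ _ hs]
  rw [lintegral_const_mul' _ _ hcs.ne]
  exact ENNReal.mul_lt_top hcs hf

theorem exists_hasDominatedPotentials {U : Fin 3 → R3 → ℝ} (hU : ∀ i, ContDiff ℝ ∞ (U i))
    (hdiv : ∀ x, ∑ j, pd (U j) j x = 0) {w : R3 → ℝ≥0∞} (hw : Measurable w)
    (hUw : ∀ i x, ‖U i x‖ₑ ≤ w x) {p : ℝ} (hp₁ : 3 / 2 < p) (hp₂ : p < 3)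
    (hwp : ∫⁻ x, w x ^ p < ⊤) :
    ∃ (Z : ℝ≥0∞) (A : R3 → ℝ≥0∞), Z ≠ ⊤ ∧ Measurable A ∧ ∫⁻ x, A x ^ (2 : ℝ) < ⊤ ∧
      ∫⁻ x, A x ^ (2 * p) < ⊤ ∧ HasDominatedPotentials U fun x => Z + A x := by
  have hUp (i : Fin 3) : MemLp (U i) (ENNReal.ofReal p) := by
    refine ⟨(hU i).continuous.aestronglyMeasurable, ?_⟩
    rw [eLpNorm_lt_top_iff_lintegral_rpow_enorm_lt_top (by simp; linarith) ENNReal.ofReal_ne_top,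
      ENNReal.toReal_ofReal (by linarith)]
    refine (lintegral_mono fun x => ?_).trans_lt hwp
    exact ENNReal.rpow_le_rpow (hUw i x) (by linarith)
  have hpq : (p / (p - 1)).HolderConjugate p :=
    (Real.HolderConjugate.conjExponent (by linarith)).symm
  have hpq' : 3 / 2 < p / (p - 1) := by rw [lt_div_iff₀ (by linarith)]; linarith
  have hnear := lintegral_ball_inverseSquare_rpow_lt_top zero_le_one (by norm_num : (1 : ℝ) < _)
  have hfar := lintegral_compl_ball_inverseSquare_rpow_lt_top hpq'
  obtain ⟨hA2, hA2p⟩ := lintegral_indicator_inverseSquare_lconvolution_big_rpow_lt_top hw hp₁ hwp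
  simp only [ENNReal.rpow_one] at hnear
  have hA : Measurable ((ball 0 1).indicator inverseSquare ⋆ₗ big w) :=
    measurable_lconvolution volume
      (measurable_inverseSquare.indicator measurableSet_ball) (measurable_big hw)
  set c := 2 * ENNReal.ofReal (2 * (∫ y, unitBump y)⁻¹) with hc_def
  have hc : c ≠ ⊤ := ENNReal.mul_ne_top (by simp) ENNReal.ofReal_ne_top
  refine ⟨_, fun x => c * ((ball 0 1).indicator inverseSquare ⋆ₗ big w) x, ENNReal.mul_ne_top hc
    (ENNReal.add_lt_top.2 ⟨ENNReal.add_lt_top.2 ⟨hnear, hfar⟩, hwp⟩).ne, by fun_prop,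
    lintegral_const_mul_rpow_lt_top hc zero_le_two hA2,
    lintegral_const_mul_rpow_lt_top hc (by linarith) hA2p, ?_⟩
  simp only [← mul_add, hc_def, mul_assoc]
  refine hasDominatedPotentials_of_memLp hU hdiv (by linarith) hUp fun i j x b hb => ?_
  refine (enorm_cutKernel_convolution_le (by linarith) i (hUw j) x).trans ?_
  gcongr
  exact lconvolution_le_add_indicator_lconvolution_big measurable_inverseSquare hw
    measurableSet_ball hpq x

end Domination

/-! ### Powers of a cutoff function -/

section Cutoff

variable {f h : R3 → ℝ}

lemma pd_eventuallyEq_zero {x : R3} {c : ℝ} (hf : f =ᶠ[𝓝 x] fun _ => c) (j : Fin 3) :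
    pd f j =ᶠ[𝓝 x] fun _ => 0 := by
  filter_upwards [hf.fderiv (𝕜 := ℝ)] with y hy
  simp [pd, hy]

/-- The factor left over when `f ^ k` is split off from `∂ⱼ (f ^ (k + 1) * h)`. -/
def pdCofactor (f : R3 → ℝ) (k : ℕ) (h : R3 → ℝ) (j : Fin 3) (x : R3) : ℝ :=
  f x * pd h j x + (k + 1) * pd f j x * h x

@[fun_prop]
lemma contDiff_pdCofactor (hf : ContDiff ℝ ∞ f) (k : ℕ) (hh : ContDiff ℝ ∞ h) (j : Fin 3) :
    ContDiff ℝ ∞ (pdCofactor f k h j) := by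
  unfold pdCofactor; fun_prop

lemma pd_pow_succ_mul (hf : ContDiff ℝ ∞ f) (k : ℕ) (hh : ContDiff ℝ ∞ h) (j : Fin 3) :
    pd (fun x => f x ^ (k + 1) * h x) j = fun x => f x ^ k * pdCofactor f k h j x := by
  have hpow (x : R3) : pd (fun x => f x ^ (k + 1)) j x = (k + 1) * f x ^ k * pd f j x := by
    simp [pd, fderiv_fun_pow _ (hf.differentiable (by simp) x)]
  funext x
  rw [pd_mul (by fun_prop) hh, hpow, pdCofactor]
  ring

lemma exists_norm_pow_mul_le {ι : Type*} [Finite ι] {h : ι → R3 → ℝ} (hf0 : ∀ x, 0 ≤ f x)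
    (hfc : HasCompactSupport f) (hh : ∀ i, Continuous (h i)) (k : ℕ) :
    ∃ c, 0 ≤ c ∧ ∀ i x, ‖f x ^ (k + 1) * h i x‖ ≤ c * f x ^ (k + 1) := by
  choose B hB using fun i => hfc.isCompact.exists_bound_of_continuousOn (hh i).continuousOn
  obtain ⟨c, hc⟩ := (Set.finite_range B).bddAbove
  refine ⟨max c 0, le_max_right _ _, fun i x => ?_⟩
  rw [norm_mul, Real.norm_of_nonneg (pow_nonneg (hf0 x) _), mul_comm]
  by_cases hx : x ∈ tsupport f
  · have hi : B i ≤ c := hc ⟨i, rfl⟩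
    gcongr
    · exact pow_nonneg (hf0 x) _
    · exact ((hB i x hx).trans hi).trans (le_max_left _ _)
  · simp [image_eq_zero_of_notMem_tsupport hx]

/-- The derivatives of `f ^ m` up to order three are controlled by the next lower powers of `f`,
each derivative costing a factor `r`. -/
structure HasPowerBounds (f : R3 → ℝ) (m : ℕ) (c r : ℝ) : Prop where
  norm_pd_le : ∀ j x, ‖pd (fun y => f y ^ m) j x‖ ≤ c * r * f x ^ (m - 1)
  norm_pd_pd_le : ∀ j k x, ‖pd (pd (fun y => f y ^ m) j) k x‖ ≤ c * r ^ 2 * f x ^ (m - 2)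
  norm_pd_pd_pd_le : ∀ j k l x,
    ‖pd (pd (pd (fun y => f y ^ m) j) k) l x‖ ≤ c * r ^ 3 * f x ^ (m - 3)

lemma exists_hasPowerBounds (hf : ContDiff ℝ ∞ f) (hf0 : ∀ x, 0 ≤ f x)
    (hfc : HasCompactSupport f) {m : ℕ} (hm : 3 < m) :
    ∃ c, 0 ≤ c ∧ HasPowerBounds f m c 1 := by
  obtain ⟨n, rfl⟩ := Nat.exists_eq_add_of_lt hm
  rw [show 3 + n + 1 = n + 4 by ring]
  let h₁ (j : Fin 3) := pdCofactor f (n + 3) (fun _ => 1) j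
  let h₂ (j k : Fin 3) := pdCofactor f (n + 2) (h₁ j) k
  let h₃ (j k l : Fin 3) := pdCofactor f (n + 1) (h₂ j k) l
  have hh₁ (j : Fin 3) : ContDiff ℝ ∞ (h₁ j) := by fun_prop
  have hh₂ (j k : Fin 3) : ContDiff ℝ ∞ (h₂ j k) := by fun_prop
  have hh₃ (j k l : Fin 3) : ContDiff ℝ ∞ (h₃ j k l) := by fun_prop
  have hpd₁ (j : Fin 3) : pd (fun x => f x ^ (n + 4)) j = fun x => f x ^ (n + 3) * h₁ j x := by
    simpa only [mul_one] using pd_pow_succ_mul hf (n + 3) (h := fun _ => 1) contDiff_const j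
  have hpd₂ (j k : Fin 3) : pd (pd (fun x => f x ^ (n + 4)) j) k =
      fun x => f x ^ (n + 2) * h₂ j k x := by
    rw [hpd₁, pd_pow_succ_mul hf (n + 2) (hh₁ j)]
  have hpd₃ (j k l : Fin 3) : pd (pd (pd (fun x => f x ^ (n + 4)) j) k) l =
      fun x => f x ^ (n + 1) * h₃ j k l x := by
    rw [hpd₂, pd_pow_succ_mul hf (n + 1) (hh₂ j k)]
  obtain ⟨c₁, hc₁, hb₁⟩ := exists_norm_pow_mul_le (h := h₁) hf0 hfc
    (fun j => (hh₁ j).continuous) (n + 2)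
  obtain ⟨c₂, hc₂, hb₂⟩ := exists_norm_pow_mul_le (h := fun i : Fin 3 × Fin 3 => h₂ i.1 i.2)
    hf0 hfc (fun i => (hh₂ _ _).continuous) (n + 1)
  obtain ⟨c₃, hc₃, hb₃⟩ := exists_norm_pow_mul_le
    (h := fun i : Fin 3 × Fin 3 × Fin 3 => h₃ i.1 i.2.1 i.2.2)
    hf0 hfc (fun i => (hh₃ _ _ _).continuous) n
  have hpow (k : ℕ) (x : R3) : 0 ≤ f x ^ k := pow_nonneg (hf0 x) k
  refine ⟨c₁ + c₂ + c₃, by positivity, fun j x => ?_, fun j k x => ?_, fun j k l x => ?_⟩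
  · rw [hpd₁, mul_one]
    exact (hb₁ j x).trans (mul_le_mul_of_nonneg_right (by linarith) (hpow _ x))
  · rw [hpd₂, one_pow, mul_one]
    exact (hb₂ (j, k) x).trans (mul_le_mul_of_nonneg_right (by linarith) (hpow _ x))
  · rw [hpd₃, one_pow, mul_one]
    exact (hb₃ (j, k, l) x).trans (mul_le_mul_of_nonneg_right (by linarith) (hpow _ x))

lemma HasPowerBounds.dilate {m : ℕ} {c b : ℝ} (hf : ContDiff ℝ ∞ f) (h : HasPowerBounds f m c 1)
    (hb : 0 ≤ b) : HasPowerBounds (dilate b 1 f) m c b := by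
  have hpow : (fun y => _root_.dilate b 1 f y ^ m) = _root_.dilate b 1 fun y => f y ^ m := by
    funext y
    simp [_root_.dilate]
  have hpd₁ (j : Fin 3) := pd_dilate b 1 (hf.pow m) j
  have hpd₂ (j k : Fin 3) := pd_dilate b (1 * b) (contDiff_pd (hf.pow m) j) k
  have hpd₃ (j k l : Fin 3) :=
    pd_dilate b (1 * b * b) (contDiff_pd (contDiff_pd (hf.pow m) j) k) l
  refine ⟨fun j x => ?_, fun j k x => ?_, fun j k l x => ?_⟩
  · rw [hpow, hpd₁]
    simp only [_root_.dilate, norm_mul, Real.norm_of_nonneg hb, one_mul]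
    linarith [mul_le_mul_of_nonneg_left (h.norm_pd_le j (b • x)) hb]
  · rw [hpow, hpd₁, hpd₂]
    simp only [_root_.dilate, norm_mul, Real.norm_of_nonneg hb, one_mul]
    linarith [mul_le_mul_of_nonneg_left (h.norm_pd_pd_le j k (b • x)) (mul_nonneg hb hb)]
  · rw [hpow, hpd₁, hpd₂, hpd₃]
    simp only [_root_.dilate, norm_mul, Real.norm_of_nonneg hb, one_mul]
    linarith [mul_le_mul_of_nonneg_left (h.norm_pd_pd_pd_le j k l (b • x))
      (mul_nonneg (mul_nonneg hb hb) hb)]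

/-- A smooth cutoff, `1` on the unit ball and supported in the ball of radius `2`. -/
def unitCutoff : ContDiffBump (0 : R3) := ⟨1, 2, one_pos, one_lt_two⟩

/-- The cutoff at scale `R`: `1` on the ball of radius `R`, supported in the ball of radius
`2 * R`. -/
def cutoff (R : ℝ) : R3 → ℝ := dilate R⁻¹ 1 unitCutoff

@[fun_prop]
lemma contDiff_cutoff (R : ℝ) : ContDiff ℝ ∞ (cutoff R) :=
  contDiff_dilate _ _ unitCutoff.contDiff

lemma cutoff_nonneg (R : ℝ) (x : R3) : 0 ≤ cutoff R x := by
  simpa only [cutoff, dilate, one_mul] using unitCutoff.nonneg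

lemma cutoff_le_one (R : ℝ) (x : R3) : cutoff R x ≤ 1 := by
  simpa only [cutoff, dilate, one_mul] using unitCutoff.le_one

variable {R : ℝ} {x : R3}

lemma cutoff_of_norm_le (hR : 0 < R) (hx : ‖x‖ ≤ R) : cutoff R x = 1 := by
  rw [cutoff, dilate, one_mul]
  refine unitCutoff.one_of_mem_closedBall ?_
  rw [mem_closedBall_zero_iff, norm_smul, norm_inv, Real.norm_of_nonneg hR.le]
  exact (inv_mul_le_one₀ hR).2 hx

lemma cutoff_of_le_norm (hR : 0 < R) (hx : 2 * R ≤ ‖x‖) : cutoff R x = 0 := by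
  rw [cutoff, dilate, one_mul]
  refine unitCutoff.zero_of_le_dist ?_
  rw [dist_zero_right, norm_smul, norm_inv, Real.norm_of_nonneg hR.le]
  exact (le_inv_mul_iff₀' hR).2 hx

lemma hasCompactSupport_cutoff (hR : 0 < R) : HasCompactSupport (cutoff R) :=
  HasCompactSupport.intro (isCompact_closedBall 0 (2 * R)) fun x hx =>
    cutoff_of_le_norm hR (by simpa using (not_le.1 fun h => hx (by simpa using h)).le)

lemma hasCompactSupport_cutoff_pow (hR : 0 < R) {m : ℕ} (hm : m ≠ 0) :
    HasCompactSupport fun x => cutoff R x ^ m :=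
  (hasCompactSupport_cutoff hR).comp_left (g := (· ^ m)) (zero_pow hm)

/-- The `m`-th power of the cutoff at scale `R`, as a weight with values in `[0, 1]`. -/
def cutoffWeight (m : ℕ) (R : ℝ) (x : R3) : ℝ≥0∞ := ENNReal.ofReal (cutoff R x ^ m)

@[fun_prop]
lemma measurable_cutoffWeight (m : ℕ) (R : ℝ) : Measurable (cutoffWeight m R) :=
  ((contDiff_cutoff R).continuous.pow m).measurable.ennreal_ofReal

lemma cutoffWeight_le_one (m : ℕ) (R : ℝ) (x : R3) : cutoffWeight m R x ≤ 1 :=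
  ENNReal.ofReal_le_one.2 (pow_le_one₀ (cutoff_nonneg R x) (cutoff_le_one R x))

lemma cutoffWeight_rpow (m : ℕ) (R : ℝ) (x : R3) (s : ℝ) :
    cutoffWeight m R x ^ s = ENNReal.ofReal (cutoff R x) ^ (m * s) := by
  rw [cutoffWeight, ENNReal.ofReal_pow (cutoff_nonneg R x), ENNReal.rpow_natCast_mul]

lemma enorm_cutoff_pow_mul (m : ℕ) (R : ℝ) (x : R3) (y : ℝ) :
    ‖cutoff R x ^ m * y‖ₑ = cutoffWeight m R x * ‖y‖ₑ := by
  rw [enorm_mul, Real.enorm_of_nonneg (pow_nonneg (cutoff_nonneg R x) m), cutoffWeight]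

lemma cutoffWeight_of_notMem_closedBall (hR : 0 < R) {m : ℕ} (hm : m ≠ 0)
    (hx : x ∉ closedBall 0 (2 * R)) : cutoffWeight m R x = 0 := by
  rw [mem_closedBall_zero_iff, not_le] at hx
  rw [cutoffWeight, cutoff_of_le_norm hR hx.le, zero_pow hm, ENNReal.ofReal_zero]

lemma exists_hasPowerBounds_cutoff {m : ℕ} (hm : 3 < m) :
    ∃ c, 0 ≤ c ∧ ∀ R, 0 < R → HasPowerBounds (cutoff R) m c R⁻¹ := by
  obtain ⟨c, hc, h⟩ := exists_hasPowerBounds unitCutoff.contDiff (fun _ => unitCutoff.nonneg)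
    unitCutoff.hasCompactSupport hm
  exact ⟨c, hc, fun R hR => h.dilate unitCutoff.contDiff (inv_nonneg.2 hR.le)⟩

/-- The closed annulus between the spheres of radius `R` and `2 * R`. -/
def annulus (R : ℝ) : Set R3 := closedBall 0 (2 * R) \ ball 0 R

lemma measurableSet_annulus (R : ℝ) : MeasurableSet (annulus R) :=
  measurableSet_closedBall.diff measurableSet_ball

lemma exists_cutoff_eventuallyEq (hR : 0 < R) (hx : x ∉ annulus R) :
    ∃ c, cutoff R =ᶠ[𝓝 x] fun _ => c := by
  rcases lt_or_ge ‖x‖ R with h | h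
  · refine ⟨1, ?_⟩
    filter_upwards [isOpen_ball.mem_nhds (mem_ball_zero_iff.2 h)] with y hy
    exact cutoff_of_norm_le hR (mem_ball_zero_iff.1 hy).le
  · refine ⟨0, ?_⟩
    have hx' : x ∈ (closedBall (0 : R3) (2 * R))ᶜ := fun hball => hx ⟨hball, by simpa using h⟩
    filter_upwards [isClosed_closedBall.isOpen_compl.mem_nhds hx'] with y hy
    exact cutoff_of_le_norm hR (by simpa using (not_le.1 fun h => hy (by simpa using h)).le)

end Cutoff

/-! ### Absorbing the fluxes into the dissipation -/

section Flux

lemma norm_le_sqrt_sum_sq {ι : Type*} [Fintype ι] (f : ι → ℝ) (i : ι) : ‖f i‖ ≤ √(∑ j, f j ^ 2) :=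
  Real.abs_le_sqrt <| Finset.single_le_sum (f := fun j => f j ^ 2) (fun _ _ => sq_nonneg _)
    (Finset.mem_univ i)

lemma norm_sum_le_card_mul {ι : Type*} [Fintype ι] {f : ι → ℝ} {B : ℝ} (h : ∀ i, ‖f i‖ ≤ B) :
    ‖∑ i, f i‖ ≤ Fintype.card ι * B := by
  simpa using norm_sum_le_of_le Finset.univ fun i _ => h i

/-- The density `|u|² + |v|² + θ²`. -/
def energyDensity (U V : Fin 3 → R3 → ℝ) (θ : R3 → ℝ) (x : R3) : ℝ :=
  ∑ a, component U V θ a x ^ 2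

/-- The size of the terms of `localFlux` without derivatives of the unknowns: transport of the
energy by `u`, and the coupling of `θ` with `v`. -/
def transportDensity (U V : Fin 3 → R3 → ℝ) (θ : R3 → ℝ) (x : R3) : ℝ :=
  (∑ i, ‖U i x‖) * energyDensity U V θ x + ‖θ x‖ * ∑ i, ‖V i x‖

variable {U V : Fin 3 → R3 → ℝ} {θ P : R3 → ℝ} {x : R3} {d₁ d₂ d₃ : ℝ}

lemma energyDensity_nonneg (U V : Fin 3 → R3 → ℝ) (θ : R3 → ℝ) (x : R3) :
    0 ≤ energyDensity U V θ x := by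
  unfold energyDensity; positivity

lemma transportDensity_nonneg (U V : Fin 3 → R3 → ℝ) (θ : R3 → ℝ) (x : R3) :
    0 ≤ transportDensity U V θ x := by
  have := energyDensity_nonneg U V θ x
  unfold transportDensity; positivity

lemma dissipation_nonneg (U V : Fin 3 → R3 → ℝ) (θ : R3 → ℝ) (x : R3) :
    0 ≤ dissipation U V θ x := by
  unfold dissipation; positivity

lemma norm_component_le (U V : Fin 3 → R3 → ℝ) (θ : R3 → ℝ) (a : Fin 3 ⊕ Fin 3 ⊕ Unit) (x : R3) :
    ‖component U V θ a x‖ ≤ √(energyDensity U V θ x) :=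
  norm_le_sqrt_sum_sq (fun a => component U V θ a x) a

lemma norm_pd_component_le (U V : Fin 3 → R3 → ℝ) (θ : R3 → ℝ) (a : Fin 3 ⊕ Fin 3 ⊕ Unit)
    (k : Fin 3) (x : R3) : ‖pd (component U V θ a) k x‖ ≤ √(dissipation U V θ x) := by
  rw [dissipation, ← Fintype.sum_prod_type']
  exact norm_le_sqrt_sum_sq (fun i : _ × Fin 3 => pd (component U V θ i.1) i.2 x) (a, k)

lemma norm_curlFlux_le (hU : ∀ i, ContDiff ℝ ∞ (U i)) (hP : ContDiff ℝ ∞ P)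
    (h₁ : ∀ j, ‖pd P j x‖ ≤ d₁) (h₂ : ∀ j k, ‖pd (pd P j) k x‖ ≤ d₂) (i : Fin 3) :
    ‖curlFlux U P i x‖
      ≤ 6 * (√(energyDensity U V θ x) * d₂ + √(dissipation U V θ x) * d₁) := by
  have hpd (i j k : Fin 3) : ‖pd (fun y => U i y * pd P j y) k x‖
      ≤ √(energyDensity U V θ x) * d₂ + √(dissipation U V θ x) * d₁ := by
    rw [pd_mul (hU i) (by fun_prop)]
    exact norm_add_le_of_le
      (norm_mul_le_of_le (norm_component_le U V θ (.inl i) x) (h₂ j k))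
      (norm_mul_le_of_le (norm_pd_component_le U V θ (.inl i) k x) (h₁ j))
  refine (norm_sum_le_card_mul fun j => norm_sub_le_of_le (hpd i j j) (hpd j i j)).trans_eq ?_
  simp only [Fintype.card_fin]
  ring

lemma norm_transport_terms_le (h₁ : ∀ j, ‖pd P j x‖ ≤ d₁) :
    ‖(∑ a, 1 / 2 * component U V θ a x ^ 2 * ∑ j, U j x * pd P j x)
        + (∑ i, ∑ j, V j x * V i x * U i x * pd P j x) + θ x * ∑ j, V j x * pd P j x‖
      ≤ 4 * (transportDensity U V θ x * d₁) := by
  set S := energyDensity U V θ x with hS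
  have hV (i : Fin 3) : ‖V i x‖ ≤ √S := norm_component_le U V θ (.inr (.inl i)) x
  have hpair (W : Fin 3 → R3 → ℝ) : ‖∑ j, W j x * pd P j x‖ ≤ (∑ j, ‖W j x‖) * d₁ := by
    rw [Finset.sum_mul]
    exact norm_sum_le_of_le _ fun j _ => norm_mul_le_of_le le_rfl (h₁ j)
  have hkinetic : ‖∑ a, 1 / 2 * component U V θ a x ^ 2 * ∑ j, U j x * pd P j x‖
      ≤ 1 / 2 * S * ((∑ i, ‖U i x‖) * d₁) := by
    rw [← Finset.sum_mul, ← Finset.mul_sum, ← energyDensity, ← hS]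
    refine norm_mul_le_of_le ?_ (hpair U)
    rw [Real.norm_of_nonneg (mul_nonneg one_half_pos.le (energyDensity_nonneg U V θ x))]
  have hstress : ‖∑ i, ∑ j, V j x * V i x * U i x * pd P j x‖
      ≤ 3 * (S * ((∑ i, ‖U i x‖) * d₁)) := by
    calc _ ≤ ∑ i, 3 * (√S * √S * ‖U i x‖ * d₁) := norm_sum_le_of_le _ fun i _ => by
          simpa using norm_sum_le_card_mul fun j => norm_mul_le_of_le
            (norm_mul_le_of_le (norm_mul_le_of_le (hV j) (hV i)) le_rfl) (h₁ j)
      _ = _ := by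
          rw [Real.mul_self_sqrt (energyDensity_nonneg U V θ x), ← Finset.mul_sum,
            ← Finset.sum_mul, ← Finset.mul_sum, mul_assoc]
  have hd₁ : 0 ≤ d₁ := (norm_nonneg _).trans (h₁ 0)
  have hS0 : 0 ≤ S * ((∑ i, ‖U i x‖) * d₁) := by
    have := energyDensity_nonneg U V θ x
    positivity
  have hθV : 0 ≤ ‖θ x‖ * ((∑ i, ‖V i x‖) * d₁) := by positivity
  refine (norm_add_le_of_le (norm_add_le_of_le hkinetic hstress)
    (norm_mul_le_of_le le_rfl (hpair V))).trans ?_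
  rw [transportDensity, ← hS]
  linarith

lemma norm_localFlux_le (hU : ∀ i, ContDiff ℝ ∞ (U i)) (hP : ContDiff ℝ ∞ P)
    (h₁ : ∀ j, ‖pd P j x‖ ≤ d₁) (h₂ : ∀ j k, ‖pd (pd P j) k x‖ ≤ d₂) :
    ‖localFlux U V θ P x‖ ≤
      39 * (√(energyDensity U V θ x) * √(dissipation U V θ x) * d₁)
        + 4 * (transportDensity U V θ x * d₁) + 18 * (energyDensity U V θ x * d₂) := by
  set t := √(energyDensity U V θ x)
  set g := √(dissipation U V θ x)
  have hdiffusive : ‖∑ a, ∑ k, component U V θ a x * pd (component U V θ a) k x * pd P k x‖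
      ≤ 21 * (t * g * d₁) := by
    refine (norm_sum_le_card_mul fun a => norm_sum_le_card_mul fun k => norm_mul_le_of_le
      (norm_mul_le_of_le (norm_component_le U V θ a x) (norm_pd_component_le U V θ a k x))
      (h₁ k)).trans_eq ?_
    simp only [Fintype.card_sum, Fintype.card_fin, Fintype.card_unit]
    push_cast
    ring
  have hcurl : ‖∑ i, curlFlux U P i x * U i x‖ ≤ 18 * ((t * d₂ + g * d₁) * t) := by
    refine (norm_sum_le_card_mul fun i => norm_mul_le_of_le
      (norm_curlFlux_le (V := V) (θ := θ) hU hP h₁ h₂ i)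
      (norm_component_le U V θ (.inl i) x)).trans_eq ?_
    simp only [Fintype.card_fin]
    ring
  have htt : t * t = energyDensity U V θ x := Real.mul_self_sqrt (energyDensity_nonneg U V θ x)
  rw [localFlux, sub_sub, sub_sub, ← add_assoc]
  refine (norm_add_le_of_le (norm_sub_le_of_le hdiffusive (norm_transport_terms_le h₁))
    hcurl).trans_eq ?_
  rw [← htt]
  ring

lemma norm_potFlux_le (hV : ∀ i, ContDiff ℝ ∞ (V i)) (h₁ : ∀ j, ‖pd P j x‖ ≤ d₁)
    (h₂ : ∀ j k, ‖pd (pd P j) k x‖ ≤ d₂) (h₃ : ∀ j k l, ‖pd (pd (pd P j) k) l x‖ ≤ d₃)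
    (i j : Fin 3) :
    ‖potFlux U V P i j x‖ ≤
      3 * (√(energyDensity U V θ x) * d₃) + 6 * (√(dissipation U V θ x) * d₂)
        + 9 * (√(energyDensity U V θ x) * √(dissipation U V θ x) * d₁) := by
  have hUx (i : Fin 3) := norm_component_le U V θ (.inl i) x
  have hVx (i : Fin 3) := norm_component_le U V θ (.inr (.inl i)) x
  have hdU (i k : Fin 3) := norm_pd_component_le U V θ (.inl i) k x
  have hdV (i k : Fin 3) := norm_pd_component_le U V θ (.inr (.inl i)) k x
  have hlap : ‖lap (pd P j) x‖ ≤ _ := norm_sum_le_card_mul fun k => h₃ j k k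
  have hgrad := norm_sum_le_card_mul fun k => norm_mul_le_of_le (hdU i k) (h₂ j k)
  have hadvect : ‖advect U (U i) x‖ ≤ _ :=
    norm_sum_le_card_mul fun k => norm_mul_le_of_le (hUx k) (hdU i k)
  have hstress : ‖∑ k, pd (fun y => V k y * V i y) k x‖ ≤ _ := norm_sum_le_card_mul fun k => by
    rw [pd_mul (hV k) (hV i)]
    exact norm_add_le_of_le (norm_mul_le_of_le (hVx k) (hdV i k))
      (norm_mul_le_of_le (hdV k k) (hVx i))
  refine (norm_add_le_of_le (norm_add_le_of_le (norm_mul_le_of_le (hUx i) hlap)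
    (norm_mul_le_of_le Real.norm_two.le hgrad))
    (norm_mul_le_of_le (norm_add_le_of_le hadvect hstress) (h₁ j))).trans_eq ?_
  simp only [Fintype.card_fin]
  push_cast
  ring

lemma young_absorption {X Y₁ Y₂ Y₃ c : ℝ} (hc : 0 ≤ c) :
    39 * (c * (X * Y₁)) + 54 * (c * (X * Y₂)) + 81 * (c * (X * Y₃)) + 18 * (c * Y₁ ^ 2)
        + 27 * (c * (Y₁ * Y₂))
      ≤ 1 / 2 * X ^ 2 + 10000 * (c + c ^ 2) * (Y₁ ^ 2 + Y₂ ^ 2 + Y₃ ^ 2) := by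
  have hcY (Y : ℝ) : 0 ≤ c * Y ^ 2 := by positivity
  have hccY (Y : ℝ) : 0 ≤ c ^ 2 * Y ^ 2 := by positivity
  nlinarith only [sq_nonneg (X / 3 - 39 * c * Y₁), sq_nonneg (X / 3 - 54 * c * Y₂),
    sq_nonneg (X / 3 - 81 * c * Y₃), mul_nonneg hc (sq_nonneg (Y₁ - Y₂)), hcY Y₁, hcY Y₂, hcY Y₃,
    hccY Y₁, hccY Y₂, hccY Y₃]

lemma norm_flux_le (hU : ∀ i, ContDiff ℝ ∞ (U i)) (hV : ∀ i, ContDiff ℝ ∞ (V i))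
    (hP : ContDiff ℝ ∞ P) {b c e r s : ℝ} (hb : 0 ≤ b) (hc : 0 ≤ c) (hr : 0 ≤ r) (he : 0 ≤ e)
    (hes : e ≤ s) (h₁ : ∀ j, ‖pd P j x‖ ≤ c * r * (e * s))
    (h₂ : ∀ j k, ‖pd (pd P j) k x‖ ≤ c * r ^ 2 * s ^ 2)
    (h₂' : ∀ j k, ‖pd (pd P j) k x‖ ≤ c * r ^ 2 * e)
    (h₃ : ∀ j k l, ‖pd (pd (pd P j) k) l x‖ ≤ c * r ^ 3 * s) :
    ‖localFlux U V θ P x‖ + ∑ i, ∑ j, ‖potFlux U V P i j x‖ * b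
      ≤ 1 / 2 * (e ^ 2 * dissipation U V θ x) + 10000 * (c + c ^ 2) *
        (r ^ 2 * s ^ 2 * energyDensity U V θ x + r * s ^ 2 * transportDensity U V θ x
          + r ^ 4 * b ^ 2 + r ^ 2 * s ^ 2 * energyDensity U V θ x * b ^ 2) := by
  have hlocal := norm_localFlux_le (V := V) (θ := θ) hU hP h₁ h₂
  have hpot : ∑ i, ∑ j, ‖potFlux U V P i j x‖ * b ≤ _ :=
    Finset.sum_le_card_nsmul _ _ _ fun i _ => Finset.sum_le_card_nsmul _ _ _ fun j _ =>
      mul_le_mul_of_nonneg_right (norm_potFlux_le (θ := θ) hV h₁ h₂' h₃ i j) hb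
  set t := √(energyDensity U V θ x)
  set g := √(dissipation U V θ x)
  have htt : t ^ 2 = energyDensity U V θ x := Real.sq_sqrt (energyDensity_nonneg U V θ x)
  have hgg : g ^ 2 = dissipation U V θ x := Real.sq_sqrt (dissipation_nonneg U V θ x)
  have htransport : 4 * (transportDensity U V θ x * (c * r * (e * s)))
      ≤ 10000 * (c + c ^ 2) * (r * s ^ 2 * transportDensity U V θ x) := by
    have hT := transportDensity_nonneg U V θ x
    have hs : 0 ≤ s := he.trans hes
    calc _ = 4 * c * (r * (e * s) * transportDensity U V θ x) := by ring
      _ ≤ 10000 * (c + c ^ 2) * (r * (s * s) * transportDensity U V θ x) := by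
        gcongr
        · norm_num
        · exact le_add_of_nonneg_right (sq_nonneg c)
      _ = _ := by ring
  have hyoung := young_absorption (X := e * g) (Y₁ := r * s * t) (Y₂ := r ^ 2 * b)
    (Y₃ := r * s * t * b) hc
  simp only [Finset.card_univ, Fintype.card_fin, nsmul_eq_mul, Nat.cast_ofNat] at hpot
  rw [← htt] at hlocal ⊢
  rw [← hgg]
  linarith

lemma flux_eq_zero (hU : ∀ i, ContDiff ℝ ∞ (U i)) (hV : ∀ i, ContDiff ℝ ∞ (V i))
    (hP : ContDiff ℝ ∞ P) {c : ℝ} (h : P =ᶠ[𝓝 x] fun _ => c) :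
    localFlux U V θ P x = 0 ∧ ∀ i j, potFlux U V P i j x = 0 := by
  have h₁ (j : Fin 3) := pd_eventuallyEq_zero h j
  have h₂ (j k : Fin 3) := pd_eventuallyEq_zero (h₁ j) k
  have h₃ (j k l : Fin 3) := pd_eventuallyEq_zero (h₂ j k) l
  have h₁' (j : Fin 3) : ‖pd P j x‖ ≤ 0 := by simp [(h₁ j).self_of_nhds]
  have h₂' (j k : Fin 3) : ‖pd (pd P j) k x‖ ≤ 0 := by simp [(h₂ j k).self_of_nhds]
  have h₃' (j k l : Fin 3) : ‖pd (pd (pd P j) k) l x‖ ≤ 0 := by simp [(h₃ j k l).self_of_nhds]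
  refine ⟨norm_le_zero_iff.1 ?_, fun i j => norm_le_zero_iff.1 ?_⟩
  · simpa using norm_localFlux_le (V := V) (θ := θ) hU hP h₁' h₂'
  · simpa using norm_potFlux_le (θ := θ) hV h₁' h₂' h₃' i j

lemma exists_norm_flux_cutoff_le (N : ℕ) : ∃ K, 0 < K ∧
    ∀ {U V : Fin 3 → R3 → ℝ} {θ : R3 → ℝ}, (∀ i, ContDiff ℝ ∞ (U i)) →
    (∀ i, ContDiff ℝ ∞ (V i)) → ∀ {R : ℝ}, 0 < R → ∀ (x : R3) {b : ℝ}, 0 ≤ b →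
    ‖localFlux U V θ (fun y => cutoff R y ^ (2 * N + 8)) x‖
        + ∑ i, ∑ j, ‖potFlux U V (fun y => cutoff R y ^ (2 * N + 8)) i j x‖ * b
      ≤ 1 / 2 * (cutoff R x ^ (2 * N + 8) * dissipation U V θ x) + K *
        (R⁻¹ ^ 2 * (cutoff R x ^ (N + 3)) ^ 2 * energyDensity U V θ x
          + R⁻¹ * (cutoff R x ^ (N + 3)) ^ 2 * transportDensity U V θ x + R⁻¹ ^ 4 * b ^ 2
          + R⁻¹ ^ 2 * (cutoff R x ^ (N + 3)) ^ 2 * energyDensity U V θ x * b ^ 2) := by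
  obtain ⟨c, hc, hbounds⟩ := exists_hasPowerBounds_cutoff (m := 2 * N + 8) (by lia)
  refine ⟨10000 * (c + c ^ 2) + 1, by positivity, fun {U V θ} hU hV {R} hR x {b} hb => ?_⟩
  have hφ := cutoff_nonneg R x
  have hr : 0 ≤ R⁻¹ := inv_nonneg.2 hR.le
  have hpow {m n : ℕ} (hmn : m ≤ n) : cutoff R x ^ n ≤ cutoff R x ^ m :=
    pow_le_pow_of_le_one hφ (cutoff_le_one R x) hmn
  obtain ⟨h₁, h₂, h₃⟩ := hbounds R hR
  have hflux := norm_flux_le (θ := θ) hU hV (by fun_prop) hb hc hr (pow_nonneg hφ (N + 4))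
    (hpow (Nat.le_succ (N + 3)))
    (fun j => (h₁ j x).trans_eq (by rw [← pow_add]; congr 2; lia))
    (fun j k => (h₂ j k x).trans_eq (by rw [← pow_mul]; congr 2; lia))
    (fun j k => (h₂ j k x).trans <| mul_le_mul_of_nonneg_left (hpow (by lia)) (by positivity))
    (fun j k l => (h₃ j k l x).trans <| mul_le_mul_of_nonneg_left (hpow (by lia)) (by positivity))
  rw [← pow_mul, show (N + 4) * 2 = 2 * N + 8 by ring] at hflux
  refine hflux.trans (add_le_add_right (mul_le_mul_of_nonneg_right (lt_add_one _).le ?_) _)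
  have := energyDensity_nonneg U V θ x
  have := transportDensity_nonneg U V θ x
  positivity

/-- The density, at scale `R`, of what is left of the fluxes once half of the dissipation is
absorbed; `a` dominates the vector potential. -/
def errorDensity (U V : Fin 3 → R3 → ℝ) (θ : R3 → ℝ) (N : ℕ) (R : ℝ) (a : R3 → ℝ≥0∞) (x : R3) :
    ℝ≥0∞ :=
  ENNReal.ofReal R⁻¹ ^ 2 * cutoffWeight (N + 3) R x ^ 2 * ENNReal.ofReal (energyDensity U V θ x)
    + ENNReal.ofReal R⁻¹ * cutoffWeight (N + 3) R x ^ 2 * ENNReal.ofReal (transportDensity U V θ x)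
    + ENNReal.ofReal R⁻¹ ^ 4 * a x ^ 2
    + ENNReal.ofReal R⁻¹ ^ 2 * cutoffWeight (N + 3) R x ^ 2 * ENNReal.ofReal (energyDensity U V θ x)
      * a x ^ 2

lemma exists_enorm_flux_le (N : ℕ) : ∃ K : ℝ≥0∞, K ≠ ⊤ ∧
    ∀ {U V : Fin 3 → R3 → ℝ} {θ : R3 → ℝ}, (∀ i, ContDiff ℝ ∞ (U i)) →
    (∀ i, ContDiff ℝ ∞ (V i)) → ∀ {R : ℝ}, 0 < R → ∀ (a : R3 → ℝ≥0∞) x,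
    ‖localFlux U V θ (fun y => cutoff R y ^ (2 * N + 8)) x‖ₑ
        + ∑ i, ∑ j, ‖potFlux U V (fun y => cutoff R y ^ (2 * N + 8)) i j x‖ₑ * a x
      ≤ 2⁻¹ * ENNReal.ofReal (cutoff R x ^ (2 * N + 8) * dissipation U V θ x)
        + K * (annulus R).indicator (errorDensity U V θ N R a) x := by
  obtain ⟨K, hK, hflux⟩ := exists_norm_flux_cutoff_le N
  refine ⟨ENNReal.ofReal K, ENNReal.ofReal_ne_top, fun {U V θ} hU hV {R} hR a x => ?_⟩
  by_cases hx : x ∈ annulus R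
  swap
  · obtain ⟨k, hk⟩ := exists_cutoff_eventuallyEq hR hx
    have hpow : (fun y => cutoff R y ^ (2 * N + 8)) =ᶠ[𝓝 x] fun _ => k ^ (2 * N + 8) :=
      hk.fun_comp (· ^ (2 * N + 8))
    obtain ⟨hlocal, hpot⟩ := flux_eq_zero (θ := θ) hU hV (by fun_prop) hpow
    simp [hlocal, hpot]
  rcases eq_or_ne (a x) ⊤ with ha | ha
  · simp [errorDensity, ha, hR, hK, Set.indicator_of_mem hx]
  have hφ := cutoff_nonneg R x
  have hE := energyDensity_nonneg U V θ x
  have hT := transportDensity_nonneg U V θ x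
  have hD := dissipation_nonneg U V θ x
  have hreal := ENNReal.ofReal_le_ofReal
    (hflux (θ := θ) hU hV hR x (ENNReal.toReal_nonneg (a := a x)))
  simp (disch := intros; positivity) only [ENNReal.ofReal_add, ENNReal.ofReal_mul,
    ENNReal.ofReal_pow, ENNReal.ofReal_sum_of_nonneg, ofReal_norm, ENNReal.ofReal_toReal ha]
    at hreal
  simp (disch := positivity) only [Set.indicator_of_mem hx, errorDensity, cutoffWeight,
    ENNReal.ofReal_mul, ENNReal.ofReal_pow]
  simpa only [one_div, ENNReal.ofReal_inv_of_pos two_pos, ENNReal.ofReal_ofNat] using hreal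

end Flux

section LocalEnergy

variable {U V : Fin 3 → R3 → ℝ} {π θ : R3 → ℝ} {N : ℕ} {R : ℝ}

/-- The dissipation localized at scale `R`; the exponent of the cutoff leaves room for three
derivatives and for the interpolation of the fields. -/
def localEnergy (U V : Fin 3 → R3 → ℝ) (θ : R3 → ℝ) (N : ℕ) (R : ℝ) : ℝ≥0∞ :=
  ∫⁻ x, ENNReal.ofReal (cutoff R x ^ (2 * N + 8) * dissipation U V θ x)

lemma localEnergy_ne_top (hU : ∀ i, ContDiff ℝ ∞ (U i)) (hV : ∀ i, ContDiff ℝ ∞ (V i))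
    (hθ : ContDiff ℝ ∞ θ) (hR : 0 < R) : localEnergy U V θ N R ≠ ⊤ := by
  have hP : ContDiff ℝ ∞ fun x => cutoff R x ^ (2 * N + 8) := by fun_prop
  have hInt : Integrable fun x => cutoff R x ^ (2 * N + 8) * dissipation U V θ x :=
    (hP.mul (contDiff_dissipation hU hV hθ)).continuous.integrable_of_hasCompactSupport
      (hasCompactSupport_cutoff_pow hR (by lia)).mul_right
  exact hInt.lintegral_lt_top.ne

lemma le_two_mul_of_le_half_add {x y : ℝ≥0∞} (hx : x ≠ ⊤) (h : x ≤ 2⁻¹ * x + y) : x ≤ 2 * y := by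
  have hhalf : 2⁻¹ * x ≤ y := by
    rw [← ENNReal.add_le_add_iff_left (ENNReal.mul_ne_top (ENNReal.inv_ne_top.2 two_ne_zero) hx),
      ← add_mul, ENNReal.inv_two_add_inv_two, one_mul]
    exact h
  calc x = 2 * (2⁻¹ * x) := by
        rw [← mul_assoc, ENNReal.mul_inv_cancel two_ne_zero ENNReal.ofNat_ne_top, one_mul]
    _ ≤ 2 * y := by gcongr

lemma exists_localEnergy_le (hS : IsSmoothSolution U V π θ) (N : ℕ) {a : R3 → ℝ≥0∞}
    (hpot : HasDominatedPotentials U a) :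
    ∃ K : ℝ≥0∞, K ≠ ⊤ ∧ ∀ R, 0 < R →
      localEnergy U V θ N R ≤ K * ∫⁻ x in annulus R, errorDensity U V θ N R a x := by
  have hU := hS.contDiff_left
  have hV := hS.contDiff_right
  have hθ := hS.contDiff_temperature
  obtain ⟨K, hK, hflux⟩ := exists_enorm_flux_le N
  refine ⟨2 * K, ENNReal.mul_ne_top ENNReal.ofNat_ne_top hK, fun R hR => ?_⟩
  have hP : ContDiff ℝ ∞ fun x => cutoff R x ^ (2 * N + 8) := by fun_prop
  rw [mul_assoc]
  refine le_two_mul_of_le_half_add (localEnergy_ne_top hU hV hθ hR) ?_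
  have hmeas : Measurable fun x =>
      ENNReal.ofReal (cutoff R x ^ (2 * N + 8) * dissipation U V θ x) :=
    (hP.mul (contDiff_dissipation hU hV hθ)).continuous.measurable.ennreal_ofReal
  calc localEnergy U V θ N R
      ≤ _ := lintegral_dissipation_le hS hpot hP (hasCompactSupport_cutoff_pow hR (by lia))
        fun x => pow_nonneg (cutoff_nonneg R x) _
    _ ≤ _ := lintegral_mono (hflux hU hV hR a)
    _ = _ := by
      rw [lintegral_add_left (hmeas.const_mul _), lintegral_const_mul _ hmeas,
        lintegral_const_mul' _ _ hK, lintegral_indicator (measurableSet_annulus R), localEnergy]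

end LocalEnergy
/-! ### Quantities negligible against the energy -/

section Negligible

/-- `X` is negligible against `1 + E` as the scale `R` tends to infinity. -/
def Negligible (E X : ℝ → ℝ≥0∞) : Prop :=
  ∃ δ : ℝ → ℝ≥0∞, Tendsto δ atTop (𝓝 0) ∧ ∀ᶠ R in atTop, X R ≤ δ R * (1 + E R)

lemma tendsto_ofReal_inv_atTop : Tendsto (fun R : ℝ => ENNReal.ofReal R⁻¹) atTop (𝓝 0) := by
  simpa only [ENNReal.ofReal_zero] using ENNReal.tendsto_ofReal tendsto_inv_atTop_zero

lemma eventually_ofReal_inv_le_one : ∀ᶠ R : ℝ in atTop, ENNReal.ofReal R⁻¹ ≤ 1 := by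
  filter_upwards [eventually_ge_atTop 1] with R hR
  exact ENNReal.ofReal_le_one.2 (inv_le_one_of_one_le₀ hR)

namespace Negligible

variable {E X Y : ℝ → ℝ≥0∞}

lemma mono (h : Negligible E X) (hYX : ∀ᶠ R in atTop, Y R ≤ X R) : Negligible E Y := by
  obtain ⟨δ, hδ, hX⟩ := h
  exact ⟨δ, hδ, hYX.mp (hX.mono fun R => ge_trans)⟩

lemma add (hX : Negligible E X) (hY : Negligible E Y) : Negligible E fun R => X R + Y R := by
  obtain ⟨δ, hδ, hX⟩ := hX
  obtain ⟨ε, hε, hY⟩ := hY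
  refine ⟨fun R => δ R + ε R, by simpa only [add_zero] using hδ.add hε, ?_⟩
  filter_upwards [hX, hY] with R h₁ h₂
  exact (add_le_add h₁ h₂).trans_eq (add_mul _ _ _).symm

lemma const_mul (h : Negligible E X) {c : ℝ≥0∞} (hc : c ≠ ⊤) : Negligible E fun R => c * X R := by
  obtain ⟨δ, hδ, hX⟩ := h
  refine ⟨fun R => c * δ R,
    by simpa only [mul_zero] using ENNReal.Tendsto.const_mul hδ (Or.inr hc), ?_⟩
  filter_upwards [hX] with R hR
  exact (mul_le_mul_right hR c).trans_eq (mul_assoc _ _ _).symm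

lemma of_tendsto_zero (h : Tendsto X atTop (𝓝 0)) : Negligible E X :=
  ⟨X, h, .of_forall fun _ => le_mul_of_one_le_right' le_self_add⟩

lemma sum {ι : Type*} (s : Finset ι) {X : ι → ℝ → ℝ≥0∞} (h : ∀ i, Negligible E (X i)) :
    Negligible E fun R => ∑ i ∈ s, X i R := by
  classical
  induction s using Finset.induction_on with
  | empty => exact of_tendsto_zero (by simp only [Finset.sum_empty, tendsto_const_nhds])
  | insert i s hi ih =>
    simp only [Finset.sum_insert hi]
    exact (h i).add ih

lemma inv_pow_mul_of_le {C : ℝ≥0∞} (hC : C ≠ ⊤) (h : ∀ᶠ R in atTop, X R ≤ C * (1 + E R)) {k : ℕ}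
    (hk : k ≠ 0) : Negligible E fun R => ENNReal.ofReal R⁻¹ ^ k * X R := by
  refine ⟨fun R => C * ENNReal.ofReal R⁻¹, by
    simpa only [mul_zero] using
      ENNReal.Tendsto.const_mul tendsto_ofReal_inv_atTop (Or.inr hC), ?_⟩
  filter_upwards [h, eventually_ofReal_inv_le_one] with R hR hR₁
  calc _ ≤ ENNReal.ofReal R⁻¹ * (C * (1 + E R)) := mul_le_mul' (pow_le_of_le_one zero_le hR₁ hk) hR
    _ = _ := by ring

lemma tendsto_zero (h : Negligible E E) (hE : ∀ᶠ R in atTop, E R ≠ ⊤) :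
    Tendsto E atTop (𝓝 0) := by
  obtain ⟨δ, hδ, hle⟩ := h
  have hlim : Tendsto (fun R => 2 * δ R) atTop (𝓝 0) := by
    simpa only [mul_zero] using ENNReal.Tendsto.const_mul hδ (Or.inr ENNReal.ofNat_ne_top)
  refine tendsto_of_tendsto_of_tendsto_of_le_of_le' tendsto_const_nhds hlim
    (.of_forall fun _ => zero_le) ?_
  have hhalf : (0 : ℝ≥0∞) < 2⁻¹ := ENNReal.inv_pos.2 ENNReal.ofNat_ne_top
  filter_upwards [hδ.eventually_le_const hhalf, hE, hle] with R hδR htop hR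
  refine le_two_mul_of_le_half_add htop ?_
  calc E R ≤ δ R * E R + δ R := hR.trans_eq (by ring)
    _ ≤ 2⁻¹ * E R + δ R := by gcongr

end Negligible

end Negligible

section Annuli

lemma annulus_subset_closedBall (R : ℝ) : annulus R ⊆ closedBall 0 (2 * R) := Set.sdiff_subset

lemma inv_pow_mul_volume_closedBall {R : ℝ} (hR : 0 < R) :
    ENNReal.ofReal R⁻¹ ^ 3 * volume (closedBall (0 : R3) (2 * R)) =
      8 * volume (ball (0 : R3) 1) := by
  rw [Measure.addHaar_closedBall _ _ (by positivity), finrank_euclideanSpace_fin, ← mul_assoc,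
    ← ENNReal.ofReal_pow (by positivity), ← ENNReal.ofReal_mul (by positivity),
    show R⁻¹ ^ 3 * (2 * R) ^ 3 = 8 by field_simp; norm_num, ENNReal.ofReal_ofNat]

lemma eight_mul_volume_ball_ne_top : 8 * volume (ball (0 : R3) 1) ≠ ⊤ :=
  ENNReal.mul_ne_top ENNReal.ofNat_ne_top measure_ball_lt_top.ne

lemma setLIntegral_rpow_le {α : Type*} [MeasurableSpace α] {μ : Measure α} {g : α → ℝ≥0∞}
    (hg : AEMeasurable g μ) {s t : ℝ} (hs : 0 ≤ s) (ht : 0 ≤ t) (hst : s + t = 1) (A : Set α) :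
    ∫⁻ x in A, g x ^ s ∂μ ≤ (∫⁻ x in A, g x ∂μ) ^ s * μ A ^ t := by
  simpa using ENNReal.lintegral_mul_norm_pow_le (g := fun _ => 1) hg.restrict aemeasurable_const
    hs ht hst

/-- Hölder's inequality at scale `R`: the power of `R⁻¹` pays exactly for the volume. -/
lemma inv_pow_mul_setLIntegral_rpow_le {g : R3 → ℝ≥0∞} (hg : Measurable g) {s t : ℝ}
    (hs : 0 ≤ s) (ht : 0 ≤ t) (hst : s + t = 1) {k : ℕ} (hk : (k : ℝ) = 3 * t) {R : ℝ}
    (hR : 0 < R) {A : Set R3} (hA : A ⊆ closedBall 0 (2 * R)) :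
    ENNReal.ofReal R⁻¹ ^ k * ∫⁻ x in A, g x ^ s ≤
      (8 * volume (ball (0 : R3) 1)) ^ t * (∫⁻ x in A, g x) ^ s := by
  have hpow : ENNReal.ofReal R⁻¹ ^ k = (ENNReal.ofReal R⁻¹ ^ 3) ^ t := by
    rw [← ENNReal.rpow_natCast, hk, ENNReal.rpow_mul]
    norm_num
  calc ENNReal.ofReal R⁻¹ ^ k * ∫⁻ x in A, g x ^ s
      ≤ ENNReal.ofReal R⁻¹ ^ k * ((∫⁻ x in A, g x) ^ s * volume A ^ t) := by
        gcongr
        exact setLIntegral_rpow_le hg.aemeasurable hs ht hst A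
    _ = (ENNReal.ofReal R⁻¹ ^ 3 * volume A) ^ t * (∫⁻ x in A, g x) ^ s := by
        rw [hpow, ENNReal.mul_rpow_of_nonneg _ _ ht]
        ring
    _ ≤ _ := by
        rw [← inv_pow_mul_volume_closedBall hR]
        gcongr

lemma tendsto_setLIntegral_annulus {g : R3 → ℝ≥0∞} (hg : Measurable g) (hfin : ∫⁻ x, g x ≠ ⊤) :
    Tendsto (fun R => ∫⁻ x in annulus R, g x) atTop (𝓝 0) := by
  simp only [← lintegral_indicator (measurableSet_annulus _)]
  rw [← lintegral_zero (α := R3) (μ := volume)]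
  refine tendsto_lintegral_filter_of_dominated_convergence g
    (.of_forall fun R => hg.indicator (measurableSet_annulus R))
    (.of_forall fun R => .of_forall fun x => Set.indicator_le_self _ _ _) hfin
    (.of_forall fun x => tendsto_const_nhds.congr' ?_)
  filter_upwards [eventually_gt_atTop ‖x‖] with R hR
  rw [Set.indicator_of_notMem]
  exact fun hx => hx.2 (mem_ball_zero_iff.2 hR)

/-- The rescaled integrals `R⁻ᵏ ∫ w R` over the annuli are negligible. -/
def NegligibleOnAnnuli (E : ℝ → ℝ≥0∞) (k : ℕ) (w : ℝ → R3 → ℝ≥0∞) : Prop :=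
  Negligible E fun R => ENNReal.ofReal R⁻¹ ^ k * ∫⁻ x in annulus R, w R x

namespace NegligibleOnAnnuli

variable {E : ℝ → ℝ≥0∞} {k : ℕ} {w w' : ℝ → R3 → ℝ≥0∞}

lemma mono (h : NegligibleOnAnnuli E k w) (hw : ∀ R x, w' R x ≤ w R x) :
    NegligibleOnAnnuli E k w' :=
  Negligible.mono h (.of_forall fun R => mul_le_mul_right (lintegral_mono (hw R)) _)

lemma add (h : NegligibleOnAnnuli E k w) (h' : NegligibleOnAnnuli E k w')
    (hw : ∀ R, Measurable (w R)) : NegligibleOnAnnuli E k fun R x => w R x + w' R x := by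
  simpa only [NegligibleOnAnnuli, lintegral_add_left (hw _), mul_add] using Negligible.add h h'

lemma sum {ι : Type*} (s : Finset ι) {w : ι → ℝ → R3 → ℝ≥0∞}
    (h : ∀ i, NegligibleOnAnnuli E k (w i)) (hw : ∀ i R, Measurable (w i R)) :
    NegligibleOnAnnuli E k fun R x => ∑ i ∈ s, w i R x := by
  simpa only [NegligibleOnAnnuli, lintegral_finsetSum s fun i _ => hw i _, Finset.mul_sum] using
    Negligible.sum s h

lemma const_mul (h : NegligibleOnAnnuli E k w) {c : ℝ≥0∞} (hc : c ≠ ⊤) :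
    NegligibleOnAnnuli E k fun R x => c * w R x := by
  simpa only [NegligibleOnAnnuli, lintegral_const_mul' _ _ hc, mul_left_comm c] using
    Negligible.const_mul h hc

lemma inv_pow_mul (h : NegligibleOnAnnuli E k w) :
    NegligibleOnAnnuli E 0 fun R x => ENNReal.ofReal R⁻¹ ^ k * w R x := by
  simpa only [NegligibleOnAnnuli, pow_zero, one_mul,
    lintegral_const_mul' _ _ (ENNReal.pow_ne_top ENNReal.ofReal_ne_top)] using h

lemma of_lintegral_le (hk : k ≠ 0) {C : ℝ≥0∞} (hC : C ≠ ⊤)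
    (h : ∀ᶠ R in atTop, ∫⁻ x, w R x ≤ C * (1 + E R)) : NegligibleOnAnnuli E k w :=
  .inv_pow_mul_of_le hC (h.mono fun _ => (setLIntegral_le_lintegral _ _).trans) hk

lemma of_lintegral_ne_top (hk : k ≠ 0) {g : R3 → ℝ≥0∞} (hg : ∫⁻ x, g x ≠ ⊤) :
    NegligibleOnAnnuli E k fun _ => g :=
  of_lintegral_le hk hg (.of_forall fun _ => le_mul_of_one_le_right' le_self_add)

lemma const (hk : 3 < k) {c : ℝ≥0∞} (hc : c ≠ ⊤) : NegligibleOnAnnuli E k fun _ _ => c := by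
  have hbound : ∀ᶠ R in atTop, ENNReal.ofReal R⁻¹ ^ 3 * ∫⁻ _ in annulus R, c
      ≤ c * (8 * volume (ball (0 : R3) 1)) * (1 + E R) := by
    filter_upwards [eventually_gt_atTop 0] with R hR
    refine le_trans ?_ (le_mul_of_one_le_right' le_self_add)
    rw [setLIntegral_const, mul_left_comm, ← inv_pow_mul_volume_closedBall hR]
    gcongr
    exact annulus_subset_closedBall R
  refine (Negligible.inv_pow_mul_of_le (ENNReal.mul_ne_top hc eight_mul_volume_ball_ne_top) hbound
    (Nat.sub_ne_zero_of_lt hk)).mono (.of_forall fun R => ?_)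
  rw [← mul_assoc, ← pow_add, Nat.sub_add_cancel hk.le]

lemma rpow {g : R3 → ℝ≥0∞} (hg : Measurable g) (hfin : ∫⁻ x, g x ≠ ⊤) {s t : ℝ} (hs : 0 < s)
    (ht : 0 ≤ t) (hst : s + t = 1) (hk : (k : ℝ) = 3 * t) :
    NegligibleOnAnnuli E k fun _ x => g x ^ s := by
  have hlim : Tendsto (fun R => (8 * volume (ball (0 : R3) 1)) ^ t * (∫⁻ x in annulus R, g x) ^ s)
      atTop (𝓝 0) := by
    have hpow := (tendsto_setLIntegral_annulus hg hfin).ennrpow_const s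
    rw [ENNReal.zero_rpow_of_pos hs] at hpow
    simpa only [mul_zero] using ENNReal.Tendsto.const_mul hpow
      (Or.inr (ENNReal.rpow_ne_top_of_nonneg ht eight_mul_volume_ball_ne_top))
  refine Negligible.mono (.of_tendsto_zero hlim) ?_
  filter_upwards [eventually_gt_atTop 0] with R hR
  exact inv_pow_mul_setLIntegral_rpow_le hg hs.le ht hst hk hR (annulus_subset_closedBall R)

end NegligibleOnAnnuli

end Annuli

/-! ### Localized Sobolev bounds for the fields -/

section Sobolev

variable {f g : R3 → ℝ} {N : ℕ} {R : ℝ}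

lemma norm_fderiv_sq_le (f : R3 → ℝ) (x : R3) : ‖fderiv ℝ f x‖ ^ 2 ≤ ∑ j, pd f j x ^ 2 := by
  rw [← Real.le_sqrt (norm_nonneg _) (by positivity)]
  refine ContinuousLinearMap.opNorm_le_bound _ (Real.sqrt_nonneg _) fun v => ?_
  have hv : fderiv ℝ f x v = ∑ j, pd f j x * v j := by
    conv_lhs => rw [← (EuclideanSpace.basisFun (Fin 3) ℝ).sum_repr v]
    simp only [map_sum, map_smul, EuclideanSpace.basisFun_repr, EuclideanSpace.basisFun_apply,
      smul_eq_mul, pd, mul_comm]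
  rw [hv, EuclideanSpace.norm_eq, ← Real.sqrt_mul (by positivity)]
  simpa only [Real.norm_eq_abs, sq_abs] using
    Real.abs_le_sqrt (Finset.sum_mul_sq_le_sq_mul_sq Finset.univ (pd f · x) (v ·))

lemma exists_lintegral_enorm_rpow_six_le : ∃ C : ℝ≥0∞, C ≠ ⊤ ∧ ∀ g : R3 → ℝ, ContDiff ℝ 1 g →
    HasCompactSupport g →
    (∫⁻ x, ‖g x‖ₑ ^ (6 : ℝ)) ^ (3⁻¹ : ℝ) ≤ C * ∫⁻ x, ENNReal.ofReal (∑ j, pd g j x ^ 2) := by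
  set C := eLpNormLESNormFDerivOfEqInnerConst (volume : Measure R3) 2
  refine ⟨(C : ℝ≥0∞) ^ 2, ENNReal.pow_ne_top ENNReal.coe_ne_top, fun g hg hgc => ?_⟩
  have hsob : eLpNorm g 6 volume ≤ C * eLpNorm (fderiv ℝ g) 2 volume :=
    eLpNorm_le_eLpNorm_fderiv_of_eq_inner volume hg hgc (p := 2) (p' := 6) one_le_two
      (by simp) (by simp; norm_num)
  have hsix : eLpNorm g 6 volume ^ 2 = (∫⁻ x, ‖g x‖ₑ ^ (6 : ℝ)) ^ (3⁻¹ : ℝ) := by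
    rw [eLpNorm_eq_lintegral_rpow_enorm_toReal (by simp) (by simp), ← ENNReal.rpow_natCast,
      ← ENNReal.rpow_mul, ENNReal.toReal_ofNat]
    norm_num
  have htwo : eLpNorm (fderiv ℝ g) 2 volume ^ 2 = ∫⁻ x, ‖fderiv ℝ g x‖ₑ ^ 2 := by
    rw [eLpNorm_eq_lintegral_rpow_enorm_toReal (by simp) (by simp), ← ENNReal.rpow_natCast,
      ← ENNReal.rpow_mul, ENNReal.toReal_ofNat]
    norm_num
  calc _ ≤ (C * eLpNorm (fderiv ℝ g) 2 volume) ^ 2 := by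
        rw [← hsix]
        gcongr
    _ = C ^ 2 * ∫⁻ x, ‖fderiv ℝ g x‖ₑ ^ 2 := by rw [mul_pow, htwo]
    _ ≤ _ := by
        gcongr with x
        rw [← ofReal_norm, ← ENNReal.ofReal_pow (norm_nonneg _)]
        exact ENNReal.ofReal_le_ofReal (norm_fderiv_sq_le g x)

/-- The Dirichlet energy of `f` localized at scale `R`, with the same weight as `localEnergy`. -/
def fieldEnergy (f : R3 → ℝ) (N : ℕ) (R : ℝ) : ℝ≥0∞ :=
  ∫⁻ x, ENNReal.ofReal (cutoff R x ^ (2 * N + 8) * ∑ j, pd f j x ^ 2)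

lemma sum_pd_sq_cutoff_pow_mul_le (hf : ContDiff ℝ ∞ f) {c : ℝ}
    (hφ : HasPowerBounds (cutoff R) (N + 4) c R⁻¹) (x : R3) :
    ∑ j, pd (fun y => cutoff R y ^ (N + 4) * f y) j x ^ 2
      ≤ (2 + 6 * c ^ 2) * (cutoff R x ^ (2 * N + 8) * ∑ j, pd f j x ^ 2
          + R⁻¹ ^ 2 * (cutoff R x ^ (N + 3) * f x) ^ 2) := by
  set s := cutoff R x ^ (N + 4)
  set t := R⁻¹ * (cutoff R x ^ (N + 3) * f x) with ht
  have hpd (j : Fin 3) :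
      pd (fun y => cutoff R y ^ (N + 4) * f y) j x ^ 2
        ≤ 2 * (s * pd f j x) ^ 2 + 2 * (c * t) ^ 2 := by
    have hcut : (pd (fun y => cutoff R y ^ (N + 4)) j x * f x) ^ 2 ≤ (c * t) ^ 2 := by
      refine sq_le_sq.2 ?_
      rw [abs_mul, show c * t = c * R⁻¹ * cutoff R x ^ (N + 3) * f x by rw [ht]; ring,
        abs_mul _ (f x)]
      exact mul_le_mul_of_nonneg_right ((hφ.norm_pd_le j x).trans (le_abs_self _)) (abs_nonneg _)
    simp (disch := fun_prop) only [pd_mul]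
    exact add_sq_le.trans (by linarith)
  have hs : cutoff R x ^ (2 * N + 8) = s ^ 2 := by rw [← pow_mul]; congr 1; ring
  have hD : 0 ≤ s ^ 2 * ∑ j, pd f j x ^ 2 := by positivity
  calc _ ≤ ∑ j, (2 * (s * pd f j x) ^ 2 + 2 * (c * t) ^ 2) := Finset.sum_le_sum fun j _ => hpd j
    _ = 2 * (s ^ 2 * ∑ j, pd f j x ^ 2) + 6 * c ^ 2 * t ^ 2 := by
      simp only [Fin.sum_univ_three]
      ring
    _ ≤ (2 + 6 * c ^ 2) * (s ^ 2 * ∑ j, pd f j x ^ 2 + t ^ 2) := by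
      linarith [mul_nonneg (by positivity : 0 ≤ 6 * c ^ 2) hD, sq_nonneg t]
    _ = _ := by rw [hs, ht, mul_pow]

lemma lintegral_sum_pd_sq_cutoff_pow_mul_le (hf : ContDiff ℝ ∞ f) {c : ℝ} (hR : 0 < R)
    (hφ : HasPowerBounds (cutoff R) (N + 4) c R⁻¹) :
    ∫⁻ x, ENNReal.ofReal (∑ j, pd (fun y => cutoff R y ^ (N + 4) * f y) j x ^ 2)
      ≤ ENNReal.ofReal (2 + 6 * c ^ 2) * (fieldEnergy f N R
          + ENNReal.ofReal R⁻¹ ^ 2 * ∫⁻ x, (cutoffWeight (N + 3) R x * ‖f x‖ₑ) ^ 2) := by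
  have hmeas : Measurable fun x =>
      ENNReal.ofReal (cutoff R x ^ (2 * N + 8) * ∑ j, pd f j x ^ 2) := by
    have : Continuous fun x => cutoff R x ^ (2 * N + 8) * ∑ j, pd f j x ^ 2 := by fun_prop
    exact this.measurable.ennreal_ofReal
  rw [fieldEnergy, ← lintegral_const_mul' _ _ (ENNReal.pow_ne_top ENNReal.ofReal_ne_top),
    ← lintegral_add_left hmeas, ← lintegral_const_mul' _ _ ENNReal.ofReal_ne_top]
  refine lintegral_mono fun x => ?_
  have hφ0 := cutoff_nonneg R x
  rw [← enorm_cutoff_pow_mul, ← enorm_pow, Real.enorm_of_nonneg (sq_nonneg _),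
    ← ENNReal.ofReal_pow (by positivity), ← ENNReal.ofReal_mul (by positivity),
    ← ENNReal.ofReal_add (by positivity) (by positivity), ← ENNReal.ofReal_mul (by positivity)]
  exact ENNReal.ofReal_le_ofReal (sum_pd_sq_cutoff_pow_mul_le hf hφ x)

/-- The `L⁶` mass of `f` localized at scale `R`. -/
def sixthMass (f : R3 → ℝ) (N : ℕ) (R : ℝ) : ℝ≥0∞ :=
  ∫⁻ x, (cutoffWeight (N + 4) R x * ‖f x‖ₑ) ^ (6 : ℝ)

lemma hasCompactSupport_cutoff_pow_mul (f : R3 → ℝ) (hR : 0 < R) :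
    HasCompactSupport fun x => cutoff R x ^ (N + 4) * f x :=
  (hasCompactSupport_cutoff_pow hR (by lia)).mul_right

lemma sixthMass_ne_top (hf : Continuous f) (hR : 0 < R) : sixthMass f N R ≠ ⊤ := by
  have hInt : Integrable fun x => (cutoff R x ^ (N + 4) * f x) ^ 6 :=
    Continuous.integrable_of_hasCompactSupport (by fun_prop)
      ((hasCompactSupport_cutoff_pow_mul f hR).comp_left (g := (· ^ 6)) (zero_pow (by lia)))
  simpa only [sixthMass, hasFiniteIntegral_iff_enorm, lt_top_iff_ne_top, enorm_pow,
    enorm_cutoff_pow_mul, ENNReal.rpow_ofNat] using hInt.hasFiniteIntegral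

lemma exists_sixthMass_le (N : ℕ) : ∃ C : ℝ≥0∞, C ≠ ⊤ ∧ ∀ {f : R3 → ℝ}, ContDiff ℝ ∞ f →
    ∀ {R : ℝ}, 0 < R → sixthMass f N R ^ (3⁻¹ : ℝ) ≤ C * (fieldEnergy f N R
      + ENNReal.ofReal R⁻¹ ^ 2 * ∫⁻ x, (cutoffWeight (N + 3) R x * ‖f x‖ₑ) ^ 2) := by
  obtain ⟨C, hC, hsob⟩ := exists_lintegral_enorm_rpow_six_le
  obtain ⟨c, -, hφ⟩ := exists_hasPowerBounds_cutoff (m := N + 4) (by lia)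
  refine ⟨C * ENNReal.ofReal (2 + 6 * c ^ 2), ENNReal.mul_ne_top hC ENNReal.ofReal_ne_top,
    fun {f} hf {R} hR => ?_⟩
  have hg : ContDiff ℝ ∞ fun x => cutoff R x ^ (N + 4) * f x := by fun_prop
  have h := hsob _ (hg.of_le (by simp)) (hasCompactSupport_cutoff_pow_mul f hR)
  simp only [enorm_cutoff_pow_mul] at h
  rw [mul_assoc]
  exact h.trans (mul_le_mul_right (lintegral_sum_pd_sq_cutoff_pow_mul_le hf hR (hφ R hR)) C)

end Sobolev

section Interpolation

lemma le_two_mul_add_rpow_of_le {X A B : ℝ≥0∞} (hX : X ≠ ⊤) {s : ℝ} (hs : s < 1)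
    (h : X ≤ B + A * X ^ s) : X ≤ 2 * B + (2 * A) ^ (1 - s)⁻¹ := by
  rcases eq_or_ne X 0 with rfl | h0
  · exact zero_le
  rcases le_total (A * X ^ s) (2⁻¹ * X) with hsmall | hlarge
  · refine (le_two_mul_of_le_half_add hX (h.trans ?_)).trans le_self_add
    rw [add_comm]
    gcongr
  · have hmul : X ^ (1 - s) * X ^ s ≤ 2 * A * X ^ s := by
      rw [← ENNReal.rpow_add _ _ h0 hX, sub_add_cancel, ENNReal.rpow_one, mul_assoc]
      exact (ENNReal.inv_mul_le_iff two_ne_zero ENNReal.ofNat_ne_top).1 hlarge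
    have hpow : X ^ (1 - s) ≤ 2 * A :=
      (ENNReal.mul_le_mul_iff_left (by simp [h0, hX]) (by simp [h0, hX])).1 hmul
    exact ((ENNReal.le_rpow_inv_iff (sub_pos.2 hs)).2 hpow).trans le_add_self

variable {f : R3 → ℝ} {N : ℕ} {R σ : ℝ}

/-- The condition on `σ` says that the interpolated power of the cutoff does not exceed the one
available on the left. -/
lemma lintegral_cutoffWeight_mul_big_rpow_le (hf : Continuous f) (hσ : 1 ≤ σ)
    (hσN : σ * (N + 9) ≤ 6 * (N + 4)) :
    ∫⁻ x, (cutoffWeight (N + 3) R x * big (‖f ·‖ₑ) x) ^ σ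
      ≤ (∫⁻ x, big (‖f ·‖ₑ) x) ^ ((6 - σ) / 5) * sixthMass f N R ^ ((σ - 1) / 5) := by
  have hs : 0 ≤ (6 - σ) / 5 := by nlinarith [(N.cast_nonneg : (0 : ℝ) ≤ N)]
  have ht : 0 ≤ (σ - 1) / 5 := by linarith
  refine le_trans (lintegral_mono fun x => ?_) (ENNReal.lintegral_mul_norm_pow_le
    (measurable_big (by fun_prop)).aemeasurable (by fun_prop) hs ht (by ring))
  have hbig : big (‖f ·‖ₑ) x ^ σ
      = big (‖f ·‖ₑ) x ^ ((6 - σ) / 5) * big (‖f ·‖ₑ) x ^ (6 * ((σ - 1) / 5)) := by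
    rw [← ENNReal.rpow_add_of_nonneg _ _ hs (by linarith)]
    ring_nf
  have hweight : cutoffWeight (N + 3) R x ^ σ ≤ cutoffWeight (N + 4) R x ^ (6 * ((σ - 1) / 5)) := by
    rw [cutoffWeight_rpow, cutoffWeight_rpow]
    refine ENNReal.rpow_le_rpow_of_exponent_ge (ENNReal.ofReal_le_one.2 (cutoff_le_one R x)) ?_
    push_cast
    linarith
  rw [← ENNReal.rpow_mul, ENNReal.mul_rpow_of_nonneg _ _ (by linarith),
    ENNReal.mul_rpow_of_nonneg _ _ (by linarith), hbig, mul_left_comm]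
  gcongr
  exact big_le _ x

lemma inv_sq_mul_lintegral_cutoffWeight_mul_small_le (hf : Continuous f) (hR : 0 < R) :
    ENNReal.ofReal R⁻¹ ^ 2 * ∫⁻ x, (cutoffWeight (N + 3) R x * small (‖f ·‖ₑ) x) ^ 2
      ≤ (8 * volume (ball (0 : R3) 1)) ^ (2 / 3 : ℝ)
        * (∫⁻ x, small (‖f ·‖ₑ) x ^ (6 : ℝ)) ^ (1 / 3 : ℝ) := by
  have hsupp : ∫⁻ x, (cutoffWeight (N + 3) R x * small (‖f ·‖ₑ) x) ^ 2
      ≤ ∫⁻ x in closedBall 0 (2 * R), (small (‖f ·‖ₑ) x ^ (6 : ℝ)) ^ (1 / 3 : ℝ) := by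
    rw [← lintegral_indicator measurableSet_closedBall]
    refine lintegral_mono fun x => ?_
    by_cases hx : x ∈ closedBall 0 (2 * R)
    · rw [Set.indicator_of_mem hx, ← ENNReal.rpow_mul]
      norm_num
      gcongr
      exact mul_le_of_le_one_left' (cutoffWeight_le_one _ R x)
    · simp [cutoffWeight_of_notMem_closedBall hR (Nat.succ_ne_zero (N + 2)) hx]
  calc _ ≤ ENNReal.ofReal R⁻¹ ^ 2
        * ∫⁻ x in closedBall 0 (2 * R), (small (‖f ·‖ₑ) x ^ (6 : ℝ)) ^ (1 / 3 : ℝ) := by gcongr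
    _ ≤ (8 * volume (ball (0 : R3) 1)) ^ (2 / 3 : ℝ)
        * (∫⁻ x in closedBall 0 (2 * R), small (‖f ·‖ₑ) x ^ (6 : ℝ)) ^ (1 / 3 : ℝ) :=
      inv_pow_mul_setLIntegral_rpow_le (by fun_prop) (by norm_num) (by norm_num) (by norm_num)
        (by norm_num) hR subset_rfl
    _ ≤ _ := by
      gcongr
      exact Measure.restrict_le_self

lemma exists_inv_sq_mul_lintegral_cutoffWeight_mul_enorm_le (hf : Continuous f) (N : ℕ)
    (hbig : ∫⁻ x, big (‖f ·‖ₑ) x ≠ ⊤) (hsmall : ∫⁻ x, small (‖f ·‖ₑ) x ^ (6 : ℝ) ≠ ⊤) :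
    ∃ L M : ℝ≥0∞, L ≠ ⊤ ∧ M ≠ ⊤ ∧ ∀ R, 1 ≤ R →
      ENNReal.ofReal R⁻¹ ^ 2 * ∫⁻ x, (cutoffWeight (N + 3) R x * ‖f x‖ₑ) ^ 2
        ≤ L + M * (sixthMass f N R ^ (3⁻¹ : ℝ)) ^ (3 / 5 : ℝ) := by
  refine ⟨(8 * volume (ball (0 : R3) 1)) ^ (2 / 3 : ℝ)
      * (∫⁻ x, small (‖f ·‖ₑ) x ^ (6 : ℝ)) ^ (1 / 3 : ℝ), (∫⁻ x, big (‖f ·‖ₑ) x) ^ (4 / 5 : ℝ),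
    ENNReal.mul_ne_top
      (ENNReal.rpow_ne_top_of_nonneg (by norm_num) eight_mul_volume_ball_ne_top)
      (ENNReal.rpow_ne_top_of_nonneg (by norm_num) hsmall),
    ENNReal.rpow_ne_top_of_nonneg (by norm_num) hbig, fun R hR => ?_⟩
  have hsplit : ∫⁻ x, (cutoffWeight (N + 3) R x * ‖f x‖ₑ) ^ 2
      = (∫⁻ x, (cutoffWeight (N + 3) R x * small (‖f ·‖ₑ) x) ^ 2)
        + ∫⁻ x, (cutoffWeight (N + 3) R x * big (‖f ·‖ₑ) x) ^ (2 : ℝ) := by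
    rw [← lintegral_add_left (by fun_prop)]
    refine lintegral_congr fun x => ?_
    rw [ENNReal.rpow_two, mul_pow, mul_pow, mul_pow, ← mul_add,
      sq_eq_small_sq_add_big_sq (‖f ·‖ₑ) x]
  rw [hsplit, mul_add]
  refine add_le_add
    (inv_sq_mul_lintegral_cutoffWeight_mul_small_le hf (zero_lt_one.trans_le hR)) ?_
  have hone : ENNReal.ofReal R⁻¹ ^ 2 ≤ 1 :=
    pow_le_one₀ zero_le (ENNReal.ofReal_le_one.2 (inv_le_one_of_one_le₀ hR))
  refine (mul_le_of_le_one_left' hone).trans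
    ((lintegral_cutoffWeight_mul_big_rpow_le hf one_le_two (by linarith)).trans_eq ?_)
  rw [← ENNReal.rpow_mul]
  norm_num

lemma exists_sixthMass_rpow_le (hf : ContDiff ℝ ∞ f) (N : ℕ)
    (hbig : ∫⁻ x, big (‖f ·‖ₑ) x ≠ ⊤) (hsmall : ∫⁻ x, small (‖f ·‖ₑ) x ^ (6 : ℝ) ≠ ⊤) :
    ∃ C : ℝ≥0∞, C ≠ ⊤ ∧ ∀ R, 1 ≤ R →
      sixthMass f N R ^ (3⁻¹ : ℝ) ≤ C * (1 + fieldEnergy f N R) := by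
  obtain ⟨C, hC, hsob⟩ := exists_sixthMass_le N
  obtain ⟨L, M, hL, hM, hlow⟩ :=
    exists_inv_sq_mul_lintegral_cutoffWeight_mul_enorm_le hf.continuous N hbig hsmall
  refine ⟨2 * C * (1 + L) + (2 * (C * M)) ^ (1 - 3 / 5 : ℝ)⁻¹, ?_, fun R hR => ?_⟩
  · have : (2 * (C * M)) ^ (1 - 3 / 5 : ℝ)⁻¹ ≠ ⊤ :=
      ENNReal.rpow_ne_top_of_nonneg (by norm_num) (by finiteness)
    finiteness
  have hR0 : 0 < R := zero_lt_one.trans_le hR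
  set X := sixthMass f N R ^ (3⁻¹ : ℝ)
  have hself : X ≤ C * (fieldEnergy f N R + L) + C * M * X ^ (3 / 5 : ℝ) := by
    refine ((hsob hf hR0).trans (mul_le_mul_right (add_le_add_right (hlow R hR) _) C)).trans_eq ?_
    ring
  have hX : X ≠ ⊤ :=
    ENNReal.rpow_ne_top_of_nonneg (by norm_num) (sixthMass_ne_top hf.continuous hR0)
  calc X ≤ 2 * (C * (fieldEnergy f N R + L)) + (2 * (C * M)) ^ (1 - 3 / 5 : ℝ)⁻¹ :=
        le_two_mul_add_rpow_of_le hX (by norm_num) hself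
    _ ≤ 2 * C * (1 + L) * (1 + fieldEnergy f N R)
          + (2 * (C * M)) ^ (1 - 3 / 5 : ℝ)⁻¹ * (1 + fieldEnergy f N R) := by
        refine add_le_add ?_ (le_mul_of_one_le_right' le_self_add)
        rw [← mul_assoc, mul_assoc (2 * C) (1 + L)]
        gcongr
        exact le_iff_exists_add.2 ⟨1 + L * fieldEnergy f N R, by ring⟩
    _ = _ := by ring

lemma exists_lintegral_cutoffWeight_mul_big_rpow_le (hf : ContDiff ℝ ∞ f)
    (hbig : ∫⁻ x, big (‖f ·‖ₑ) x ≠ ⊤) (hsmall : ∫⁻ x, small (‖f ·‖ₑ) x ^ (6 : ℝ) ≠ ⊤)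
    (hσ : 1 ≤ σ) (hσN : σ * (N + 9) ≤ 6 * (N + 4)) : ∃ C : ℝ≥0∞, C ≠ ⊤ ∧ ∀ R, 1 ≤ R →
      (∫⁻ x, (cutoffWeight (N + 3) R x * big (‖f ·‖ₑ) x) ^ σ) ^ (2 / σ)
        ≤ C * (1 + fieldEnergy f N R) := by
  obtain ⟨C, hC, hX⟩ := exists_sixthMass_rpow_le hf N hbig hsmall
  have hσ6 : σ ≤ 6 := by nlinarith [(N.cast_nonneg : (0 : ℝ) ≤ N)]
  set κ := 6 * (σ - 1) / (5 * σ) with hκ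
  have hκ0 : 0 ≤ κ := div_nonneg (by linarith) (by linarith)
  have hκ1 : κ ≤ 1 := by rw [hκ, div_le_one (by linarith)]; linarith
  set M := ((∫⁻ x, big (‖f ·‖ₑ) x) ^ ((6 - σ) / 5)) ^ (2 / σ)
  have hM : M ≠ ⊤ := ENNReal.rpow_ne_top_of_nonneg (by positivity)
    (ENNReal.rpow_ne_top_of_nonneg (by linarith) hbig)
  refine ⟨M * (1 + C), by finiteness, fun R hR => ?_⟩
  set X := sixthMass f N R ^ (3⁻¹ : ℝ) with hXdef
  calc _ ≤ ((∫⁻ x, big (‖f ·‖ₑ) x) ^ ((6 - σ) / 5) * sixthMass f N R ^ ((σ - 1) / 5))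
          ^ (2 / σ) := by
        gcongr
        exact lintegral_cutoffWeight_mul_big_rpow_le hf.continuous hσ hσN
    _ = M * X ^ κ := by
        rw [ENNReal.mul_rpow_of_nonneg _ _ (by positivity), ← ENNReal.rpow_mul (sixthMass f N R),
          hXdef, ← ENNReal.rpow_mul (sixthMass f N R), hκ]
        congr 2
        field_simp
        ring
    _ ≤ M * (1 + X) := by
        gcongr
        calc X ^ κ ≤ (1 + X) ^ κ := ENNReal.rpow_le_rpow le_add_self hκ0
          _ ≤ 1 + X :=
            (ENNReal.rpow_le_rpow_of_exponent_le le_self_add hκ1).trans_eq (ENNReal.rpow_one _)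
    _ ≤ M * (1 + C * (1 + fieldEnergy f N R) + fieldEnergy f N R) :=
        mul_le_mul_right ((add_le_add_right (hX R hR) 1).trans le_self_add) M
    _ = _ := by ring

end Interpolation

section EnergyControlled

/-- `w` is the sum of a part in `L¹` and a part in `L⁶` (it is integrable above height `1` and in
`L⁶` below), and the localized `L^σ` norms of the former are controlled by the energy `E`. -/
structure EnergyControlled (E : ℝ → ℝ≥0∞) (N : ℕ) (w : R3 → ℝ≥0∞) : Prop where
  measurable : Measurable w
  lintegral_big_ne_top : ∫⁻ x, big w x ≠ ⊤
  lintegral_small_ne_top : ∫⁻ x, small w x ^ (6 : ℝ) ≠ ⊤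
  exists_big_le : ∀ σ : ℝ, 2 ≤ σ → σ * (N + 9) ≤ 6 * (N + 4) → ∃ C : ℝ≥0∞, C ≠ ⊤ ∧
    ∀ᶠ R in atTop, (∫⁻ x, (cutoffWeight (N + 3) R x * big w x) ^ σ) ^ (2 / σ) ≤ C * (1 + E R)

lemma energyControlled_enorm {E : ℝ → ℝ≥0∞} {N : ℕ} {f : R3 → ℝ} (hf : ContDiff ℝ ∞ f) {s : ℝ}
    (hs₁ : 1 ≤ s) (hs₆ : s ≤ 6) (hfs : ∫⁻ x, ‖f x‖ₑ ^ s < ⊤) (hE : ∀ R, fieldEnergy f N R ≤ E R) :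
    EnergyControlled E N (‖f ·‖ₑ) := by
  have hbig : ∫⁻ x, big (‖f ·‖ₑ) x ≠ ⊤ := by
    refine ((lintegral_mono fun x => ?_).trans_lt hfs).ne
    simpa only [ENNReal.rpow_one] using big_rpow_le (‖f ·‖ₑ) one_pos hs₁ x
  have hsmall : ∫⁻ x, small (‖f ·‖ₑ) x ^ (6 : ℝ) ≠ ⊤ :=
    ((lintegral_mono (small_rpow_le (‖f ·‖ₑ) (by linarith) hs₆)).trans_lt hfs).ne
  refine ⟨hf.continuous.enorm.measurable, hbig, hsmall, fun σ hσ hσN => ?_⟩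
  obtain ⟨C, hC, h⟩ :=
    exists_lintegral_cutoffWeight_mul_big_rpow_le hf hbig hsmall (by linarith) hσN
  refine ⟨C, hC, (eventually_ge_atTop 1).mono fun R hR => (h R hR).trans ?_⟩
  gcongr
  exact hE R

lemma rpow_mul_rpow_le_add_rpow {x y : ℝ≥0∞} (hx : x ≤ 1) (hy : y ≤ 1) {s t c : ℝ} (hs : 0 ≤ s)
    (ht : 0 ≤ t) (hc : 0 ≤ c) (hst : c ≤ s + t) : x ^ s * y ^ t ≤ (x + y) ^ c := by
  calc x ^ s * y ^ t ≤ max x y ^ s * max x y ^ t := by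
        gcongr
        exacts [le_max_left x y, le_max_right x y]
    _ = max x y ^ (s + t) := (ENNReal.rpow_add_of_nonneg _ _ hs ht).symm
    _ ≤ max x y ^ c := ENNReal.rpow_le_rpow_of_exponent_ge (max_le hx hy) hst
    _ ≤ (x + y) ^ c := by
        gcongr
        exact max_le le_self_add le_add_self

lemma add_sq_le_two_mul_sq_add (x y : ℝ≥0∞) : (x + y) ^ 2 ≤ 2 * x ^ 2 + 2 * y ^ 2 := by
  have h := ENNReal.rpow_add_le_mul_rpow_add_rpow x y one_le_two
  norm_num [mul_add] at h
  exact h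

lemma cutoffWeight_sq_mul_le (m : ℕ) (R : ℝ) (x : R3) (y : ℝ≥0∞) :
    cutoffWeight m R x ^ 2 * y ≤ y :=
  mul_le_of_le_one_left' (pow_le_one₀ zero_le (cutoffWeight_le_one m R x))

lemma negligibleOnAnnuli_const_add_sq {E : ℝ → ℝ≥0∞} {Z : ℝ≥0∞} {A : R3 → ℝ≥0∞} (hZ : Z ≠ ⊤)
    (hA : ∫⁻ x, A x ^ 2 ≠ ⊤) : NegligibleOnAnnuli E 4 fun _ x => (Z + A x) ^ 2 := by
  have hconst : NegligibleOnAnnuli E 4 fun _ _ => 2 * Z ^ 2 := .const (by lia) (by finiteness)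
  have hsq : NegligibleOnAnnuli E 4 fun _ x => 2 * A x ^ 2 :=
    (NegligibleOnAnnuli.of_lintegral_ne_top four_ne_zero hA).const_mul ENNReal.ofNat_ne_top
  exact (hconst.add hsq fun _ => measurable_const).mono fun _ x => add_sq_le_two_mul_sq_add Z (A x)

namespace EnergyControlled

variable {E : ℝ → ℝ≥0∞} {N k : ℕ} {w w' W A : R3 → ℝ≥0∞} {p q r : ℝ}

lemma negligibleOnAnnuli_big_sq (h : EnergyControlled E N w) (hk : k ≠ 0) :
    NegligibleOnAnnuli E k fun R x => cutoffWeight (N + 3) R x ^ 2 * big w x ^ 2 := by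
  obtain ⟨C, hC, hle⟩ := h.exists_big_le 2 le_rfl (by linarith)
  refine .of_lintegral_le hk hC (hle.mono fun R hR => ?_)
  simpa only [div_self (two_ne_zero' ℝ), ENNReal.rpow_one, ENNReal.rpow_two, mul_pow] using hR

lemma negligibleOnAnnuli_mul_big_sq (h : EnergyControlled E N w) (hp : 1 < p)
    (hN : 2 * p / (p - 1) * (N + 9) ≤ 6 * (N + 4)) (hk : k ≠ 0) (hW : Measurable W)
    (hWp : ∫⁻ x, W x ^ p ≠ ⊤) :
    NegligibleOnAnnuli E k fun R x => cutoffWeight (N + 3) R x ^ 2 * (W x * big w x ^ 2) := by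
  have hp0 : 0 < p - 1 := sub_pos.2 hp
  obtain ⟨C, hC, hle⟩ := h.exists_big_le (2 * p / (p - 1))
    (by rw [le_div_iff₀ hp0]; linarith) hN
  have hfin : (∫⁻ x, W x ^ p) ^ (1 / p) ≠ ⊤ := ENNReal.rpow_ne_top_of_nonneg (by positivity) hWp
  refine .of_lintegral_le hk (ENNReal.mul_ne_top hfin hC) (hle.mono fun R hR => ?_)
  have hbig := measurable_big h.measurable
  calc ∫⁻ x, cutoffWeight (N + 3) R x ^ 2 * (W x * big w x ^ 2)
      = ∫⁻ x, W x * (cutoffWeight (N + 3) R x * big w x) ^ 2 :=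
        lintegral_congr fun x => by ring
    _ ≤ (∫⁻ x, W x ^ p) ^ (1 / p)
          * (∫⁻ x, ((cutoffWeight (N + 3) R x * big w x) ^ 2) ^ (p / (p - 1)))
            ^ (1 / (p / (p - 1))) :=
        ENNReal.lintegral_mul_le_Lp_mul_Lq volume (.conjExponent hp) hW.aemeasurable
          (by fun_prop)
    _ = (∫⁻ x, W x ^ p) ^ (1 / p) * (∫⁻ x, (cutoffWeight (N + 3) R x * big w x)
          ^ (2 * p / (p - 1))) ^ (2 / (2 * p / (p - 1))) := by
        simp only [← ENNReal.rpow_two, ← ENNReal.rpow_mul]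
        congr 2
        · simp only [mul_div_assoc]
        · field_simp
    _ ≤ _ := by
        rw [mul_assoc]
        gcongr

lemma negligibleOnAnnuli_sq (h : EnergyControlled E N w) :
    NegligibleOnAnnuli E 2 fun R x => cutoffWeight (N + 3) R x ^ 2 * w x ^ 2 := by
  have hm := h.measurable
  have hsmall : NegligibleOnAnnuli E 2 fun _ x => (small w x ^ (6 : ℝ)) ^ (1 / 3 : ℝ) :=
    .rpow (t := 2 / 3) (by fun_prop) h.lintegral_small_ne_top (by norm_num) (by norm_num)
      (by norm_num) (by norm_num)
  refine ((h.negligibleOnAnnuli_big_sq two_ne_zero).add hsmall fun R => by fun_prop).mono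
    fun R x => ?_
  rw [sq_eq_small_sq_add_big_sq w, mul_add, add_comm, ← ENNReal.rpow_mul]
  norm_num
  gcongr
  exact cutoffWeight_sq_mul_le _ R x _

lemma negligibleOnAnnuli_small_mul_small_sq (h : EnergyControlled E N w) (hW : Measurable W)
    (hW₃ : ∫⁻ x, small W x ^ (3 : ℝ) ≠ ⊤) :
    NegligibleOnAnnuli E 1 fun _ x => small W x * small w x ^ 2 := by
  have hm := h.measurable
  have hfin : ∫⁻ x, (small W x ^ (3 : ℝ) + small w x ^ (6 : ℝ)) ≠ ⊤ := by
    rw [lintegral_add_left (by fun_prop)]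
    exact ENNReal.add_ne_top.2 ⟨hW₃, h.lintegral_small_ne_top⟩
  refine (NegligibleOnAnnuli.rpow (s := 2 / 3) (t := 1 / 3) (by fun_prop) hfin (by norm_num)
    (by norm_num) (by norm_num) (by norm_num)).mono fun _ x => ?_
  refine le_trans (le_of_eq ?_) (rpow_mul_rpow_le_add_rpow (s := 1 / 3) (t := 1 / 3)
    (ENNReal.rpow_le_one (small_le_one W x) (by norm_num))
    (ENNReal.rpow_le_one (small_le_one w x) (by norm_num)) (by norm_num) (by norm_num)
    (by norm_num) (by norm_num))
  rw [← ENNReal.rpow_mul, ← ENNReal.rpow_mul]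
  norm_num

lemma negligibleOnAnnuli_mul_sq (h : EnergyControlled E N w) (hp₁ : 1 < p) (hp₃ : p ≤ 3)
    (hN : 2 * p / (p - 1) * (N + 9) ≤ 6 * (N + 4)) (hW : Measurable W)
    (hWp : ∫⁻ x, W x ^ p ≠ ⊤) :
    NegligibleOnAnnuli E 1 fun R x => cutoffWeight (N + 3) R x ^ 2 * (W x * w x ^ 2) := by
  have hm := h.measurable
  have hbig : ∫⁻ x, big W x ≠ ⊤ := by
    refine ne_top_of_le_ne_top hWp (lintegral_mono fun x => ?_)
    simpa only [ENNReal.rpow_one] using big_rpow_le W one_pos hp₁.le x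
  have hsmall : ∫⁻ x, small W x ^ (3 : ℝ) ≠ ⊤ :=
    ne_top_of_le_ne_top hWp (lintegral_mono (small_rpow_le W (by linarith) hp₃))
  refine (((h.negligibleOnAnnuli_mul_big_sq hp₁ hN one_ne_zero hW hWp).add
    (.of_lintegral_ne_top one_ne_zero hbig) fun R => by fun_prop).add
    (h.negligibleOnAnnuli_small_mul_small_sq hW hsmall) fun R => by fun_prop).mono fun R x => ?_
  calc cutoffWeight (N + 3) R x ^ 2 * (W x * w x ^ 2)
      = cutoffWeight (N + 3) R x ^ 2 * (W x * big w x ^ 2)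
          + cutoffWeight (N + 3) R x ^ 2 * (W x * small w x ^ 2) := by
        rw [sq_eq_small_sq_add_big_sq w]
        ring
    _ ≤ cutoffWeight (N + 3) R x ^ 2 * (W x * big w x ^ 2) + (small W x + big W x)
          * small w x ^ 2 := by
        rw [small_add_big]
        exact add_le_add_right (cutoffWeight_sq_mul_le _ R x _) _
    _ = cutoffWeight (N + 3) R x ^ 2 * (W x * big w x ^ 2) + big W x * small w x ^ 2
          + small W x * small w x ^ 2 := by ring
    _ ≤ _ := by
        gcongr
        exact mul_le_of_le_one_right' (pow_le_one₀ zero_le (small_le_one w x))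

lemma negligibleOnAnnuli_small_mul_small (hw : Measurable w) (hw' : Measurable w') (hq : 0 < q)
    (hr : 0 < r) (hqr : 2 / 3 ≤ q⁻¹ + r⁻¹) (hwq : ∫⁻ x, small w x ^ q ≠ ⊤)
    (hwr : ∫⁻ x, small w' x ^ r ≠ ⊤) :
    NegligibleOnAnnuli E 1 fun _ x => small w x * small w' x := by
  have hfin : ∫⁻ x, (small w x ^ q + small w' x ^ r) ≠ ⊤ := by
    rw [lintegral_add_left (by fun_prop)]
    exact ENNReal.add_ne_top.2 ⟨hwq, hwr⟩
  refine (NegligibleOnAnnuli.rpow (s := 2 / 3) (t := 1 / 3) (by fun_prop) hfin (by norm_num)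
    (by norm_num) (by norm_num) (by norm_num)).mono fun _ x => ?_
  calc small w x * small w' x = (small w x ^ q) ^ q⁻¹ * (small w' x ^ r) ^ r⁻¹ := by
        rw [ENNReal.rpow_rpow_inv hq.ne', ENNReal.rpow_rpow_inv hr.ne']
    _ ≤ _ := rpow_mul_rpow_le_add_rpow (ENNReal.rpow_le_one (small_le_one w x) hq.le)
        (ENNReal.rpow_le_one (small_le_one w' x) hr.le) (by positivity) (by positivity)
        (by norm_num) hqr

lemma negligibleOnAnnuli_mul (h : EnergyControlled E N w) (h' : EnergyControlled E N w')
    (hq : 0 < q) (hr : 0 < r) (hqr : 2 / 3 ≤ q⁻¹ + r⁻¹) (hwq : ∫⁻ x, small w x ^ q ≠ ⊤)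
    (hwr : ∫⁻ x, small w' x ^ r ≠ ⊤) :
    NegligibleOnAnnuli E 1 fun R x => cutoffWeight (N + 3) R x ^ 2 * (w x * w' x) := by
  have hm := h.measurable
  have hm' := h'.measurable
  have hsq := (h.negligibleOnAnnuli_big_sq one_ne_zero).add
    (h'.negligibleOnAnnuli_big_sq one_ne_zero) fun R => by fun_prop
  have hbig := (NegligibleOnAnnuli.of_lintegral_ne_top (E := E) one_ne_zero
    h.lintegral_big_ne_top).add (.of_lintegral_ne_top one_ne_zero h'.lintegral_big_ne_top)
    fun _ => by fun_prop
  refine ((hsq.add hbig fun R => by fun_prop).add (negligibleOnAnnuli_small_mul_small hm hm' hq hr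
    hqr hwq hwr) fun R => by fun_prop).mono fun R x => ?_
  have hmul : big w x * big w' x ≤ big w x ^ 2 + big w' x ^ 2 := by
    simpa only [ENNReal.rpow_two] using
      mul_le_rpow_add_rpow Real.HolderConjugate.two_two (big w x) (big w' x)
  rw [← mul_add]
  calc cutoffWeight (N + 3) R x ^ 2 * (w x * w' x)
      = cutoffWeight (N + 3) R x ^ 2 * (big w x * big w' x) + cutoffWeight (N + 3) R x ^ 2
          * (big w x * small w' x + small w x * big w' x + small w x * small w' x) := by
        rw [← small_add_big w x, ← small_add_big w' x]
        ring
    _ ≤ cutoffWeight (N + 3) R x ^ 2 * (big w x ^ 2 + big w' x ^ 2)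
          + (big w x + big w' x + small w x * small w' x) := by
        gcongr
        refine (cutoffWeight_sq_mul_le _ R x _).trans ?_
        gcongr
        exacts [mul_le_of_le_one_right' (small_le_one w' x),
          mul_le_of_le_one_left' (small_le_one w x)]
    _ = _ := (add_assoc _ _ _).symm

lemma negligibleOnAnnuli_sq_mul_sq (h : EnergyControlled E N w) (hp : 1 < p)
    (hN : 2 * p / (p - 1) * (N + 9) ≤ 6 * (N + 4)) {Z : ℝ≥0∞} (hZ : Z ≠ ⊤) (hA : Measurable A)
    (hA₂ : ∫⁻ x, A x ^ 2 ≠ ⊤) (hAp : ∫⁻ x, A x ^ (2 * p) ≠ ⊤) :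
    NegligibleOnAnnuli E 2 fun R x =>
      cutoffWeight (N + 3) R x ^ 2 * (w x ^ 2 * (Z + A x) ^ 2) := by
  have hm := h.measurable
  have hAp' : ∫⁻ x, (A x ^ 2) ^ p ≠ ⊤ := by
    simpa only [← ENNReal.rpow_two, ← ENNReal.rpow_mul] using hAp
  have hconst := h.negligibleOnAnnuli_sq.const_mul (c := 2 * Z ^ 2) (by finiteness)
  have hvar := ((h.negligibleOnAnnuli_mul_big_sq hp hN two_ne_zero (by fun_prop) hAp').add
    (.of_lintegral_ne_top two_ne_zero hA₂) fun R => by fun_prop).const_mul (c := 2) (by finiteness)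
  refine (hconst.add hvar fun R => by fun_prop).mono fun R x => ?_
  calc cutoffWeight (N + 3) R x ^ 2 * (w x ^ 2 * (Z + A x) ^ 2)
      ≤ cutoffWeight (N + 3) R x ^ 2 * (w x ^ 2 * (2 * Z ^ 2 + 2 * A x ^ 2)) := by
        gcongr
        exact add_sq_le_two_mul_sq_add Z (A x)
    _ = 2 * Z ^ 2 * (cutoffWeight (N + 3) R x ^ 2 * w x ^ 2)
          + 2 * (cutoffWeight (N + 3) R x ^ 2 * (A x ^ 2 * big w x ^ 2)
            + cutoffWeight (N + 3) R x ^ 2 * (small w x ^ 2 * A x ^ 2)) := by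
        rw [mul_add (w x ^ 2), mul_left_comm _ 2 (A x ^ 2), sq_eq_small_sq_add_big_sq w]
        ring
    _ ≤ _ := by
        gcongr
        exact (cutoffWeight_sq_mul_le _ R x _).trans
          (mul_le_of_le_one_left' (pow_le_one₀ zero_le (small_le_one w x)))

end EnergyControlled

end EnergyControlled

/-! ### Vanishing of the energy -/

section ErrorTerms

variable {U V : Fin 3 → R3 → ℝ} {θ : R3 → ℝ} {E : ℝ → ℝ≥0∞} {N : ℕ} {A : R3 → ℝ≥0∞} {Z : ℝ≥0∞}
  {p q r : ℝ}

lemma ofReal_energyDensity (U V : Fin 3 → R3 → ℝ) (θ : R3 → ℝ) (x : R3) :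
    ENNReal.ofReal (energyDensity U V θ x) = ∑ a, ‖component U V θ a x‖ₑ ^ 2 := by
  simp only [energyDensity, ← Real.norm_eq_abs, ← sq_abs (component U V θ _ x)]
  simp (disch := intros; positivity) only [ENNReal.ofReal_sum_of_nonneg, ENNReal.ofReal_pow,
    ofReal_norm]

lemma ofReal_transportDensity (U V : Fin 3 → R3 → ℝ) (θ : R3 → ℝ) (x : R3) :
    ENNReal.ofReal (transportDensity U V θ x) =
      (∑ i, ∑ a, ‖U i x‖ₑ * ‖component U V θ a x‖ₑ ^ 2) + ∑ i, ‖θ x‖ₑ * ‖V i x‖ₑ := by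
  have := energyDensity_nonneg U V θ x
  simp only [transportDensity]
  simp (disch := intros; positivity) only [ENNReal.ofReal_add, ENNReal.ofReal_mul,
    ENNReal.ofReal_sum_of_nonneg, ofReal_norm, ofReal_energyDensity, Finset.mul_sum, Finset.sum_mul]

lemma negligibleOnAnnuli_energyDensity (h : ∀ a, EnergyControlled E N (‖component U V θ a ·‖ₑ)) :
    NegligibleOnAnnuli E 2 fun R x =>
      cutoffWeight (N + 3) R x ^ 2 * ENNReal.ofReal (energyDensity U V θ x) := by
  have hm (a) := (h a).measurable
  simpa only [ofReal_energyDensity, Finset.mul_sum] using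
    NegligibleOnAnnuli.sum Finset.univ (fun a => (h a).negligibleOnAnnuli_sq)
      fun a R => by fun_prop

lemma negligibleOnAnnuli_energyDensity_mul_sq
    (h : ∀ a, EnergyControlled E N (‖component U V θ a ·‖ₑ)) (hp : 1 < p)
    (hN : 2 * p / (p - 1) * (N + 9) ≤ 6 * (N + 4)) (hZ : Z ≠ ⊤) (hA : Measurable A)
    (hA₂ : ∫⁻ x, A x ^ 2 ≠ ⊤) (hAp : ∫⁻ x, A x ^ (2 * p) ≠ ⊤) :
    NegligibleOnAnnuli E 2 fun R x => cutoffWeight (N + 3) R x ^ 2 *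
      (ENNReal.ofReal (energyDensity U V θ x) * (Z + A x) ^ 2) := by
  have hm (a) := (h a).measurable
  simpa only [ofReal_energyDensity, Finset.mul_sum, Finset.sum_mul] using
    NegligibleOnAnnuli.sum Finset.univ
      (fun a => (h a).negligibleOnAnnuli_sq_mul_sq hp hN hZ hA hA₂ hAp) fun a R => by fun_prop

lemma negligibleOnAnnuli_transportDensity
    (h : ∀ a, EnergyControlled E N (‖component U V θ a ·‖ₑ)) (hp₁ : 1 < p) (hp₃ : p ≤ 3)
    (hN : 2 * p / (p - 1) * (N + 9) ≤ 6 * (N + 4)) (hUp : ∀ i, ∫⁻ x, ‖U i x‖ₑ ^ p ≠ ⊤)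
    (hq : 0 < q) (hr : 0 < r) (hqr : 2 / 3 ≤ q⁻¹ + r⁻¹) (hVq : ∀ i, ∫⁻ x, ‖V i x‖ₑ ^ q ≠ ⊤)
    (hθr : ∫⁻ x, ‖θ x‖ₑ ^ r ≠ ⊤) :
    NegligibleOnAnnuli E 1 fun R x =>
      cutoffWeight (N + 3) R x ^ 2 * ENNReal.ofReal (transportDensity U V θ x) := by
  have hm (a) := (h a).measurable
  have hU (i) : Measurable (‖U i ·‖ₑ) := hm (.inl i)
  have hV (i) : Measurable (‖V i ·‖ₑ) := hm (.inr (.inl i))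
  have hθ : Measurable (‖θ ·‖ₑ) := hm (.inr (.inr ()))
  have hVsmall (i) : ∫⁻ x, small (‖V i ·‖ₑ) x ^ q ≠ ⊤ :=
    ne_top_of_le_ne_top (hVq i) (lintegral_mono (small_rpow_le _ hq le_rfl))
  have hθsmall : ∫⁻ x, small (‖θ ·‖ₑ) x ^ r ≠ ⊤ :=
    ne_top_of_le_ne_top hθr (lintegral_mono (small_rpow_le _ hr le_rfl))
  have htransport := NegligibleOnAnnuli.sum Finset.univ (fun i =>
    NegligibleOnAnnuli.sum Finset.univ (fun a =>
      (h a).negligibleOnAnnuli_mul_sq hp₁ hp₃ hN (hU i) (hUp i)) fun a R => by fun_prop)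
    fun i R => by fun_prop
  have hcoupling := NegligibleOnAnnuli.sum Finset.univ (fun i =>
    (h (.inr (.inr ()))).negligibleOnAnnuli_mul (h (.inr (.inl i))) hr hq (by linarith)
      hθsmall (hVsmall i)) fun i R => by
      simp only [component, Sum.elim_inr, Sum.elim_inl]
      fun_prop
  simpa only [ofReal_transportDensity, Finset.mul_sum, mul_add, component, Sum.elim_inr,
    Sum.elim_inl] using htransport.add hcoupling fun R => by fun_prop

lemma negligible_setLIntegral_errorDensity
    (h : ∀ a, EnergyControlled E N (‖component U V θ a ·‖ₑ)) (hp₁ : 1 < p) (hp₃ : p ≤ 3)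
    (hN : 2 * p / (p - 1) * (N + 9) ≤ 6 * (N + 4)) (hUp : ∀ i, ∫⁻ x, ‖U i x‖ₑ ^ p ≠ ⊤)
    (hq : 0 < q) (hr : 0 < r) (hqr : 2 / 3 ≤ q⁻¹ + r⁻¹) (hVq : ∀ i, ∫⁻ x, ‖V i x‖ₑ ^ q ≠ ⊤)
    (hθr : ∫⁻ x, ‖θ x‖ₑ ^ r ≠ ⊤) (hZ : Z ≠ ⊤) (hA : Measurable A) (hA₂ : ∫⁻ x, A x ^ 2 ≠ ⊤)
    (hAp : ∫⁻ x, A x ^ (2 * p) ≠ ⊤) :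
    Negligible E fun R => ∫⁻ x in annulus R, errorDensity U V θ N R (fun x => Z + A x) x := by
  have hm (a) := (h a).measurable
  have hdens : Measurable fun x => ENNReal.ofReal (energyDensity U V θ x) := by
    simp only [ofReal_energyDensity]
    fun_prop
  have hU (i) : Measurable (‖U i ·‖ₑ) := hm (.inl i)
  have hV (i) : Measurable (‖V i ·‖ₑ) := hm (.inr (.inl i))
  have hθ : Measurable (‖θ ·‖ₑ) := hm (.inr (.inr ()))
  have htrans : Measurable fun x => ENNReal.ofReal (transportDensity U V θ x) := by
    simp only [ofReal_transportDensity]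
    fun_prop
  have hsum := (((negligibleOnAnnuli_energyDensity h).inv_pow_mul.add
    (negligibleOnAnnuli_transportDensity h hp₁ hp₃ hN hUp hq hr hqr hVq hθr).inv_pow_mul
      fun R => by fun_prop).add
    (negligibleOnAnnuli_const_add_sq hZ hA₂).inv_pow_mul fun R => by fun_prop).add
    (negligibleOnAnnuli_energyDensity_mul_sq h hp₁ hN hZ hA hA₂ hAp).inv_pow_mul
      fun R => by fun_prop
  simpa only [NegligibleOnAnnuli, errorDensity, pow_zero, pow_one, one_mul, mul_assoc] using hsum

end ErrorTerms

section Vanishing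

variable {U V : Fin 3 → R3 → ℝ} {π θ : R3 → ℝ} {N : ℕ} {R : ℝ}

lemma fieldEnergy_component_le_localEnergy (U V : Fin 3 → R3 → ℝ) (θ : R3 → ℝ)
    (a : Fin 3 ⊕ Fin 3 ⊕ Unit) (N : ℕ) (R : ℝ) :
    fieldEnergy (component U V θ a) N R ≤ localEnergy U V θ N R := by
  refine lintegral_mono fun x => ENNReal.ofReal_le_ofReal ?_
  refine mul_le_mul_of_nonneg_left ?_ (pow_nonneg (cutoff_nonneg R x) _)
  exact Finset.single_le_sum (f := fun a => ∑ k, pd (component U V θ a) k x ^ 2)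
    (fun _ _ => by positivity) (Finset.mem_univ a)

lemma dissipation_eq_zero_of_tendsto (hU : ∀ i, ContDiff ℝ ∞ (U i))
    (hV : ∀ i, ContDiff ℝ ∞ (V i)) (hθ : ContDiff ℝ ∞ θ)
    (h : Tendsto (localEnergy U V θ N) atTop (𝓝 0)) (x : R3) : dissipation U V θ x = 0 := by
  have hD : Continuous fun x => ENNReal.ofReal (dissipation U V θ x) :=
    ENNReal.continuous_ofReal.comp (contDiff_dissipation hU hV hθ).continuous
  have hball (n : ℕ) : ∫⁻ x in closedBall 0 n, ENNReal.ofReal (dissipation U V θ x) = 0 := by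
    refine le_antisymm (ge_of_tendsto h ?_) zero_le
    filter_upwards [eventually_ge_atTop (n : ℝ), eventually_gt_atTop 0] with R hnR hR
    refine le_trans ?_ (setLIntegral_le_lintegral (closedBall 0 n) _)
    refine setLIntegral_mono_ae' measurableSet_closedBall (.of_forall fun x hx => ?_)
    rw [cutoff_of_norm_le hR ((mem_closedBall_zero_iff.1 hx).trans hnR), one_pow, one_mul]
  have hae : (fun x => ENNReal.ofReal (dissipation U V θ x)) =ᵐ[volume] fun _ => 0 := by
    rw [← Measure.restrict_univ (μ := volume), ← iUnion_closedBall_nat (0 : R3)]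
    exact (ae_restrict_iUnion_iff _ _).2 fun n => (lintegral_eq_zero_iff hD.measurable).1 (hball n)
  have hzero := congrFun ((hD.ae_eq_iff_eq volume continuous_const).1 hae) x
  exact le_antisymm (ENNReal.ofReal_eq_zero.1 hzero) (dissipation_nonneg U V θ x)

lemma pd_component_eq_zero {x : R3} (h : dissipation U V θ x = 0) (a : Fin 3 ⊕ Fin 3 ⊕ Unit)
    (k : Fin 3) : pd (component U V θ a) k x = 0 := by
  simpa only [h, Real.sqrt_zero, norm_le_zero_iff] using norm_pd_component_le U V θ a k x

lemma eq_zero_of_pd_eq_zero {f : R3 → ℝ} (hf : ContDiff ℝ ∞ f) (h : ∀ k x, pd f k x = 0) {s : ℝ}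
    (hs : 0 < s) (hfs : ∫⁻ x, ‖f x‖ₑ ^ s ≠ ⊤) (x : R3) : f x = 0 := by
  have hfderiv (y : R3) : fderiv ℝ f y = 0 := by
    have hle := norm_fderiv_sq_le f y
    simp only [h, zero_pow two_ne_zero, Finset.sum_const_zero] at hle
    exact norm_eq_zero.1 (pow_eq_zero_iff two_ne_zero |>.1 (le_antisymm hle (sq_nonneg _)))
  have hconst (y : R3) : f y = f x :=
    is_const_of_fderiv_eq_zero (hf.differentiable (by simp)) hfderiv y x
  by_contra hx
  simp only [hconst, lintegral_const, measure_univ_of_isAddLeftInvariant] at hfs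
  exact hfs (ENNReal.mul_top (by simp [hs.not_gt, hs, hx]))

lemma exists_nat_mul_add_nine_le {σ : ℝ} (hσ : σ < 6) : ∃ N : ℕ, σ * (N + 9) ≤ 6 * (N + 4) := by
  obtain ⟨N, hN⟩ := exists_nat_ge (30 / (6 - σ))
  rw [div_le_iff₀ (by linarith)] at hN
  exact ⟨N, by linarith⟩

theorem exists_tendsto_localEnergy (hS : IsSmoothSolution U V π θ) {w : R3 → ℝ≥0∞}
    (hw : Measurable w) (hUw : ∀ i x, ‖U i x‖ₑ ≤ w x) {p q r : ℝ} (hp₁ : 3 / 2 < p) (hp₂ : p < 3)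
    (hwp : ∫⁻ x, w x ^ p < ⊤) (hq₁ : 1 ≤ q) (hq₆ : q ≤ 6) (hr₁ : 1 ≤ r) (hr₆ : r ≤ 6)
    (hqr : 2 / 3 ≤ q⁻¹ + r⁻¹) (hVq : ∀ i, ∫⁻ x, ‖V i x‖ₑ ^ q < ⊤)
    (hθr : ∫⁻ x, ‖θ x‖ₑ ^ r < ⊤) : ∃ N, Tendsto (localEnergy U V θ N) atTop (𝓝 0) := by
  have hU := hS.contDiff_left
  have hV := hS.contDiff_right
  have hθ := hS.contDiff_temperature
  have hUp (i) : ∫⁻ x, ‖U i x‖ₑ ^ p < ⊤ := by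
    refine (lintegral_mono fun x => ?_).trans_lt hwp
    exact ENNReal.rpow_le_rpow (hUw i x) (by linarith)
  obtain ⟨Z, A, hZ, hA, hA₂, hAp, hpot⟩ :=
    exists_hasDominatedPotentials hU hS.div_eq_zero hw hUw hp₁ hp₂ hwp
  obtain ⟨N, hN⟩ := exists_nat_mul_add_nine_le (σ := 2 * p / (p - 1))
    (by rw [div_lt_iff₀ (by linarith)]; linarith)
  obtain ⟨K, hK, hle⟩ := exists_localEnergy_le hS N hpot
  have hcontrol (a) : EnergyControlled (localEnergy U V θ N) N (‖component U V θ a ·‖ₑ) := by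
    have hE := fieldEnergy_component_le_localEnergy U V θ a N
    rcases a with i | i | _
    · exact energyControlled_enorm (hU i) (by linarith) (by linarith) (hUp i) hE
    · exact energyControlled_enorm (hV i) hq₁ hq₆ (hVq i) hE
    · exact energyControlled_enorm hθ hr₁ hr₆ hθr hE
  have herror := negligible_setLIntegral_errorDensity hcontrol (by linarith) hp₂.le hN
    (fun i => (hUp i).ne) (by linarith) (by linarith) hqr (fun i => (hVq i).ne) hθr.ne hZ hA
    (by simpa only [ENNReal.rpow_two] using hA₂.ne) hAp.ne
  exact ⟨N, ((herror.const_mul hK).mono ((eventually_gt_atTop 0).mono hle)).tendsto_zero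
    ((eventually_gt_atTop 0).mono fun R hR => localEnergy_ne_top hU hV hθ hR)⟩

end Vanishing

lemma TCM.isSmoothSolution {u v : R3 → R3} {pr θ : R3 → ℝ} (h : TCM u v pr θ)
    (hu : ContDiff ℝ ∞ u) (hv : ContDiff ℝ ∞ v) (hpr : ContDiff ℝ ∞ pr) (hθ : ContDiff ℝ ∞ θ) :
    IsSmoothSolution (fun i x => u x i) (fun i x => v x i) pr θ := by
  obtain ⟨hmom, hbar, htherm, hdiv⟩ := h
  refine ⟨contDiff_euclidean.1 hu, contDiff_euclidean.1 hv, hpr, hθ, fun i x => ?_, hbar, htherm,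
    hdiv⟩
  rw [← hmom i x, force, advect]
  ring

lemma enorm_apply_le (w : R3) (i : Fin 3) : ‖w i‖ₑ ≤ ‖w‖ₑ :=
  enorm_le_iff_norm_le.2 (PiLp.norm_apply_le w i)

lemma lintegral_ofReal_norm_rpow {F : Type*} [NormedAddCommGroup F] (f : R3 → F) {s : ℝ}
    (hs : 0 ≤ s) : ∫⁻ x, ENNReal.ofReal (‖f x‖ ^ s) = ∫⁻ x, ‖f x‖ₑ ^ s := by
  simp only [← ENNReal.ofReal_rpow_of_nonneg (norm_nonneg _) hs, ofReal_norm]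

lemma lintegral_enorm_apply_rpow_lt_top {w : R3 → R3} {s : ℝ} (hs : 0 ≤ s)
    (hw : ∫⁻ x, ‖w x‖ₑ ^ s < ⊤) (i : Fin 3) : ∫⁻ x, ‖w x i‖ₑ ^ s < ⊤ :=
  (lintegral_mono fun x => ENNReal.rpow_le_rpow (enorm_apply_le (w x) i) hs).trans_lt hw

theorem liouville_tcm_B2_general (u v : R3 → R3) (pr θ : R3 → ℝ)
    (hu : ContDiff ℝ ∞ u) (hv : ContDiff ℝ ∞ v) (hpr : ContDiff ℝ ∞ pr) (hθ : ContDiff ℝ ∞ θ)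
    (hsol : TCM u v pr θ) (p q r : ℝ) (hp1 : 3 / 2 < p) (hp2 : p < 3)
    (hq1 : 1 ≤ q) (hq2 : q ≤ 6) (hr1 : 1 ≤ r) (hr2 : r ≤ 6) (hqr : 2 / 3 ≤ q⁻¹ + r⁻¹)
    (hLu : (∫⁻ x : R3, ENNReal.ofReal (‖u x‖ ^ p)) < ⊤)
    (hLv : (∫⁻ x : R3, ENNReal.ofReal (‖v x‖ ^ q)) < ⊤)
    (hLθ : (∫⁻ x : R3, ENNReal.ofReal (|θ x| ^ r)) < ⊤) :
    (∀ x, u x = 0) ∧ (∀ x, v x = 0) ∧ (∀ x, θ x = 0) := by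
  have hS := hsol.isSmoothSolution hu hv hpr hθ
  have hp0 : 0 < p := by linarith
  have hq0 : 0 < q := by linarith
  have hr0 : 0 < r := by linarith
  simp only [← Real.norm_eq_abs] at hLθ
  rw [lintegral_ofReal_norm_rpow _ hp0.le] at hLu
  rw [lintegral_ofReal_norm_rpow _ hq0.le] at hLv
  rw [lintegral_ofReal_norm_rpow _ hr0.le] at hLθ
  have hUp := lintegral_enorm_apply_rpow_lt_top hp0.le hLu
  have hVq := lintegral_enorm_apply_rpow_lt_top hq0.le hLv
  obtain ⟨N, hlim⟩ := exists_tendsto_localEnergy hS hu.continuous.enorm.measurable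
    (fun i x => enorm_apply_le (u x) i) hp1 hp2 hLu hq1 hq2 hr1 hr2 hqr hVq hLθ
  have hgrad a k x := pd_component_eq_zero (dissipation_eq_zero_of_tendsto hS.contDiff_left
    hS.contDiff_right hθ hlim x) a k
  refine ⟨fun x => ?_, fun x => ?_, eq_zero_of_pd_eq_zero hθ (hgrad (.inr (.inr ()))) hr0 hLθ.ne⟩
  · ext i
    exact eq_zero_of_pd_eq_zero (hS.contDiff_left i) (hgrad (.inl i)) hp0 (hUp i).ne x
  · ext i
    exact eq_zero_of_pd_eq_zero (hS.contDiff_right i) (hgrad (.inr (.inl i))) hq0 (hVq i).ne x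

theorem liouville_tcm_B2 (u v : R3 → R3) (pr θ : R3 → ℝ)
    (hu : ContDiff ℝ (⊤ : ℕ∞) u) (hv : ContDiff ℝ (⊤ : ℕ∞) v)
    (hpr : ContDiff ℝ (⊤ : ℕ∞) pr) (hθ : ContDiff ℝ (⊤ : ℕ∞) θ)
    (hsol : TCM u v pr θ)
    (p q r : ℝ)
    (hp1 : 3 / 2 < p) (hp2 : p < 3)
    (hq1 : 1 ≤ q) (hq2 : q < 2)
    (hr1 : 1 ≤ r) (hr2 : r ≤ 6)
    (hLu : (∫⁻ x : R3, ENNReal.ofReal (‖u x‖ ^ p)) < ⊤)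
    (hLv : (∫⁻ x : R3, ENNReal.ofReal (‖v x‖ ^ q)) < ⊤)
    (hLθ : (∫⁻ x : R3, ENNReal.ofReal (|θ x| ^ r)) < ⊤) :
    (∀ x, u x = 0) ∧ (∀ x, v x = 0) ∧ (∀ x, θ x = 0) := by
  have hq : 2⁻¹ ≤ q⁻¹ := inv_anti₀ (by linarith) hq2.le
  have hr : 6⁻¹ ≤ r⁻¹ := inv_anti₀ (by linarith) hr2
  exact liouville_tcm_B2_general u v pr θ hu hv hpr hθ hsol p q r hp1 hp2 hq1 (by linarith) hr1 hr2
    (by linarith) hLu hLv hLθ
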